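/- arXiv:1808.04744 — 2 statements merged into one kernel-verified Lean document; each statement's English description precedes it below -/
import Mathlib

section
/- Let S be a finite set of points in the plane that is in convex position and in general position. Then the graph ΘΘ₆(S) is an 8-spanner: for all u, v ∈ S, d_{ΘΘ₆(S)}(u, v) ≤ 8·|uv|. -/
/-!
The graph is measured in the hexagonal norm `N`, whose unit ball is the regular hexagon with vertices
on the six cone rays. It satisfies `|uv| ≤ N u v ≤ (2/√3) |uv|`, and in the cone of `u` it is
proportional to the projective distance. In coordinates `X, Y` along the two rays of a cone, with
`Z = X + Y`, one has `N u v = Z v - Z u` for `v` in the cone of `u`. It is proved (`Fr.conn`) that any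
two points are joined by a path of `N`-length at most `6 N u v`, hence of Euclidean length at most
`(12/√3) |uv| < 8 |uv|`.

Of the graph only the property `Stp` is used: if `v` is the point nearest to `u` in a cone, then `uv`
is an edge, or some edge `wv` with `w` in the opposite cone of `v`, nearer to `v` than `u`, has
discarded it. The structure `Fr` collects this property for all six cones with genericity and convex
position; it is invariant under the symmetries of the hexagon.

* One-sided pairs (`Fr.os`). If no point to the right of `uv` is in the cone of one of the two points
  nearer than the other point, then there is a path of length `α (X v - X u) + β (Y v - Y u)`, where
  `α, β` depend on how far the points on the left spread. The proof is by induction on the number of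
  points to the left. The first step of the path either exists or has been discarded on the left,
  and the pair formed by `u` and the discarder is again one-sided by convexity, in a rotated frame.
* Consequently each edge of `Θ₆` is approximated within a factor `4` (`theta_conn`).
* A pair `u, v` whose parallelogram, with sides along the cone rays, contains a point of `S` is split
  at this point (`cone_pair`). If the parallelogram is empty, let `p` be nearest to `u` in its cone;
  up to reflection `p` is above `v`. If no point below obstructs, the path `u, …, p, …, v` made from
  two one-sided pieces has length at most `6 N u v` (`one_side_conn`, `cross_easy`).
* Otherwise the points between `u` and `v` form a ladder (`Lad`): one chain above and one chain below.
  Each is unimodal by convexity. A step of a chain that moves away from the line `uv` is either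
  replaced by a path of proportional length or bypassed by an edge from the other chain
  (`Lad.rise`, `Lad.early`); by symmetry the same holds backwards from `v`, and an edge between the
  chains (`Lad.cross`) joins the part reached from `u` to the part reaching `v` (`Lad.conn`).
-/

open Real

noncomputable section

/-- Counterclockwise angle in `[0, 2π)` from the positive x-axis to the direction of `z`. -/
def argIn (z : ℂ) : ℝ := if 0 ≤ Complex.arg z then Complex.arg z else Complex.arg z + 2 * π

/-- The half-open cone `C_i(u)` with apex `u`: points `p ≠ u` whose direction from `u` has
counterclockwise angle in `[(i-1)π/3, iπ/3)`. -/
def cone (i : ℕ) (u : ℂ) : Set ℂ :=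
  {p | p ≠ u ∧ argIn (p - u) ∈ Set.Ico (((i : ℝ) - 1) * (π / 3)) ((i : ℝ) * (π / 3))}

/-- The index `i ∈ {1, …, 6}` of the cone of `u` containing `v`. -/
def coneIdx (u v : ℂ) : ℕ := (⌊argIn (v - u) / (π / 3)⌋).toNat + 1

/-- The angle of the bisector ray of the cone of `u` containing `v`. -/
def bisAngle (u v : ℂ) : ℝ := ((coneIdx u v : ℝ) - 1) * (π / 3) + π / 6

/-- The projective distance from `u` to `v`: the Euclidean distance from `u` to the
orthogonal projection of `v` onto the bisector ray of the cone of `u` containing `v`. -/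
def projDist (u v : ℂ) : ℝ :=
  ((v - u) * Complex.exp (-(Complex.I * (bisAngle u v : ℂ)))).re

/-- `S` is in general position: no two points of `S` lie on a common line parallel to one of
the six rays from the origin at angles `jπ/3`. -/
def GenPos (S : Finset ℂ) : Prop :=
  ∀ u ∈ S, ∀ v ∈ S, u ≠ v → ∀ j : ℕ, argIn (v - u) ≠ (j : ℝ) * (π / 3)

/-- `S` is in convex position: every point of `S` is an extreme point of the convex hull. -/
def ConvexPos (S : Finset ℂ) : Prop :=
  ∀ p ∈ S, p ∈ Set.extremePoints ℝ (convexHull ℝ (S : Set ℂ))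

/-- `u → v` is a directed edge of `Θ₆(S)`: `v` minimizes the projective distance from `u`
among the points of `S` in the cone of `u` containing `v`. -/
def ThetaEdge (S : Finset ℂ) (u v : ℂ) : Prop :=
  u ∈ S ∧ v ∈ S ∧ v ≠ u ∧
    ∀ w ∈ S, w ∈ cone (coneIdx u v) u → projDist u v ≤ projDist u w

/-- `u → v` is a directed edge of `ΘΘ₆(S)`: it is an edge of `Θ₆(S)` and among all incoming
`Θ₆`-edges `w → v` with `w` in the same cone of `v` as `u`, it minimizes `‖wv‖`. -/
def ThetaThetaEdge (S : Finset ℂ) (u v : ℂ) : Prop :=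
  ThetaEdge S u v ∧
    ∀ w, ThetaEdge S w v → coneIdx v w = coneIdx v u → projDist u v ≤ projDist w v

/-- Undirected adjacency in `ΘΘ₆(S)`: paths may use edges in either direction. -/
def TTAdj (S : Finset ℂ) (u v : ℂ) : Prop := ThetaThetaEdge S u v ∨ ThetaThetaEdge S v u

/-- `p` is a path between `u` and `v` with respect to the adjacency relation `A`. -/
def IsPath (A : ℂ → ℂ → Prop) (u v : ℂ) (p : List ℂ) : Prop :=
  p.Chain' A ∧ p.head? = some u ∧ p.getLast? = some v

/-- The Euclidean length of the polygonal path through the points of `p`. -/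
def pathLength (p : List ℂ) : ℝ := (List.zipWith dist p p.tail).sum

/-! ### Planar frames -/

section Frames
variable {P : Type*}

/-- Signed area of `u, v, t` in the affine coordinates `X, Y`; positive when `t` lies to the left
of the line directed from `u` to `v`. -/
def cr (X Y : P → ℝ) (u v t : P) : ℝ :=
  (X v - X u) * (Y t - Y u) - (Y v - Y u) * (X t - X u)

/-- The only property of `ΘΘ₆` used in the argument, for the cone `X, Y > 0`: if `v` is the point
nearest to `u` in the cone of `u`, then `uv` is an edge, or it has been discarded in favour of an
edge `wv` with `w` in the opposite cone of `v` and nearer to `v` than `u`. -/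
def Stp (S : Finset P) (A : P → P → Prop) (X Y : P → ℝ) : Prop :=
  ∀ u ∈ S, ∀ v ∈ S, X u < X v → Y u < Y v →
    (∀ t ∈ S, X u < X t → Y u < Y t → X v + Y v ≤ X t + Y t) →
    A u v ∨ ∃ w ∈ S, X w < X v ∧ Y w < Y v ∧ X u + Y u < X w + Y w ∧ A w v

/-- The points of `S` seen in coordinates `X, Y` along two adjacent cone rays: a symmetric graph
`A`, the hexagonal norm `N`, genericity, convex position (`col`, `conv`), and the edge property
`Stp` for each of the six cones. -/
structure Fr (S : Finset P) (A : P → P → Prop) (N : P → P → ℝ) (X Y : P → ℝ) : Prop where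
  symm : ∀ a b, A a b → A b a
  inj : ∀ a ∈ S, ∀ b ∈ S, a ≠ b → X a ≠ X b ∧ Y a ≠ Y b ∧ X a + Y a ≠ X b + Y b
  col : ∀ a ∈ S, ∀ b ∈ S, ∀ c ∈ S, a ≠ b → b ≠ c → a ≠ c → cr X Y a b c ≠ 0
  conv : ∀ a ∈ S, ∀ b ∈ S, ∀ c ∈ S, ∀ d ∈ S,
    0 < cr X Y a b d → 0 < cr X Y b c d → 0 < cr X Y c a d → False
  norm : ∀ a b, N a b = max |X b - X a| (max |Y b - Y a| |X b + Y b - (X a + Y a)|)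
  st1 : Stp S A X Y
  st2 : Stp S A (fun p => X p + Y p) (fun p => -X p)
  st3 : Stp S A Y (fun p => -(X p + Y p))
  st4 : Stp S A (fun p => -X p) (fun p => -Y p)
  st5 : Stp S A (fun p => -(X p + Y p)) X
  st6 : Stp S A (fun p => -Y p) (fun p => X p + Y p)

variable {S : Finset P} {A : P → P → Prop} {N : P → P → ℝ} {X Y : P → ℝ}

lemma Stp.congr {X' Y' : P → ℝ} (h : Stp S A X Y) (hX : ∀ p, X' p = X p)
    (hY : ∀ p, Y' p = Y p) : Stp S A X' Y' := by
  have h1 : X' = X := funext hX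
  have h2 : Y' = Y := funext hY
  rw [h1, h2]; exact h

lemma Stp.swap (h : Stp S A X Y) : Stp S A Y X := by
  intro u hu v hv hx hy ht
  rcases h u hu v hv hy hx (fun t hts h1 h2 => by linarith [ht t hts h2 h1]) with h | h
  · exact Or.inl h
  · obtain ⟨w, hw, h1, h2, h3, h4⟩ := h
    exact Or.inr ⟨w, hw, h2, h1, by linarith, h4⟩

/-- Rotating the frame by `60` degrees. -/
lemma Fr.rot (F : Fr S A N X Y) : Fr S A N (fun p => X p + Y p) (fun p => -X p) where
  symm := F.symm
  inj a ha b hb hab := by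
    obtain ⟨h1, h2, h3⟩ := F.inj a ha b hb hab
    refine ⟨h3, fun h => h1 (by linarith), fun h => h2 (by linarith)⟩
  col a ha b hb c hc h1 h2 h3 h := by
    apply F.col a ha b hb c hc h1 h2 h3
    rw [← h]; unfold cr; ring
  conv a ha b hb c hc d hd h1 h2 h3 := by
    apply F.conv a ha b hb c hc d hd
    · convert h1 using 1; unfold cr; ring
    · convert h2 using 1; unfold cr; ring
    · convert h3 using 1; unfold cr; ring
  norm a b := by
    rw [F.norm a b]
    have e1 : -X b - -X a = -(X b - X a) := by ring
    have e2 : X b + Y b + -X b - (X a + Y a + -X a) = Y b - Y a := by ring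
    rw [e1, e2, abs_neg, max_comm, max_assoc, max_comm, max_assoc, max_comm |X b - X a|,
      max_comm |Y b - Y a|]
  st1 := F.st2
  st2 := F.st3.congr (fun p => by ring) (fun p => by ring)
  st3 := F.st4.congr (fun p => by ring) (fun p => by ring)
  st4 := F.st5.congr (fun p => by ring) (fun p => by ring)
  st5 := F.st6.congr (fun p => by ring) (fun p => by ring)
  st6 := F.st1.congr (fun p => by ring) (fun p => by ring)

/-- Exchanging the two coordinates reflects the plane. -/
lemma Fr.swap (F : Fr S A N X Y) : Fr S A N Y X where
  symm := F.symm
  inj a ha b hb hab := by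
    obtain ⟨h1, h2, h3⟩ := F.inj a ha b hb hab
    refine ⟨h2, h1, fun h => h3 (by linarith)⟩
  col a ha b hb c hc h1 h2 h3 h := by
    apply F.col a ha b hb c hc h1 h2 h3
    have : cr X Y a b c = - cr Y X a b c := by unfold cr; ring
    rw [this, h, neg_zero]
  conv a ha b hb c hc d hd h1 h2 h3 := by
    apply F.conv b hb a ha c hc d hd
    · convert h1 using 1; unfold cr; ring
    · convert h3 using 1; unfold cr; ring
    · convert h2 using 1; unfold cr; ring
  norm a b := by
    rw [F.norm a b, add_comm (X b), add_comm (X a)]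
    simp only [max_left_comm]
  st1 := F.st1.swap
  st2 := F.st6.swap.congr (fun p => by ring) (fun p => by ring)
  st3 := F.st5.swap.congr (fun p => by ring) (fun p => by ring)
  st4 := F.st4.swap
  st5 := F.st3.swap.congr (fun p => by ring) (fun p => by ring)
  st6 := F.st2.swap.congr (fun p => by ring) (fun p => by ring)

/-- The frame with the same underlying coordinates up to pointwise equality. -/
lemma Fr.congr {X' Y' : P → ℝ} (F : Fr S A N X Y) (hX : ∀ p, X' p = X p)
    (hY : ∀ p, Y' p = Y p) : Fr S A N X' Y' := by
  have h1 : X' = X := funext hX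
  have h2 : Y' = Y := funext hY
  rw [h1, h2]; exact F

lemma Fr.rot180 (F : Fr S A N X Y) : Fr S A N (fun p => -X p) (fun p => -Y p) :=
  F.rot.rot.rot.congr (fun p => by ring) (fun p => by ring)

lemma Fr.rot300 (F : Fr S A N X Y) : Fr S A N (fun p => -Y p) (fun p => X p + Y p) :=
  F.rot.rot.rot.rot.rot.congr (fun p => by ring) (fun p => by ring)

/-- Reflection exchanging the first and fourth cones; it is applied with the endpoints of a pair
exchanged, so that the left side of the pair is preserved. -/
lemma Fr.mir (F : Fr S A N X Y) : Fr S A N (fun p => -Y p) (fun p => -X p) :=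
  F.rot180.swap

/-- Reflection exchanging the first and sixth cones. -/
lemma Fr.hor (F : Fr S A N X Y) : Fr S A N (fun p => X p + Y p) (fun p => -Y p) :=
  F.rot300.swap

/-! ### Paths -/

/-- `u` and `v` are joined by a path of the graph `A` of `N`-length at most `r`. -/
inductive Conn (A : P → P → Prop) (N : P → P → ℝ) : P → P → ℝ → Prop
  | nil (u : P) (r : ℝ) : 0 ≤ r → Conn A N u u r
  | cons (u w v : P) (r s : ℝ) : A u w → Conn A N w v r → N u w + r ≤ s → Conn A N u v s

lemma Conn.mono {u v : P} {r s : ℝ} (h : Conn A N u v r) (hrs : r ≤ s) : Conn A N u v s := by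
  cases h with
  | nil _ _ h0 => exact .nil _ _ (h0.trans hrs)
  | cons _ w _ r' _ ha hc hl => exact .cons _ w _ r' _ ha hc (hl.trans hrs)

lemma Conn.trans {u v w : P} {r s : ℝ} (h : Conn A N u v r) (h' : Conn A N v w s) :
    Conn A N u w (r + s) := by
  induction h with
  | nil u r h0 => exact h'.mono (by linarith)
  | cons u x v r t ha hc hl ih => exact .cons u x w (r + s) _ ha (ih h') (by linarith)

lemma Conn.of_adj {u v : P} {r : ℝ} (h : A u v) (hr : N u v ≤ r) : Conn A N u v r :=
  .cons u v v 0 r h (.nil v 0 le_rfl) (by linarith)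

lemma Fr.N_comm (F : Fr S A N X Y) (a b : P) : N a b = N b a := by
  rw [F.norm, F.norm, abs_sub_comm (X b), abs_sub_comm (Y b), abs_sub_comm (X b + Y b)]

lemma Fr.conn_symm (F : Fr S A N X Y) {u v : P} {r : ℝ} (h : Conn A N u v r) :
    Conn A N v u r := by
  induction h with
  | nil u r h0 => exact .nil u r h0
  | cons u w v r s ha hc hl ih =>
    exact (ih.trans (Conn.of_adj (F.symm _ _ ha) le_rfl)).mono (by rw [F.N_comm w u]; linarith)

/-- In the first cone the norm is the sum of the coordinates. -/
lemma Fr.N_eq (F : Fr S A N X Y) {a b : P} (hx : X a < X b) (hy : Y a < Y b) :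
    N a b = X b + Y b - (X a + Y a) := by
  rw [F.norm, abs_of_pos (by linarith), abs_of_pos (by linarith), abs_of_pos (by linarith),
    max_eq_right, max_eq_right] <;> first | linarith | skip
  apply le_max_of_le_right; linarith

/-- In the union of the first and sixth cones the norm is at most `ΔX + ΔZ`. -/
lemma Fr.N_le (F : Fr S A N X Y) {a b : P} (hx : X a < X b) (hz : X a + Y a < X b + Y b) :
    N a b ≤ (X b - X a) + (X b + Y b - (X a + Y a)) := by
  rw [F.norm, abs_of_pos (by linarith : 0 < X b - X a),
    abs_of_pos (by linarith : 0 < X b + Y b - (X a + Y a))]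
  refine max_le (by linarith) (max_le ?_ (by linarith))
  rw [abs_le]; constructor <;> linarith

end Frames

/-! ### Convex position -/

section Conv
variable {P : Type*} {S : Finset P} {A : P → P → Prop} {N : P → P → ℝ} {X Y : P → ℝ}

lemma cr_rot (X Y : P → ℝ) (u v t : P) :
    cr (fun p => X p + Y p) (fun p => -X p) u v t = cr X Y u v t := by unfold cr; ring

lemma cr_rot300 (X Y : P → ℝ) (u v t : P) :
    cr (fun p => -Y p) (fun p => X p + Y p) u v t = cr X Y u v t := by unfold cr; ring

lemma cr_rot180 (X Y : P → ℝ) (u v t : P) :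
    cr (fun p => -X p) (fun p => -Y p) u v t = cr X Y u v t := by unfold cr; ring

lemma cr_mir (X Y : P → ℝ) (u v t : P) :
    cr (fun p => -Y p) (fun p => -X p) v u t = cr X Y u v t := by unfold cr; ring

lemma cr_cyc (X Y : P → ℝ) (u v t : P) : cr X Y v t u = cr X Y u v t := by unfold cr; ring

lemma cr_flip (X Y : P → ℝ) (u v t : P) : cr X Y v u t = -cr X Y u v t := by unfold cr; ring

lemma cr_flip' (X Y : P → ℝ) (u v t : P) : cr X Y u t v = -cr X Y u v t := by unfold cr; ring

lemma cr_self1 (X Y : P → ℝ) (u t : P) : cr X Y u u t = 0 := by unfold cr; ring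

lemma cr_self2 (X Y : P → ℝ) (u v : P) : cr X Y u v u = 0 := by unfold cr; ring

lemma cr_self3 (X Y : P → ℝ) (u v : P) : cr X Y u v v = 0 := by unfold cr; ring

lemma Fr.cr_ne (F : Fr S A N X Y) {a b c : P} (ha : a ∈ S) (hb : b ∈ S) (hc : c ∈ S)
    (h1 : a ≠ b) (h2 : b ≠ c) (h3 : a ≠ c) : cr X Y a b c < 0 ∨ 0 < cr X Y a b c :=
  lt_or_gt_of_ne (F.col a ha b hb c hc h1 h2 h3)

lemma Fr.left_left (F : Fr S A N X Y) {u v s τ : P} (hu : u ∈ S) (hv : v ∈ S) (hs : s ∈ S)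
    (ht : τ ∈ S) (h1 : 0 < cr X Y u v s) (h2 : 0 < cr X Y u s τ) : 0 < cr X Y u v τ := by
  by_contra hc
  have n1 : u ≠ v := by rintro rfl; rw [cr_self1] at h1; exact lt_irrefl _ h1
  have n2 : u ≠ τ := by rintro rfl; rw [cr_self2] at h2; exact lt_irrefl _ h2
  have n3 : v ≠ τ := by rintro rfl; rw [cr_flip'] at h2; linarith
  rcases F.cr_ne hu hv ht n1 n3 n2 with h | h
  · apply F.conv s hs τ ht v hv u hu
    · rw [cr_cyc]; exact h2
    · rw [cr_cyc, cr_flip']; linarith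
    · rw [cr_cyc]; exact h1
  · exact hc h

lemma Fr.left_right (F : Fr S A N X Y) {u v s τ : P} (hu : u ∈ S) (hv : v ∈ S) (hs : s ∈ S)
    (ht : τ ∈ S) (h1 : 0 < cr X Y u v s) (h2 : 0 < cr X Y s v τ) : 0 < cr X Y u v τ := by
  by_contra hc
  have n1 : u ≠ v := by rintro rfl; rw [cr_self1] at h1; exact lt_irrefl _ h1
  have n2 : v ≠ τ := by rintro rfl; rw [cr_self3] at h2; exact lt_irrefl _ h2
  have n3 : u ≠ τ := by rintro rfl; rw [cr_flip, cr_cyc] at h2; linarith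
  rcases F.cr_ne hu hv ht n1 n2 n3 with h | h
  · apply F.conv s hs u hu τ ht v hv
    · rw [cr_cyc, cr_cyc]; exact h1
    · rw [cr_flip']; linarith
    · rw [cr_cyc, cr_cyc]; exact h2
  · exact hc h

lemma Fr.left_trans (F : Fr S A N X Y) {u v s τ : P} (hu : u ∈ S) (hv : v ∈ S) (hs : s ∈ S)
    (ht : τ ∈ S) (h1 : 0 < cr X Y u v s) (h2 : 0 < cr X Y u s τ) : cr X Y s v τ < 0 := by
  by_contra hc
  have n1 : s ≠ v := by rintro rfl; rw [cr_self3] at h1; exact lt_irrefl _ h1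
  have n2 : s ≠ τ := by rintro rfl; rw [cr_self3] at h2; exact lt_irrefl _ h2
  have n3 : v ≠ τ := by rintro rfl; rw [cr_flip'] at h2; linarith
  rcases F.cr_ne hs hv ht n1 n3 n2 with h | h
  · exact hc h
  · apply F.conv u hu v hv τ ht s hs h1
    · rw [cr_cyc]; exact h
    · rw [cr_cyc, cr_cyc]; exact h2

/-- A point in the angle at `u` between `v` and `r` that is nearer to `u` than both of them, with
respect to some linear functional, would lie inside the triangle `u v r`. -/
lemma Fr.fan (F : Fr S A N X Y) {u v r t : P} (hu : u ∈ S) (hv : v ∈ S) (hr : r ∈ S)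
    (ht : t ∈ S) (h1 : 0 < cr X Y u v r) (h2 : 0 < cr X Y u v t) (h3 : cr X Y u r t < 0)
    (a b m : ℝ) (hm : a * X u + b * Y u < m) (hmt : a * X t + b * Y t < m)
    (hmr : m ≤ a * X r + b * Y r) (hmv : m ≤ a * X v + b * Y v) : False := by
  have key : cr X Y v r t = cr X Y u v r - cr X Y u v t + cr X Y u r t := by unfold cr; ring
  have id : cr X Y u v t * (a * X r + b * Y r - (a * X u + b * Y u)) +
      (-cr X Y u r t) * (a * X v + b * Y v - (a * X u + b * Y u)) =
      cr X Y u v r * (a * X t + b * Y t - (a * X u + b * Y u)) := by unfold cr; ring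
  have i1 := mul_le_mul_of_nonneg_left (sub_le_sub_right hmr (a * X u + b * Y u)) h2.le
  have i2 := mul_le_mul_of_nonneg_left (sub_le_sub_right hmv (a * X u + b * Y u))
    (neg_pos.2 h3).le
  have i3 := mul_lt_mul_of_pos_left (sub_lt_sub_right hmt (a * X u + b * Y u)) h1
  have i4 : 0 < (cr X Y v r t) * (m - (a * X u + b * Y u)) := by
    rw [key]; linarith
  have i5 : 0 < cr X Y v r t := pos_of_mul_pos_left i4 (by linarith)
  exact F.conv u hu v hv r hr t ht h2 i5 (by rw [cr_flip]; linarith)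

/-- The points of `S` to the left of the line from `u` to `v`. -/
def lft (S : Finset P) (X Y : P → ℝ) (u v : P) : Finset P :=
  open Classical in S.filter fun t => 0 < cr X Y u v t

lemma mem_lft {u v t : P} : t ∈ lft S X Y u v ↔ t ∈ S ∧ 0 < cr X Y u v t := by
  classical
  simp [lft]

lemma Fr.card_left (F : Fr S A N X Y) {u v s : P} (hu : u ∈ S) (hv : v ∈ S) (hs : s ∈ S)
    (h1 : 0 < cr X Y u v s) : (lft S X Y u s).card < (lft S X Y u v).card := by
  apply Finset.card_lt_card
  refine ⟨fun τ h => ?_, fun h => ?_⟩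
  · rw [mem_lft] at *
    exact ⟨h.1, F.left_left hu hv hs h.1 h1 h.2⟩
  · have := (mem_lft.1 (h (mem_lft.2 ⟨hs, h1⟩))).2
    rw [cr_self3] at this; exact lt_irrefl _ this

lemma Fr.card_right (F : Fr S A N X Y) {u v s : P} (hu : u ∈ S) (hv : v ∈ S) (hs : s ∈ S)
    (h1 : 0 < cr X Y u v s) : (lft S X Y s v).card < (lft S X Y u v).card := by
  apply Finset.card_lt_card
  refine ⟨fun τ h => ?_, fun h => ?_⟩
  · rw [mem_lft] at *
    exact ⟨h.1, F.left_right hu hv hs h.1 h1 h.2⟩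
  · have := (mem_lft.1 (h (mem_lft.2 ⟨hs, h1⟩))).2
    rw [cr_self2] at this; exact lt_irrefl _ this

lemma lft_rot (u v : P) : lft S (fun p => X p + Y p) (fun p => -X p) u v = lft S X Y u v := by
  ext t; simp only [mem_lft, cr_rot]

lemma lft_rot300 (u v : P) : lft S (fun p => -Y p) (fun p => X p + Y p) u v = lft S X Y u v := by
  ext t; simp only [mem_lft, cr_rot300]

lemma lft_mir (u v : P) : lft S (fun p => -Y p) (fun p => -X p) v u = lft S X Y u v := by
  ext t; simp only [mem_lft, cr_mir]

lemma Fr.eq_of_X (F : Fr S A N X Y) {a b : P} (ha : a ∈ S) (hb : b ∈ S) (h : X a = X b) :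
    a = b := by
  by_contra hn; exact (F.inj a ha b hb hn).1 h

lemma Fr.eq_of_Y (F : Fr S A N X Y) {a b : P} (ha : a ∈ S) (hb : b ∈ S) (h : Y a = Y b) :
    a = b := by
  by_contra hn; exact (F.inj a ha b hb hn).2.1 h

lemma Fr.eq_of_Z (F : Fr S A N X Y) {a b : P} (ha : a ∈ S) (hb : b ∈ S)
    (h : X a + Y a = X b + Y b) : a = b := by
  by_contra hn; exact (F.inj a ha b hb hn).2.2 h

end Conv

/-! ### Pairs with an empty right side -/

section OneSided
variable {P : Type*} {S : Finset P} {A : P → P → Prop} {N : P → P → ℝ} {X Y : P → ℝ}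

/-- For a pair with `v` in the first cone of `u`: no point to the right of the line `uv` is in the
cone of `u` closer than `v`, or in the cone of `v` closer than `u`. -/
def RE (S : Finset P) (X Y : P → ℝ) (u v : P) : Prop :=
  ∀ t ∈ S, cr X Y u v t < 0 →
    ¬ (X u < X t ∧ Y u < Y t ∧ X t + Y t < X v + Y v) ∧
    ¬ (X t < X v ∧ Y t < Y v ∧ X u + Y u < X t + Y t)

/-- All points to the left of `uv` satisfy `f`. -/
def LeftAll (S : Finset P) (X Y : P → ℝ) (u v : P) (f : P → Prop) : Prop :=
  ∀ t ∈ S, 0 < cr X Y u v t → f t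

lemma RE.mir {u v : P} (h : RE S X Y u v) :
    RE S (fun p => -Y p) (fun p => -X p) v u := by
  intro t ht h1
  rw [cr_mir] at h1
  have := h t ht h1
  refine ⟨fun h2 => this.2 ⟨?_, ?_, ?_⟩, fun h2 => this.1 ⟨?_, ?_, ?_⟩⟩ <;>
    linarith [h2.1, h2.2.1, h2.2.2]

lemma LeftAll.mir {u v : P} {f : P → Prop} (h : LeftAll S X Y u v f) :
    LeftAll S (fun p => -Y p) (fun p => -X p) v u f := by
  intro t ht h1
  rw [cr_mir] at h1
  exact h t ht h1

/-- A point of the cone of `u` that is nearer to `u` than `v` is on the left. -/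
lemma RE.left_par (F : Fr S A N X Y) {u v r : P} (hu : u ∈ S) (hv : v ∈ S) (hr : r ∈ S)
    (h : RE S X Y u v) (h1 : X u < X r) (h2 : Y u < Y r) (h3 : X r + Y r < X v + Y v)
    (hx : X u < X v) : 0 < cr X Y u v r := by
  have n1 : u ≠ v := by rintro rfl; exact lt_irrefl _ hx
  have n2 : v ≠ r := by rintro rfl; exact lt_irrefl _ h3
  have n3 : u ≠ r := by rintro rfl; exact lt_irrefl _ h1
  rcases F.cr_ne hu hv hr n1 n2 n3 with h' | h'
  · exact absurd ⟨h1, h2, h3⟩ (h r hr h').1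
  · exact h'

lemma RE.split_left (F : Fr S A N X Y) {u v r : P} (hu : u ∈ S) (hv : v ∈ S) (hr : r ∈ S)
    (h : RE S X Y u v) (h1 : X u < X r) (h2 : Y u < Y r) (h3 : X r < X v) (h4 : Y r < Y v) :
    RE S X Y u r := by
  have hl := h.left_par F hu hv hr h1 h2 (by linarith) (by linarith)
  intro t ht hc
  have n1 : u ≠ v := by rintro rfl; linarith
  have n3 : u ≠ t := by rintro rfl; rw [cr_self2] at hc; exact lt_irrefl _ hc
  constructor
  · rintro ⟨a1, a2, a3⟩
    have n2 : v ≠ t := by rintro rfl; linarith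
    rcases F.cr_ne hu hv ht n1 n2 n3 with h' | h'
    · exact (h t ht h').1 ⟨a1, a2, by linarith⟩
    · exact F.fan hu hv hr ht hl h' hc 1 1 (X r + Y r) (by linarith) (by linarith) (by linarith)
        (by linarith)
  · rintro ⟨a1, a2, a3⟩
    have n2 : v ≠ t := by rintro rfl; linarith
    rcases F.cr_ne hu hv ht n1 n2 n3 with h' | h'
    · exact (h t ht h').2 ⟨by linarith, by linarith, a3⟩
    · exact F.fan hu hv hr ht hl h' hc 1 0 (X r) (by linarith) (by linarith) (by linarith)
        (by linarith)

lemma RE.split_right (F : Fr S A N X Y) {u v r : P} (hu : u ∈ S) (hv : v ∈ S) (hr : r ∈ S)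
    (h : RE S X Y u v) (h1 : X u < X r) (h2 : Y u < Y r) (h3 : X r < X v) (h4 : Y r < Y v) :
    RE S X Y r v := by
  have := (h.mir.split_left F.mir hv hu hr (by linarith) (by linarith) (by linarith)
    (by linarith)).mir
  simpa only [neg_neg] using this

/-- `v` is the point of the first cone of `u` nearest to `u`. -/
def Nst (S : Finset P) (X Y : P → ℝ) (u v : P) : Prop :=
  ∀ t ∈ S, X u < X t → Y u < Y t → X v + Y v ≤ X t + Y t

/-- A discarder `w` of the edge `u → v` lying in the second cone of `u` (a left discarder) is on
the left of `uv`. -/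
lemma disc_left {u v w : P} (hx : X u < X v) (hy : Y u < Y v) (h1 : X w < X u)
    (h3 : X u + Y u < X w + Y w) : 0 < cr X Y u v w := by
  unfold cr
  have := mul_pos (sub_pos.2 hx) (by linarith : 0 < Y w - Y u)
  have := mul_pos (sub_pos.2 hy) (by linarith : 0 < X u - X w)
  linarith

/-- The pair formed by `u` and a left discarder of `u → v`, seen in the frame of the second cone,
has an empty right side. -/
lemma disc_RE (F : Fr S A N X Y) {u v w : P} (hu : u ∈ S) (hv : v ∈ S) (hw : w ∈ S)
    (hx : X u < X v) (hy : Y u < Y v) (hn : Nst S X Y u v) (h1 : X w < X u) (h2 : Y w < Y v)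
    (h3 : X u + Y u < X w + Y w) : RE S (fun p => X p + Y p) (fun p => -X p) u w := by
  have hl := disc_left hx hy h1 h3
  intro t ht hc
  rw [cr_rot] at hc
  have aux : X t ≤ X u → Y u < Y t → Y t < Y w → False := by
    intro b1 b2 b3
    have h' : 0 < cr X Y u v t := by
      unfold cr
      have := mul_pos (sub_pos.2 hx) (sub_pos.2 b2)
      have := mul_nonneg (sub_pos.2 hy).le (sub_nonneg.2 b1)
      linarith
    exact F.fan hu hv hw ht hl h' hc 0 1 (Y w) (by linarith) (by linarith) (by linarith)
        (by linarith)
  constructor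
  · rintro ⟨a1, a2, a3⟩
    exact aux (by linarith) (by linarith) (by linarith)
  · rintro ⟨a1, a2, a3⟩
    rcases le_or_gt (X t) (X u) with b | b
    · exact aux b (by linarith) (by linarith)
    · have := hn t ht b (by linarith)
      linarith

lemma disc_out (F : Fr S A N X Y) {u v w : P} (hu : u ∈ S) (hv : v ∈ S) (hw : w ∈ S)
    (hx : X u < X v) (hy : Y u < Y v) (h1 : X w < X u) (h2 : Y w < Y v)
    (h3 : X u + Y u < X w + Y w) : LeftAll S X Y u w fun t => Y t < Y w := by
  intro t ht hc
  by_contra hn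
  have hl := disc_left hx hy h1 h3
  have h4 := F.left_trans hu hv hw ht hl hc
  have e1 : cr X Y u w t = -((X u - X w) * (Y t - Y w)) - (Y w - Y u) * (X t - X w) := by
    unfold cr; ring
  have e2 : cr X Y w v t = (X v - X w) * (Y t - Y w) - (Y v - Y w) * (X t - X w) := by
    unfold cr; ring
  have i1 := mul_nonneg (by linarith : 0 ≤ X u - X w) (by linarith : 0 ≤ Y t - Y w)
  have i2 := mul_nonneg (by linarith : 0 ≤ X v - X w) (by linarith : 0 ≤ Y t - Y w)
  have i3 : X t - X w < 0 := by
    by_contra h5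
    have := mul_nonneg (by linarith : 0 ≤ Y w - Y u) (not_lt.1 h5)
    linarith
  have := mul_pos (by linarith : 0 < Y v - Y w) (neg_pos.2 i3)
  linarith

lemma disc_in (F : Fr S A N X Y) {u v w : P} (hu : u ∈ S) (hv : v ∈ S) (hw : w ∈ S)
    (hx : X u < X v) (hy : Y u < Y v) (h1 : X w < X u)
    (h3 : X u + Y u < X w + Y w) : LeftAll S X Y u w fun t => X t < X u := by
  intro t ht hc
  by_contra hn
  have hl := disc_left hx hy h1 h3
  have h4 := F.left_left hu hv hw ht hl hc
  unfold cr at hc h4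
  have i1 := mul_nonneg (by linarith : 0 ≤ Y w - Y u) (by linarith : 0 ≤ X t - X u)
  have i2 := mul_nonneg (by linarith : 0 ≤ Y v - Y u) (by linarith : 0 ≤ X t - X u)
  have i3 : Y t - Y u < 0 := by
    by_contra h5
    have := mul_nonneg (by linarith : 0 ≤ X u - X w) (not_lt.1 h5)
    linarith
  have := mul_pos (by linarith : 0 < X v - X u) (neg_pos.2 i3)
  linarith

/-- A pair with empty parallelogram, and a point `p` of the cone of `u` above `v`: the pair `p, v`
has an empty right side in the frame of the sixth cone, provided no point `t` of the cone of
`v` below `u` has `Z t > Z p`, where `Z = X + Y`. -/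
lemma above_RE (F : Fr S A N X Y) {u v p : P} (hu : u ∈ S) (hv : v ∈ S) (hp : p ∈ S)
    (hx : X u < X v) (hy : Y u < Y v)
    (hpar : ∀ t ∈ S, X u < X t → Y u < Y t → X t < X v → Y t < Y v → False)
    (h1 : X u < X p) (h2 : Y v < Y p) (h3 : X p + Y p < X v + Y v)
    (hb : ∀ t ∈ S, Y t < Y u → X t < X v → X p + Y p < X t + Y t → False) :
    RE S (fun p => -Y p) (fun p => X p + Y p) p v := by
  have lf : ∀ t, X t < X v → Y v < Y t → 0 < cr X Y u v t := by
    intro t b1 b2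
    have e : cr X Y u v t = (X v - X u) * (Y t - Y v) + (Y v - Y u) * (X v - X t) := by
      unfold cr; ring
    rw [e]
    have := mul_pos (sub_pos.2 hx) (sub_pos.2 b2)
    have := mul_pos (sub_pos.2 hy) (sub_pos.2 b1)
    linarith
  have hl := lf p (by linarith) h2
  intro t ht hc
  rw [cr_rot300] at hc
  have aux : X p < X t → X t < X v → Y v < Y t → False := by
    intro b1 b2 b3
    have h' := lf t b2 b3
    refine F.fan hv hp hu ht (by rw [cr_cyc]; exact hl) (by rw [cr_flip]; linarith)
      (by rw [cr_flip]; linarith) (-1) 0 (-X p) ?_ ?_ ?_ ?_ <;> linarith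
  constructor
  · rintro ⟨a1, a2, a3⟩
    rcases lt_trichotomy (Y t) (Y u) with b | b | b
    · exact hb t ht b (by linarith) (by linarith)
    · have := F.eq_of_Y ht hu b
      subst this; linarith
    · rcases lt_trichotomy (Y t) (Y v) with c | c | c
      · exact hpar t ht (by linarith) b (by linarith) c
      · have := F.eq_of_Y ht hv c
        subst this; linarith
      · exact aux (by linarith) (by linarith) c
  · rintro ⟨a1, a2, a3⟩
    exact aux (by linarith) (by linarith) (by linarith)

lemma above_in (F : Fr S A N X Y) {u v p : P} (hu : u ∈ S) (hv : v ∈ S) (hp : p ∈ S)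
    (hx : X u < X v) (hy : Y u < Y v) (h1 : X u < X p) (h2 : Y v < Y p)
    (h3 : X p + Y p < X v + Y v) : LeftAll S X Y p v fun t => X p < X t := by
  intro t ht hc
  by_contra hn
  have e : cr X Y u v p = (X v - X u) * (Y p - Y v) + (Y v - Y u) * (X v - X p) := by
    unfold cr; ring
  have hl : 0 < cr X Y u v p := by
    rw [e]
    have := mul_pos (sub_pos.2 hx) (sub_pos.2 h2)
    have := mul_pos (sub_pos.2 hy) (by linarith : 0 < X v - X p)
    linarith
  have i1 := mul_nonneg (by linarith : 0 ≤ Y p - Y v) (by linarith : 0 ≤ X p - X t)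
  have hyt : 0 < Y t - Y p := by
    have e2 : cr X Y p v t = (X v - X p) * (Y t - Y p) - (Y p - Y v) * (X p - X t) := by
      unfold cr; ring
    have : 0 < (X v - X p) * (Y t - Y p) := by linarith
    exact pos_of_mul_pos_right this (by linarith)
  have h4 : 0 < cr X Y u p t := by
    have e3 : cr X Y u p t = (X p - X u) * (Y t - Y p) + (Y p - Y u) * (X p - X t) := by
      unfold cr; ring
    rw [e3]
    have := mul_pos (sub_pos.2 h1) hyt
    have := mul_nonneg (by linarith : 0 ≤ Y p - Y u) (by linarith : 0 ≤ X p - X t)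
    linarith
  have := F.left_trans hu hv hp ht hl h4
  linarith

lemma above_out (F : Fr S A N X Y) {u v p : P} (hu : u ∈ S) (hv : v ∈ S) (hp : p ∈ S)
    (hx : X u < X v) (hy : Y u < Y v) (h2 : Y v < Y p)
    (h3 : X p + Y p < X v + Y v) : LeftAll S X Y p v fun t => Y v < Y t := by
  intro t ht hc
  by_contra hn
  have e : cr X Y u v p = (X v - X u) * (Y p - Y v) + (Y v - Y u) * (X v - X p) := by
    unfold cr; ring
  have hl : 0 < cr X Y u v p := by
    rw [e]
    have := mul_pos (sub_pos.2 hx) (sub_pos.2 h2)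
    have := mul_pos (sub_pos.2 hy) (by linarith : 0 < X v - X p)
    linarith
  have h4 := F.left_right hu hv hp ht hl hc
  have e1 : cr X Y u v t = -((X v - X u) * (Y v - Y t)) - (Y v - Y u) * (X t - X v) := by
    unfold cr; ring
  have e2 : cr X Y p v t = -((X v - X p) * (Y v - Y t)) + (Y p - Y v) * (X t - X v) := by
    unfold cr; ring
  have i1 := mul_nonneg (by linarith : 0 ≤ X v - X u) (by linarith : 0 ≤ Y v - Y t)
  have i2 := mul_nonneg (by linarith : 0 ≤ X v - X p) (by linarith : 0 ≤ Y v - Y t)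
  have : 0 < X t - X v := by
    have : 0 < (Y p - Y v) * (X t - X v) := by linarith
    exact pos_of_mul_pos_right this (by linarith)
  have := mul_pos (sub_pos.2 hy) this
  linarith

end OneSided

section OneSidedCost
variable {P : Type*} {S : Finset P} {A : P → P → Prop} {N : P → P → ℝ} {X Y : P → ℝ}

/-- Path lengths guaranteed for a pair with empty right side. In `tij` the index `i` records how
far the points on the left may spread behind `u` (`0`: `X u < X t`, `1`: `Z u < Z t`,
`2`: `Y u < Y t`), and `j` how far they may spread beyond `v` (`0`: `Y t < Y v`, `1`: `Z t < Z v`,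
`2`: `X t < X v`), where `Z = X + Y`. -/
structure OS (S : Finset P) (A : P → P → Prop) (N : P → P → ℝ) (X Y : P → ℝ) (u v : P) :
    Prop where
  t00 : LeftAll S X Y u v (fun t => X u < X t) → LeftAll S X Y u v (fun t => Y t < Y v) →
    Conn A N u v ((X v - X u) + (Y v - Y u))
  t10 : LeftAll S X Y u v (fun t => X u + Y u < X t + Y t) →
    LeftAll S X Y u v (fun t => Y t < Y v) →
    Conn A N u v ((X v - X u) + 2 * (Y v - Y u))
  t01 : LeftAll S X Y u v (fun t => X u < X t) →
    LeftAll S X Y u v (fun t => X t + Y t < X v + Y v) →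
    Conn A N u v (2 * (X v - X u) + (Y v - Y u))
  t11 : LeftAll S X Y u v (fun t => X u + Y u < X t + Y t) →
    LeftAll S X Y u v (fun t => X t + Y t < X v + Y v) →
    Conn A N u v (3 * (X v - X u) + 2 * (Y v - Y u))
  t20 : LeftAll S X Y u v (fun t => Y u < Y t) → LeftAll S X Y u v (fun t => Y t < Y v) →
    Conn A N u v ((X v - X u) + 3 * (Y v - Y u))
  t21 : LeftAll S X Y u v (fun t => Y u < Y t) →
    LeftAll S X Y u v (fun t => X t + Y t < X v + Y v) →
    Conn A N u v (4 * (X v - X u) + 3 * (Y v - Y u))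
  t12 : LeftAll S X Y u v (fun t => X u + Y u < X t + Y t) →
    LeftAll S X Y u v (fun t => X t < X v) →
    Conn A N u v (3 * (X v - X u) + 4 * (Y v - Y u))

/-- The bounds `OS` for all pairs, in all frames, with fewer than `n` points on the left. -/
def OSlt (S : Finset P) (A : P → P → Prop) (N : P → P → ℝ) (n : ℕ) : Prop :=
  ∀ X Y : P → ℝ, Fr S A N X Y → ∀ u ∈ S, ∀ v ∈ S, X u < X v → Y u < Y v → RE S X Y u v →
    (lft S X Y u v).card < n → OS S A N X Y u v

lemma exists_nst (S : Finset P) (X Y : P → ℝ) {u v : P} (hv : v ∈ S) (hx : X u < X v)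
    (hy : Y u < Y v) : ∃ p ∈ S, X u < X p ∧ Y u < Y p ∧ Nst S X Y u p := by
  classical
  obtain ⟨p, hp, hm⟩ := Finset.exists_min_image (S.filter fun t => X u < X t ∧ Y u < Y t)
    (fun t => X t + Y t) ⟨v, by simp [hv, hx, hy]⟩
  simp only [Finset.mem_filter] at hp hm
  exact ⟨p, hp.1, hp.2.1, hp.2.2, fun t ht h1 h2 => hm t ⟨ht, h1, h2⟩⟩

/-- The first step from `u` towards its nearest neighbour `p`: the condition `RE` excludes all
discarders on the right, and a left discarder `w` of `u → p` gives the detour `u, w, p`, whose first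
part is bounded by the induction hypothesis. -/
lemma step_left {n : ℕ} (H : OSlt S A N n) (F : Fr S A N X Y) {u v p : P} (hu : u ∈ S)
    (hp : p ∈ S) (hx : X u < X v) (hy : Y u < Y v) (hR : RE S X Y u v)
    (hpx : X u < X p) (hpy : Y u < Y p) (hn : Nst S X Y u p) (hxv : X p ≤ X v)
    (hsub : ∀ t ∈ S, 0 < cr X Y u p t → 0 < cr X Y u v t)
    (hcard : (lft S X Y u p).card ≤ n) :
    (LeftAll S X Y u v (fun t => X u < X t) → Conn A N u p (X p + Y p - (X u + Y u))) ∧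
    (LeftAll S X Y u v (fun t => X u + Y u < X t + Y t) →
      Conn A N u p (X p + Y p - (X u + Y u) + (Y p - Y u))) ∧
    (LeftAll S X Y u v (fun t => Y u < Y t) →
      Conn A N u p (X p + Y p - (X u + Y u) + 2 * (Y p - Y u))) := by
  rcases F.st1 u hu p hp hpx hpy hn with h | ⟨w, hw, w1, w2, w3, w4⟩
  · have := Conn.of_adj h (F.N_eq hpx hpy).le
    exact ⟨fun _ => this, fun _ => this.mono (by linarith), fun _ => this.mono (by linarith)⟩
  · have hwu : X w < X u := by
      rcases lt_trichotomy (X w) (X u) with h | h | h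
      · exact h
      · have := F.eq_of_X hw hu h
        subst this; linarith
      · exfalso
        rcases lt_trichotomy (Y w) (Y u) with h' | h' | h'
        · refine (hR w hw ?_).2 ⟨by linarith, by linarith, w3⟩
          unfold cr
          have := mul_pos (sub_pos.2 hx) (sub_pos.2 h')
          have := mul_pos (sub_pos.2 hy) (sub_pos.2 h)
          linarith
        · have := F.eq_of_Y hw hu h'
          subst this; linarith
        · have := hn w hw h h'
          linarith
    have hl := disc_left hpx hpy hwu w3
    have hc := F.card_left hu hp hw hl
    have O := H _ _ F.rot u hu w hw (by linarith) (by linarith)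
      (disc_RE F hu hp hw hpx hpy hn hwu w2 w3) (by rw [lft_rot]; omega)
    have hA := Conn.of_adj w4 (F.N_eq w1 w2).le
    have hout : LeftAll S (fun p => X p + Y p) (fun p => -X p) u w
        (fun t => (X t + Y t) + -X t < (X w + Y w) + -X w) := by
      intro t ht hc
      rw [cr_rot] at hc
      have := disc_out F hu hp hw hpx hpy hwu w2 w3 t ht hc
      linarith
    have hs : ∀ t ∈ S, 0 < cr (fun p => X p + Y p) (fun p => -X p) u w t →
        0 < cr X Y u v t := by
      intro t ht hc
      rw [cr_rot] at hc
      exact hsub t ht (F.left_left hu hp hw ht hl hc)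
    refine ⟨fun h => ?_, fun h => ?_, fun h => ?_⟩
    · have := h w hw (hsub w hw hl)
      linarith
    · refine ((O.t01 (fun t ht hc => h t ht (hs t ht hc)) hout).trans hA).mono ?_
      linarith
    · refine ((O.t11 (fun t ht hc => ?_) hout).trans hA).mono ?_
      · have := h t ht (hs t ht hc)
        linarith
      · linarith

/-- If `r` lies in the parallelogram with opposite corners `u, v` and sides parallel to the axes,
to the left of `uv`, then the points to the left of
`ur` are below `r`. -/
lemma par_out (F : Fr S A N X Y) {u v r : P} (hu : u ∈ S) (hv : v ∈ S) (hr : r ∈ S)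
    (h1 : X u < X r) (h2 : Y u < Y r) (h3 : X r < X v) (h4 : Y r < Y v)
    (hl : 0 < cr X Y u v r) : LeftAll S X Y u r fun t => Y t < Y r := by
  intro t ht hc
  by_contra hn
  have h5 := F.left_trans hu hv hr ht hl hc
  have e0 : cr X Y u v r = (X v - X r) * (Y r - Y u) - (Y v - Y r) * (X r - X u) := by
    unfold cr; ring
  have e1 : cr X Y u r t = (X r - X u) * (Y t - Y r) - (Y r - Y u) * (X t - X r) := by
    unfold cr; ring
  have e2 : cr X Y r v t = (X v - X r) * (Y t - Y r) - (Y v - Y r) * (X t - X r) := rfl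
  have hdx : 0 < X t - X r := by
    have := mul_nonneg (sub_pos.2 h3).le (by linarith : 0 ≤ Y t - Y r)
    have : 0 < (Y v - Y r) * (X t - X r) := by linarith
    exact pos_of_mul_pos_right this (by linarith)
  have i1 := mul_pos (sub_pos.2 h3) (e1 ▸ hc)
  have i2 := mul_pos (sub_pos.2 h1) (neg_pos.2 (e2 ▸ h5))
  have i3 := mul_pos (e0 ▸ hl) hdx
  linarith

lemma par_in (F : Fr S A N X Y) {u v r : P} (hu : u ∈ S) (hv : v ∈ S) (hr : r ∈ S)
    (h1 : X u < X r) (h2 : Y u < Y r) (h3 : X r < X v) (h4 : Y r < Y v)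
    (hl : 0 < cr X Y u v r) : LeftAll S X Y r v fun t => X r < X t := by
  intro t ht hc
  have := par_out F.mir hv hu hr (by linarith) (by linarith) (by linarith) (by linarith)
    (by rw [cr_mir]; exact hl) t ht (by rw [cr_mir]; exact hc)
  linarith

/-- The inductive step for the bounds not obtained by reflection. -/
lemma os_step {n : ℕ} (H : OSlt S A N n) (F : Fr S A N X Y) {u v : P} (hu : u ∈ S)
    (hv : v ∈ S) (hx : X u < X v) (hy : Y u < Y v) (hR : RE S X Y u v)
    (hcard : (lft S X Y u v).card ≤ n) :
    (LeftAll S X Y u v (fun t => X u < X t) → LeftAll S X Y u v (fun t => Y t < Y v) →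
      Conn A N u v ((X v - X u) + (Y v - Y u))) ∧
    (LeftAll S X Y u v (fun t => X u + Y u < X t + Y t) →
      LeftAll S X Y u v (fun t => Y t < Y v) →
      Conn A N u v ((X v - X u) + 2 * (Y v - Y u))) ∧
    (LeftAll S X Y u v (fun t => X u + Y u < X t + Y t) →
      LeftAll S X Y u v (fun t => X t + Y t < X v + Y v) →
      Conn A N u v (3 * (X v - X u) + 2 * (Y v - Y u))) ∧
    (LeftAll S X Y u v (fun t => Y u < Y t) → LeftAll S X Y u v (fun t => Y t < Y v) →
      Conn A N u v ((X v - X u) + 3 * (Y v - Y u))) ∧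
    (LeftAll S X Y u v (fun t => Y u < Y t) →
      LeftAll S X Y u v (fun t => X t + Y t < X v + Y v) →
      Conn A N u v (4 * (X v - X u) + 3 * (Y v - Y u))) := by
  by_cases hpar : ∃ r ∈ S, X u < X r ∧ Y u < Y r ∧ X r < X v ∧ Y r < Y v
  · obtain ⟨r, hr, r1, r2, r3, r4⟩ := hpar
    have hl := hR.left_par F hu hv hr r1 r2 (by linarith) hx
    have O1 := H _ _ F u hu r hr r1 r2 (hR.split_left F hu hv hr r1 r2 r3 r4)
      ((F.card_left hu hv hr hl).trans_le hcard)
    have O2 := H _ _ F r hr v hv r3 r4 (hR.split_right F hu hv hr r1 r2 r3 r4)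
      ((F.card_right hu hv hr hl).trans_le hcard)
    have s1 : ∀ f, LeftAll S X Y u v f → LeftAll S X Y u r f :=
      fun f hf t ht hc => hf t ht (F.left_left hu hv hr ht hl hc)
    have s2 : ∀ f, LeftAll S X Y u v f → LeftAll S X Y r v f :=
      fun f hf t ht hc => hf t ht (F.left_right hu hv hr ht hl hc)
    have m1 := par_out F hu hv hr r1 r2 r3 r4 hl
    have m2 := par_in F hu hv hr r1 r2 r3 r4 hl
    refine ⟨fun i o => ?_, fun i o => ?_, fun i o => ?_, fun i o => ?_, fun i o => ?_⟩
    · exact ((O1.t00 (s1 _ i) m1).trans (O2.t00 m2 (s2 _ o))).mono (by linarith)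
    · exact ((O1.t10 (s1 _ i) m1).trans (O2.t00 m2 (s2 _ o))).mono (by linarith)
    · exact ((O1.t10 (s1 _ i) m1).trans (O2.t01 m2 (s2 _ o))).mono (by linarith)
    · exact ((O1.t20 (s1 _ i) m1).trans (O2.t00 m2 (s2 _ o))).mono (by linarith)
    · exact ((O1.t20 (s1 _ i) m1).trans (O2.t01 m2 (s2 _ o))).mono (by linarith)
  · have hpar' : ∀ t ∈ S, X u < X t → Y u < Y t → X t < X v → Y t < Y v → False :=
      fun t ht h1 h2 h3 h4 => hpar ⟨t, ht, h1, h2, h3, h4⟩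
    obtain ⟨p, hp, hpx, hpy, hn⟩ := exists_nst S X Y hv hx hy
    rcases eq_or_ne p v with rfl | hpv
    · obtain ⟨a1, a2, a3⟩ := step_left H F hu hv hx hy hR hx hy hn le_rfl
        (fun _ _ h => h) hcard
      refine ⟨fun i o => ?_, fun i o => ?_, fun i o => ?_, fun i o => ?_, fun i o => ?_⟩
      · exact (a1 i).mono (by linarith)
      · exact (a2 i).mono (by linarith)
      · exact (a2 i).mono (by linarith)
      · exact (a3 i).mono (by linarith)
      · exact (a3 i).mono (by linarith)
    · have hz : X p + Y p < X v + Y v :=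
        lt_of_le_of_ne (hn v hv hx hy) (F.inj p hp v hv hpv).2.2
      have hl := hR.left_par F hu hv hp hpx hpy hz hx
      have hyp : Y v < Y p := by
        rcases lt_trichotomy (Y p) (Y v) with h | h | h
        · exfalso
          refine hpar' p hp hpx hpy ?_ h
          by_contra h'
          have e : cr X Y u v p = -((X v - X u) * (Y v - Y p)) - (Y v - Y u) * (X p - X v) := by
            unfold cr; ring
          have := mul_pos (sub_pos.2 hx) (sub_pos.2 h)
          have := mul_nonneg (sub_pos.2 hy).le (by linarith : 0 ≤ X p - X v)
          linarith
        · exact absurd (F.eq_of_Y hp hv h) hpv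
        · exact h
      have nO : ¬ LeftAll S X Y u v (fun t => Y t < Y v) := by
        intro o
        have := o p hp hl
        linarith
      obtain ⟨-, a2, a3⟩ := step_left H F hu hp hx hy hR hpx hpy hn (by linarith)
        (fun t ht h => F.left_left hu hv hp ht hl h) ((F.card_left hu hv hp hl).le.trans hcard)
      have hRE := above_RE F hu hv hp hx hy hpar' hpx hyp hz (by
        intro t ht b1 b2 b3
        refine (hR t ht ?_).2 ⟨b2, by linarith, by linarith⟩
        unfold cr
        have := mul_pos (sub_pos.2 hx) (sub_pos.2 b1)
        have := mul_pos (sub_pos.2 hy) (by linarith : 0 < X t - X u)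
        linarith)
      have O := H _ _ F.rot300 p hp v hv (by linarith) (by linarith) hRE
        (by rw [lft_rot300]; exact (F.card_right hu hv hp hl).trans_le hcard)
      have c : LeftAll S X Y u v (fun t => X t + Y t < X v + Y v) →
          Conn A N p v ((Y p - Y v) + 2 * (X v + Y v - (X p + Y p))) := by
        intro o
        refine (O.t10 (fun t ht hc => ?_) (fun t ht hc => ?_)).mono ?_
        · rw [cr_rot300] at hc
          have := above_in F hu hv hp hx hy hpx hyp hz t ht hc
          linarith
        · rw [cr_rot300] at hc
          exact o t ht (F.left_right hu hv hp ht hl hc)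
        · linarith
      refine ⟨fun i o => absurd o nO, fun i o => absurd o nO, fun i o => ?_,
        fun i o => absurd o nO, fun i o => ?_⟩
      · exact ((a2 i).trans (c o)).mono (by linarith)
      · exact ((a3 i).trans (c o)).mono (by linarith)

lemma os_all (S : Finset P) (A : P → P → Prop) (N : P → P → ℝ) (n : ℕ) : OSlt S A N n := by
  induction n with
  | zero => intro X Y F u hu v hv hx hy hR h; exact absurd h (Nat.not_lt_zero _)
  | succ n ih =>
    intro X Y F u hu v hv hx hy hR h
    obtain ⟨a1, a2, a3, a4, a5⟩ := os_step ih F hu hv hx hy hR (Nat.lt_succ_iff.1 h)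
    obtain ⟨b1, b2, b3, b4, b5⟩ := os_step ih F.mir hv hu (by linarith) (by linarith) hR.mir
      (by rw [lft_mir]; exact Nat.lt_succ_iff.1 h)
    refine ⟨a1, a2, fun i o => ?_, a3, a4, a5, fun i o => ?_⟩
    · refine (F.conn_symm (b2 (fun t ht hc => ?_) (fun t ht hc => ?_))).mono ?_
      · have := o.mir t ht hc
        linarith
      · have := i.mir t ht hc
        linarith
      · linarith
    · refine (F.conn_symm (b5 (fun t ht hc => ?_) (fun t ht hc => ?_))).mono ?_
      · have := o.mir t ht hc
        linarith
      · have := i.mir t ht hc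
        linarith
      · linarith

lemma Fr.os (F : Fr S A N X Y) {u v : P} (hu : u ∈ S) (hv : v ∈ S) (hx : X u < X v)
    (hy : Y u < Y v) (hR : RE S X Y u v) : OS S A N X Y u v :=
  os_all S A N _ X Y F u hu v hv hx hy hR (Nat.lt_succ_self _)

end OneSidedCost

/-! ### Discarded edges -/

section Discard
variable {P : Type*} {S : Finset P} {A : P → P → Prop} {N : P → P → ℝ} {X Y : P → ℝ}

/-- A discarded edge `u → v` with a discarder `w` in the second cone of `u` is replaced by a detour
through `w`. -/
lemma disc_conn (F : Fr S A N X Y) {u v w : P} (hu : u ∈ S) (hv : v ∈ S) (hw : w ∈ S)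
    (hx : X u < X v) (hy : Y u < Y v) (hn : Nst S X Y u v) (h1 : X w < X u) (h2 : Y w < Y v)
    (h3 : X u + Y u < X w + Y w) (hA : A w v) :
    Conn A N u v (X v + Y v - (X u + Y u) + 3 * (Y v - Y u)) := by
  have O := F.rot.os hu hw (by linarith) (by linarith) (disc_RE F hu hv hw hx hy hn h1 h2 h3)
  refine ((O.t21 (fun t ht hc => ?_) (fun t ht hc => ?_)).trans
    (Conn.of_adj hA (F.N_eq (by linarith) h2).le)).mono ?_
  · rw [cr_rot] at hc
    have := disc_in F hu hv hw hx hy h1 h3 t ht hc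
    linarith
  · rw [cr_rot] at hc
    have := disc_out F hu hv hw hx hy h1 h2 h3 t ht hc
    linarith
  · linarith

/-- The detour is shorter when a point `q` lies in the sixth cone of `u`. -/
lemma disc_conn' (F : Fr S A N X Y) {u v w q : P} (hu : u ∈ S) (hv : v ∈ S) (hw : w ∈ S)
    (hq : q ∈ S) (hx : X u < X v) (hy : Y u < Y v) (hn : Nst S X Y u v) (h1 : X w < X u)
    (h2 : Y w < Y v) (h3 : X u + Y u < X w + Y w) (hA : A w v) (q1 : Y q < Y u)
    (q2 : X u + Y u < X q + Y q) :
    Conn A N u v (X v + Y v - (X u + Y u) + 2 * (Y v - Y u)) := by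
  have O := F.rot.os hu hw (by linarith) (by linarith) (disc_RE F hu hv hw hx hy hn h1 h2 h3)
  refine ((O.t11 (fun t ht hc => ?_) (fun t ht hc => ?_)).trans
    (Conn.of_adj hA (F.N_eq (by linarith) h2).le)).mono ?_
  · rw [cr_rot] at hc
    have h4 := disc_in F hu hv hw hx hy h1 h3 t ht hc
    have h5 := F.left_left hu hv hw ht (disc_left hx hy h1 h3) hc
    suffices Y u < Y t by linarith
    by_contra hn
    have i1 := mul_pos (by linarith : 0 < X u - X t) (sub_pos.2 q1)
    have i2 := mul_nonneg (by linarith : 0 ≤ Y u - Y t) (by linarith : 0 ≤ X q - X u)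
    have i3 := mul_pos (by linarith : 0 < X q - X u) (sub_pos.2 hy)
    have i4 := mul_pos (sub_pos.2 q1) (sub_pos.2 hx)
    refine F.conv t ht q hq v hv u hu ?_ ?_ ?_
    · rw [cr_cyc]; unfold cr; linarith
    · rw [cr_cyc]; unfold cr; linarith
    · rw [cr_cyc]; exact h5
  · rw [cr_rot] at hc
    have := disc_out F hu hv hw hx hy h1 h2 h3 t ht hc
    linarith
  · linarith

/-- A discarder of the edge from `u` to its nearest neighbour lies in the second or sixth cone
of `u`. -/
lemma Fr.step (F : Fr S A N X Y) {u v : P} (hu : u ∈ S) (hv : v ∈ S) (hx : X u < X v)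
    (hy : Y u < Y v) (hn : Nst S X Y u v) :
    A u v ∨ (∃ w ∈ S, X w < X u ∧ Y w < Y v ∧ X u + Y u < X w + Y w ∧ A w v) ∨
    (∃ w ∈ S, Y w < Y u ∧ X w < X v ∧ X u + Y u < X w + Y w ∧ A w v) := by
  rcases F.st1 u hu v hv hx hy hn with h | ⟨w, hw, w1, w2, w3, w4⟩
  · exact Or.inl h
  · right
    rcases lt_trichotomy (X w) (X u) with h | h | h
    · exact Or.inl ⟨w, hw, h, w2, w3, w4⟩
    · have := F.eq_of_X hw hu h
      subst this; linarith
    · rcases lt_trichotomy (Y w) (Y u) with h' | h' | h'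
      · exact Or.inr ⟨w, hw, h', w1, w3, w4⟩
      · have := F.eq_of_Y hw hu h'
        subst this; linarith
      · have := hn w hw h h'
        linarith

lemma Nst.swap {u v : P} (h : Nst S X Y u v) : Nst S Y X u v :=
  fun t ht h1 h2 => by linarith [h t ht h2 h1]

/-- Every edge of `Θ₆` is approximated in `ΘΘ₆` within a factor `4`. -/
lemma theta_conn (F : Fr S A N X Y) {u v : P} (hu : u ∈ S) (hv : v ∈ S)
    (hx : X u < X v) (hy : Y u < Y v) (hn : Nst S X Y u v) :
    Conn A N u v (4 * (X v + Y v - (X u + Y u))) := by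
  rcases F.step hu hv hx hy hn with h | ⟨w, hw, w1, w2, w3, w4⟩ | ⟨w, hw, w1, w2, w3, w4⟩
  · exact (Conn.of_adj h (F.N_eq hx hy).le).mono (by linarith)
  · exact (disc_conn F hu hv hw hx hy hn w1 w2 w3 w4).mono (by linarith)
  · exact (disc_conn F.swap hu hv hw hy hx hn.swap w1 w2 (by linarith) w4).mono (by linarith)

/-- The pair `p, v`, where the parallelogram of `u, v` is empty, `p` is a point of the cone of `u`
above `v`, and no point `t` of the cone of `v` below `u` has `Z t > Z p`, where `Z = X + Y`. -/
lemma above_conn (F : Fr S A N X Y) {u v p : P} (hu : u ∈ S) (hv : v ∈ S) (hp : p ∈ S)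
    (hx : X u < X v) (hy : Y u < Y v)
    (hpar : ∀ t ∈ S, X u < X t → Y u < Y t → X t < X v → Y t < Y v → False)
    (h1 : X u < X p) (h2 : Y v < Y p) (h3 : X p + Y p < X v + Y v)
    (hb : ∀ t ∈ S, Y t < Y u → X t < X v → X p + Y p < X t + Y t → False) :
    Conn A N p v (3 * (Y p - Y v) + 4 * (X v + Y v - (X p + Y p))) := by
  have O := F.rot300.os hp hv (by linarith) (by linarith)
    (above_RE F hu hv hp hx hy hpar h1 h2 h3 hb)
  refine (O.t12 (fun t ht hc => ?_) (fun t ht hc => ?_)).mono ?_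
  · rw [cr_rot300] at hc
    have := above_in F hu hv hp hx hy h1 h2 h3 t ht hc
    linarith
  · rw [cr_rot300] at hc
    have := above_out F hu hv hp hx hy h2 h3 t ht hc
    linarith
  · linarith

/-- A pair with empty parallelogram, with no point of the cone of `v` below `u` nearer to `v` than
`u`, and whose nearest point `p` in the cone of `u` is above `v`. -/
lemma one_side_conn (F : Fr S A N X Y) {u v p : P} (hu : u ∈ S) (hv : v ∈ S) (hp : p ∈ S)
    (hx : X u < X v) (hy : Y u < Y v)
    (hpar : ∀ t ∈ S, X u < X t → Y u < Y t → X t < X v → Y t < Y v → False)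
    (h1 : X u < X p) (h2 : Y v < Y p) (h3 : X p + Y p < X v + Y v) (hn : Nst S X Y u p)
    (hB : ∀ t ∈ S, Y t < Y u → X t < X v → X u + Y u < X t + Y t → False) :
    Conn A N u v (4 * (X v + Y v - (X u + Y u)) + 3 * (X v - X u)) := by
  have c1 : Conn A N u p (X p + Y p - (X u + Y u) + 3 * (Y p - Y u)) := by
    rcases F.step hu hp h1 (by linarith) hn with h | ⟨w, hw, w1, w2, w3, w4⟩ |
      ⟨w, hw, w1, w2, w3, w4⟩
    · exact (Conn.of_adj h (F.N_eq h1 (by linarith)).le).mono (by linarith)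
    · exact disc_conn F hu hp hw h1 (by linarith) hn w1 w2 w3 w4
    · exact (hB w hw w1 (by linarith) w3).elim
  refine (c1.trans (above_conn F hu hv hp hx hy hpar h1 h2 h3
    (fun t ht b1 b2 b3 => hB t ht b1 b2 (by linarith)))).mono ?_
  linarith

/-- A pair with empty parallelogram, whose nearest point `p` in the cone of `u` is above `v`, with a
point `q` in the sixth cone of `u`, where no point `t` of the cone of `v` below `u` has `Z t > Z p`
(with `Z = X + Y`). -/
lemma cross_easy (F : Fr S A N X Y) {u v p q : P} (hu : u ∈ S) (hv : v ∈ S) (hp : p ∈ S)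
    (hq : q ∈ S) (hx : X u < X v) (hy : Y u < Y v)
    (hpar : ∀ t ∈ S, X u < X t → Y u < Y t → X t < X v → Y t < Y v → False)
    (h1 : X u < X p) (h2 : Y v < Y p) (h3 : X p + Y p < X v + Y v) (hn : Nst S X Y u p)
    (q1 : Y q < Y u) (q2 : X u + Y u < X q + Y q)
    (hb : ∀ t ∈ S, Y t < Y u → X t < X v → X p + Y p < X t + Y t → False) :
    Conn A N u v (6 * (X v + Y v - (X u + Y u))) := by
  have c2 := above_conn F hu hv hp hx hy hpar h1 h2 h3 hb
  have hpy : Y u < Y p := by linarith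
  rcases F.step hu hp h1 hpy hn with h | ⟨w, hw, w1, w2, w3, w4⟩ | ⟨w, hw, w1, w2, w3, w4⟩
  · exact ((Conn.of_adj h (F.N_eq h1 hpy).le).trans c2).mono (by linarith)
  · exact ((disc_conn' F hu hp hw hq h1 hpy hn w1 w2 w3 w4 q1 q2).trans c2).mono (by linarith)
  · exact ((disc_conn F.swap hu hp hw hpy h1 hn.swap w1 w2 (by linarith) w4).trans c2).mono
      (by linarith)

end Discard

/-! ### Ladders -/

section Ladder
variable {P : Type*} {S : Finset P} {A : P → P → Prop} {N : P → P → ℝ} {X Y : P → ℝ} {u v : P}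

/-- The points of the band between `u` and `v` that are above both of them. -/
def BL (S : Finset P) (X Y : P → ℝ) (u v t : P) : Prop :=
  t ∈ S ∧ X u < X t ∧ X t < X v ∧ X u + Y u < X t + Y t ∧ X t + Y t < X v + Y v ∧
    Y u < Y t ∧ Y v < Y t

/-- The points of the band between `u` and `v` that are below both of them. -/
def BR (S : Finset P) (X Y : P → ℝ) (u v t : P) : Prop :=
  t ∈ S ∧ X u < X t ∧ X t < X v ∧ X u + Y u < X t + Y t ∧ X t + Y t < X v + Y v ∧
    Y t < Y u ∧ Y t < Y v

/-- A ladder: the points of the band `X u < X < X v`, `Z u < Z < Z v` (where `Z = X + Y`) form two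
chains, above and below both `u` and `v`, and each of the four nearest neighbours of `u` and `v`
towards the chains belongs to the band. -/
structure Lad (S : Finset P) (X Y : P → ℝ) (u v : P) : Prop where
  hu : u ∈ S
  hv : v ∈ S
  hx : X u < X v
  hz : X u + Y u < X v + Y v
  band : ∀ t ∈ S, X u < X t → X t < X v → X u + Y u < X t + Y t → X t + Y t < X v + Y v →
    BL S X Y u v t ∨ BR S X Y u v t
  guL : ∃ p, BL S X Y u v p ∧ ∀ t ∈ S, X u < X t → Y u < Y t → X p + Y p ≤ X t + Y t
  guR : ∃ p, BR S X Y u v p ∧ ∀ t ∈ S, Y t < Y u → X u + Y u < X t + Y t → X p ≤ X t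
  gvL : ∃ p, BL S X Y u v p ∧ ∀ t ∈ S, Y v < Y t → X t + Y t < X v + Y v → X t ≤ X p
  gvR : ∃ p, BR S X Y u v p ∧ ∀ t ∈ S, X t < X v → Y t < Y v → X t + Y t ≤ X p + Y p

lemma BL_hor (t : P) : BL S (fun p => X p + Y p) (fun p => -Y p) u v t ↔ BR S X Y u v t := by
  unfold BL BR
  constructor <;> rintro ⟨h0, h1, h2, h3, h4, h5, h6⟩ <;> refine ⟨h0, ?_, ?_, ?_, ?_, ?_, ?_⟩ <;>
    linarith

lemma BR_hor (t : P) : BR S (fun p => X p + Y p) (fun p => -Y p) u v t ↔ BL S X Y u v t := by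
  unfold BL BR
  constructor <;> rintro ⟨h0, h1, h2, h3, h4, h5, h6⟩ <;> refine ⟨h0, ?_, ?_, ?_, ?_, ?_, ?_⟩ <;>
    linarith

lemma BL_rot180 (t : P) : BL S (fun p => -X p) (fun p => -Y p) v u t ↔ BR S X Y u v t := by
  unfold BL BR
  constructor <;> rintro ⟨h0, h1, h2, h3, h4, h5, h6⟩ <;> refine ⟨h0, ?_, ?_, ?_, ?_, ?_, ?_⟩ <;>
    linarith

lemma BR_rot180 (t : P) : BR S (fun p => -X p) (fun p => -Y p) v u t ↔ BL S X Y u v t := by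
  unfold BL BR
  constructor <;> rintro ⟨h0, h1, h2, h3, h4, h5, h6⟩ <;> refine ⟨h0, ?_, ?_, ?_, ?_, ?_, ?_⟩ <;>
    linarith

lemma Lad.hor (H : Lad S X Y u v) : Lad S (fun p => X p + Y p) (fun p => -Y p) u v where
  hu := H.hu
  hv := H.hv
  hx := H.hz
  hz := by linarith [H.hx]
  band t ht h1 h2 h3 h4 := by
    rw [BL_hor, BR_hor]
    exact (H.band t ht (by linarith) (by linarith) h1 h2).symm
  guL := by
    obtain ⟨p, hp, h⟩ := H.guR
    refine ⟨p, (BL_hor p).2 hp, fun t ht h1 h2 => ?_⟩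
    have := h t ht (by linarith) (by linarith)
    linarith
  guR := by
    obtain ⟨p, hp, h⟩ := H.guL
    refine ⟨p, (BR_hor p).2 hp, fun t ht h1 h2 => ?_⟩
    have := h t ht (by linarith) (by linarith)
    linarith
  gvL := by
    obtain ⟨p, hp, h⟩ := H.gvR
    refine ⟨p, (BL_hor p).2 hp, fun t ht h1 h2 => ?_⟩
    have := h t ht (by linarith) (by linarith)
    linarith
  gvR := by
    obtain ⟨p, hp, h⟩ := H.gvL
    refine ⟨p, (BR_hor p).2 hp, fun t ht h1 h2 => ?_⟩
    have := h t ht (by linarith) (by linarith)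
    linarith

lemma Lad.rot180 (H : Lad S X Y u v) : Lad S (fun p => -X p) (fun p => -Y p) v u where
  hu := H.hv
  hv := H.hu
  hx := by linarith [H.hx]
  hz := by linarith [H.hz]
  band t ht h1 h2 h3 h4 := by
    rw [BL_rot180, BR_rot180]
    exact (H.band t ht (by linarith) (by linarith) (by linarith) (by linarith)).symm
  guL := by
    obtain ⟨p, hp, h⟩ := H.gvR
    refine ⟨p, (BL_rot180 p).2 hp, fun t ht h1 h2 => ?_⟩
    have := h t ht (by linarith) (by linarith)
    linarith
  guR := by
    obtain ⟨p, hp, h⟩ := H.gvL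
    refine ⟨p, (BR_rot180 p).2 hp, fun t ht h1 h2 => ?_⟩
    have := h t ht (by linarith) (by linarith)
    linarith
  gvL := by
    obtain ⟨p, hp, h⟩ := H.guR
    refine ⟨p, (BL_rot180 p).2 hp, fun t ht h1 h2 => ?_⟩
    have := h t ht (by linarith) (by linarith)
    linarith
  gvR := by
    obtain ⟨p, hp, h⟩ := H.guL
    refine ⟨p, (BR_rot180 p).2 hp, fun t ht h1 h2 => ?_⟩
    have := h t ht (by linarith) (by linarith)
    linarith

lemma cr_XZ (X Y : P → ℝ) (a b c : P) : cr X Y a b c =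
    (X b - X a) * (X c + Y c - (X a + Y a)) - (X b + Y b - (X a + Y a)) * (X c - X a) := by
  unfold cr; ring

lemma BL.left (H : Lad S X Y u v) {b : P} (hb : BL S X Y u v b) : 0 < cr X Y u v b := by
  obtain ⟨-, h1, h2, h3, h4, h5, h6⟩ := hb
  unfold cr
  rcases le_or_gt (Y v) (Y u) with h | h
  · have := mul_nonneg (sub_nonneg.2 h) (by linarith : 0 ≤ X b - X u)
    have := mul_pos (sub_pos.2 H.hx) (sub_pos.2 h5)
    linarith
  · have := mul_pos (sub_pos.2 h) (sub_pos.2 h2)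
    have := mul_pos (sub_pos.2 H.hx) (sub_pos.2 h6)
    linarith

/-- The upper chain is ordered the same way by `X` and by `Z = X + Y`. -/
lemma Lad.mono (F : Fr S A N X Y) (H : Lad S X Y u v) {a b : P} (ha : BL S X Y u v a)
    (hb : BL S X Y u v b) (h : X a < X b) : X a + Y a < X b + Y b := by
  by_contra hn
  have hl := hb.left H
  obtain ⟨hbS, b1, b2, b3, b4, -⟩ := hb
  obtain ⟨haS, a1, a2, a3, a4, -⟩ := ha
  have hne : X b + Y b < X a + Y a := lt_of_le_of_ne (not_lt.1 hn)
    (F.inj b hbS a haS (by rintro rfl; exact lt_irrefl _ h)).2.2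
  refine F.conv u H.hu v H.hv a haS b hbS hl ?_ ?_
  · rw [cr_XZ]
    have := mul_pos (sub_pos.2 b2) (sub_pos.2 hne)
    have := mul_pos (sub_pos.2 h) (sub_pos.2 b4)
    linarith
  · rw [cr_flip, cr_XZ]
    have := mul_pos (sub_pos.2 h) (sub_pos.2 a3)
    have := mul_pos (sub_pos.2 hne) (sub_pos.2 a1)
    linarith

lemma Lad.mono_iff (F : Fr S A N X Y) (H : Lad S X Y u v) {a b : P} (ha : BL S X Y u v a)
    (hb : BL S X Y u v b) : X a + Y a < X b + Y b ↔ X a < X b := by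
  refine ⟨fun h => ?_, H.mono F ha hb⟩
  rcases lt_trichotomy (X a) (X b) with h' | h' | h'
  · exact h'
  · have := F.eq_of_X ha.1 hb.1 h'
    subst this; exact absurd h (lt_irrefl _)
  · linarith [H.mono F hb ha h']

lemma Lad.mono_iffR (F : Fr S A N X Y) (H : Lad S X Y u v) {a b : P} (ha : BR S X Y u v a)
    (hb : BR S X Y u v b) : X a + Y a < X b + Y b ↔ X a < X b := by
  have := H.hor.mono_iff F.hor ((BL_hor a).2 ha) ((BL_hor b).2 hb)
  constructor
  · intro h
    have := this.2 h
    linarith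
  · intro h
    exact this.1 (by linarith)

/-- The upper chain is concave, so it has no valley. -/
lemma Lad.valley (F : Fr S A N X Y) (H : Lad S X Y u v) {s t w : P} (hs : BL S X Y u v s)
    (ht : BL S X Y u v t) (hw : BL S X Y u v w) (h1 : X s < X t) (h2 : X t < X w)
    (h3 : Y t < Y s) (h4 : Y t < Y w) : False := by
  have fan : ∀ a b, BL S X Y u v a → BL S X Y u v b → X a < X b → 0 < cr X Y u b a := by
    intro a b ha hb hab
    by_contra hc
    rcases F.cr_ne H.hu hb.1 ha.1 (by rintro rfl; exact lt_irrefl _ hb.2.1)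
      (by rintro rfl; exact lt_irrefl _ hab) (by rintro rfl; exact lt_irrefl _ ha.2.1) with h | h
    · exact F.fan H.hu H.hv hb.1 ha.1 (hb.left H) (ha.left H) h 1 0 (X b) (by linarith [hb.2.1])
        (by linarith) (by linarith) (by linarith [hb.2.2.1])
    · exact hc h
  refine F.conv u H.hu w hw.1 s hs.1 t ht.1 (fan t w ht hw h2) ?_ ?_
  · have e : cr X Y w s t = (X w - X t) * (Y s - Y t) + (X t - X s) * (Y w - Y t) := by
      unfold cr; ring
    rw [e]
    have := mul_pos (sub_pos.2 h2) (sub_pos.2 h3)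
    have := mul_pos (sub_pos.2 h1) (sub_pos.2 h4)
    linarith
  · rw [cr_cyc, cr_cyc]; exact fan s t hs ht h1

/-- The upper chain rises up to its highest point. -/
lemma Lad.up (F : Fr S A N X Y) (H : Lad S X Y u v) {m s t : P} (hm : BL S X Y u v m)
    (hmax : ∀ b, BL S X Y u v b → Y b ≤ Y m) (hs : BL S X Y u v s) (ht : BL S X Y u v t)
    (h : X s < X t) (h' : X t ≤ X m) : Y s < Y t := by
  have hne : s ≠ t := by rintro rfl; exact lt_irrefl _ h
  refine lt_of_le_of_ne ?_ (F.inj s hs.1 t ht.1 hne).2.1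
  by_contra hn
  rcases eq_or_lt_of_le h' with h2 | h2
  · have := F.eq_of_X ht.1 hm.1 h2
    subst this
    exact hn (hmax s hs)
  · have h3 : Y t < Y m := lt_of_le_of_ne (hmax t ht)
      (F.inj t ht.1 m hm.1 (by rintro rfl; exact lt_irrefl _ h2)).2.1
    exact H.valley F hs ht hm h h2 (not_le.1 hn) h3

/-- The upper chain falls after its highest point. -/
lemma Lad.down (F : Fr S A N X Y) (H : Lad S X Y u v) {m s t : P} (hm : BL S X Y u v m)
    (hmax : ∀ b, BL S X Y u v b → Y b ≤ Y m) (hs : BL S X Y u v s) (ht : BL S X Y u v t)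
    (h : X s < X t) (h' : X m ≤ X s) : Y t < Y s := by
  have hiff : ∀ b, BL S (fun p => -(X p + Y p)) (fun p => - -Y p) v u b ↔ BL S X Y u v b :=
    fun b => (BL_rot180 b).trans (BR_hor b)
  have hms : X m + Y m ≤ X s + Y s := by
    rcases eq_or_lt_of_le h' with h2 | h2
    · rw [F.eq_of_X hm.1 hs.1 h2]
    · exact (H.mono F hm hs h2).le
  have := H.hor.rot180.up F.hor.rot180 ((hiff m).2 hm)
    (fun b hb => by have := hmax b ((hiff b).1 hb); linarith) ((hiff t).2 ht) ((hiff s).2 hs)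
    (by linarith [H.mono F hs ht h]) (by linarith)
  linarith

/-- The lower chain falls up to its lowest point. -/
lemma Lad.downR (F : Fr S A N X Y) (H : Lad S X Y u v) {m s t : P} (hm : BR S X Y u v m)
    (hmin : ∀ b, BR S X Y u v b → Y m ≤ Y b) (hs : BR S X Y u v s) (ht : BR S X Y u v t)
    (h : X s < X t) (h' : X t ≤ X m) : Y t < Y s := by
  have hms : X t + Y t ≤ X m + Y m := by
    rcases eq_or_lt_of_le h' with h2 | h2
    · rw [F.eq_of_X ht.1 hm.1 h2]
    · exact ((H.mono_iffR F ht hm).2 h2).le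
  have := H.hor.up F.hor ((BL_hor m).2 hm)
    (fun b hb => by have := hmin b ((BL_hor b).1 hb); linarith) ((BL_hor s).2 hs)
    ((BL_hor t).2 ht) ((H.mono_iffR F hs ht).2 h) hms
  linarith

/-- A rising step of the upper chain: either it is short in the graph, or its end is adjacent to
a point of the lower chain. -/
lemma Lad.rise (F : Fr S A N X Y) (H : Lad S X Y u v) {s t : P}
    (hs : s = u ∨ BL S X Y u v s) (ht : BL S X Y u v t) (hst : X s < X t)
    (hnext : ∀ b, BL S X Y u v b → X s < X b → X t ≤ X b) (hy : Y s < Y t) :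
    Conn A N s t (3 * ((X t - X s) + (X t + Y t - (X s + Y s)))) ∨
    ∃ c, BR S X Y u v c ∧ X c < X t ∧ X s + Y s < X c + Y c ∧ A c t := by
  have hsS : s ∈ S := by rcases hs with rfl | hs; exacts [H.hu, hs.1]
  have hn : Nst S X Y s t := by
    rcases hs with rfl | hs
    · obtain ⟨p, hp, hp'⟩ := H.guL
      have h1 := hnext p hp hp.2.1
      rcases eq_or_lt_of_le h1 with h2 | h2
      · rw [F.eq_of_X ht.1 hp.1 h2]; exact hp'
      · have := H.mono F ht hp h2
        have := hp' t ht.1 hst hy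
        linarith
    · intro r hr h1 h2
      by_contra h3
      have ht' := ht
      obtain ⟨-, t1, t2, t3, t4, t5, t6⟩ := ht'
      have hs' := hs
      obtain ⟨-, s1, s2, s3, s4, s5, s6⟩ := hs'
      rcases H.band r hr (by linarith) (by linarith) (by linarith) (by linarith) with h | h
      · have h4 := hnext r h h1
        rcases eq_or_lt_of_le h4 with h5 | h5
        · have := F.eq_of_X ht.1 hr h5
          subst this; exact h3 le_rfl
        · have := H.mono F ht h h5
          linarith
      · linarith [h.2.2.2.2.2.1]
  obtain ⟨q, hq, q1, q2⟩ : ∃ q ∈ S, Y q < Y s ∧ X s + Y s < X q + Y q := by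
    rcases hs with rfl | hs
    · obtain ⟨q, hq, -⟩ := H.guR
      exact ⟨q, hq.1, hq.2.2.2.2.2.1, hq.2.2.2.1⟩
    · exact ⟨v, H.hv, hs.2.2.2.2.2.2, hs.2.2.2.2.1⟩
  rcases F.step hsS ht.1 hst hy hn with h | ⟨w, hw, w1, w2, w3, w4⟩ | ⟨w, hw, w1, w2, w3, w4⟩
  · left
    exact (Conn.of_adj h (F.N_eq hst hy).le).mono (by linarith)
  · left
    exact (disc_conn' F hsS ht.1 hw hq hst hy hn w1 w2 w3 w4 q1 q2).mono (by linarith)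
  · right
    have hus : X u ≤ X s ∧ X u + Y u ≤ X s + Y s := by
      rcases hs with rfl | hs
      · exact ⟨le_rfl, le_rfl⟩
      · exact ⟨hs.2.1.le, hs.2.2.2.1.le⟩
    rcases H.band w hw (by linarith) (by linarith [ht.2.2.1]) (by linarith)
      (by linarith [ht.2.2.2.2.1]) with h | h
    · have := hnext w h (by linarith)
      linarith
    · exact ⟨w, h, w2, w3, w4⟩

lemma Lad.fall (F : Fr S A N X Y) (H : Lad S X Y u v) {s t : P}
    (hs : BL S X Y u v s) (ht : t = v ∨ BL S X Y u v t) (hst : X s + Y s < X t + Y t)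
    (hnext : ∀ b, BL S X Y u v b → X b + Y b < X t + Y t → X b + Y b ≤ X s + Y s)
    (hy : Y t < Y s) :
    Conn A N s t (3 * ((X t - X s) + (X t + Y t - (X s + Y s)))) ∨
    ∃ c, BR S X Y u v c ∧ X s + Y s < X c + Y c ∧ X c < X t ∧ A s c := by
  have hiff : ∀ b, BL S (fun p => -(X p + Y p)) (fun p => - -Y p) v u b ↔ BL S X Y u v b :=
    fun b => (BL_rot180 b).trans (BR_hor b)
  have hiffR : ∀ b, BR S (fun p => -(X p + Y p)) (fun p => - -Y p) v u b ↔ BR S X Y u v b :=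
    fun b => (BR_rot180 b).trans (BL_hor b)
  rcases H.hor.rot180.rise F.hor.rot180 (s := t) (t := s)
    (ht.imp_right (hiff t).2) ((hiff s).2 hs) (by linarith)
    (fun b hb h => by have := hnext b ((hiff b).1 hb) (by linarith); linarith)
    (by linarith) with h | ⟨c, hc, c1, c2, c3⟩
  · left
    exact (F.conn_symm h).mono (by linarith)
  · right
    exact ⟨c, (hiffR c).1 hc, by linarith, by linarith, F.symm _ _ c3⟩

lemma Lad.fallR (F : Fr S A N X Y) (H : Lad S X Y u v) {s t : P}
    (hs : s = u ∨ BR S X Y u v s) (ht : BR S X Y u v t) (hst : X s + Y s < X t + Y t)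
    (hnext : ∀ b, BR S X Y u v b → X s + Y s < X b + Y b → X t + Y t ≤ X b + Y b)
    (hy : Y t < Y s) :
    Conn A N s t (3 * ((X t - X s) + (X t + Y t - (X s + Y s)))) ∨
    ∃ c, BL S X Y u v c ∧ X c + Y c < X t + Y t ∧ X s < X c ∧ A c t := by
  rcases H.hor.rise F.hor (hs.imp_right (BL_hor s).2) ((BL_hor t).2 ht) hst
    (fun b hb h => hnext b ((BL_hor b).1 hb) h) (by linarith) with h | ⟨c, hc, c1, c2, c3⟩
  · left
    exact h.mono (by linarith)
  · right
    exact ⟨c, (BR_hor c).1 hc, c1, by linarith, c3⟩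

/-- An edge `em` from the lower to the upper chain: `m` is nearest to `e` in its cone, since a
nearer point of the lower chain would be a local maximum between `e` and `g`; a discarder of `e → m`
would be a point of one of the chains excluded by `h1` or `h2`. -/
lemma Lad.cross (F : Fr S A N X Y) (H : Lad S X Y u v) {e m g l : P} (he : BR S X Y u v e)
    (hm : BL S X Y u v m) (hg : BR S X Y u v g) (hl : BL S X Y u v l) (hem : X e < X m)
    (h1 : ∀ r, BR S X Y u v r → X e < X r → X m ≤ X r)
    (h2 : ∀ b, BL S X Y u v b → X b < X m → X b + Y b < X e + Y e)
    (g1 : X m + Y m < X g + Y g) (g2 : Y g < Y e) (l1 : X l + Y l < X e + Y e)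
    (l2 : Y m < Y l) : A e m := by
  have hR : ∀ a b, BR S X Y u v a → BR S X Y u v b →
    (X a + Y a < X b + Y b ↔ X a < X b) := fun a b ha hb => H.mono_iffR F ha hb
  have he' := he
  have hm' := hm
  have hg' := hg
  have hl' := hl
  obtain ⟨heS, e1, e2, e3, e4, e5, e6⟩ := he'
  obtain ⟨hmS, m1, m2, m3, m4, m5, m6⟩ := hm'
  obtain ⟨hgS, g1', g2', -⟩ := hg'
  obtain ⟨hlS, l1', -⟩ := hl'
  have hn : Nst S X Y e m := by
    intro r hr r1 r2
    by_contra r3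
    rcases H.band r hr (by linarith) (by linarith) (by linarith) (by linarith) with h | h
    · have := h2 r h ((H.mono_iff F h hm).1 (by linarith))
      linarith
    · have h4 : X r + Y r < X g + Y g := by linarith
      refine H.hor.valley F.hor ((BL_hor e).2 he) ((BL_hor r).2 h) ((BL_hor g).2 hg) ?_ h4 ?_ ?_
      · linarith
      · linarith
      · linarith
  rcases F.step heS hmS hem (by linarith) hn with h | ⟨w, hw, w1, w2, w3, w4⟩ |
    ⟨w, hw, w1, w2, w3, w4⟩
  · exact h
  · exfalso
    rcases H.band w hw (by linarith) (by linarith) (by linarith) (by linarith) with h | h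
    · have := h2 w h (by linarith)
      linarith
    · have := (hR e w he h).1 w3
      linarith
  · exfalso
    rcases H.band w hw (by linarith) (by linarith) (by linarith) (by linarith) with h | h
    · linarith [h.2.2.2.2.2.1]
    · have := h1 w h (by linarith)
      linarith

end Ladder

section LadderPath
variable {P : Type*} {S : Finset P} {A : P → P → Prop} {N : P → P → ℝ} {X Y : P → ℝ} {u v : P}

/-- `t` is reached from `u` at cost three times `ΔX + ΔZ`, which is additive along dominance
chains. -/
def Rch (A : P → P → Prop) (N : P → P → ℝ) (X Y : P → ℝ) (u t : P) : Prop :=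
  Conn A N u t (3 * ((X t - X u) + (X t + Y t - (X u + Y u))))

lemma Rch.step {s t : P} (h : Rch A N X Y u s) (h' : Rch A N X Y s t) : Rch A N X Y u t :=
  (Conn.trans h h').mono (by linarith)

lemma Rch.adj (F : Fr S A N X Y) {s t : P} (h : Rch A N X Y u s) (h' : A s t) (hx : X s < X t)
    (hz : X s + Y s < X t + Y t) : Rch A N X Y u t :=
  h.step ((Conn.of_adj h' (F.N_le hx hz)).mono (by linarith))

lemma exists_max {P : Type*} (S : Finset P) (Q : P → Prop) (f : P → ℝ) (hQ : ∀ t, Q t → t ∈ S)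
    (h : ∃ t, Q t) : ∃ m, Q m ∧ ∀ t, Q t → f t ≤ f m := by
  classical
  obtain ⟨t, ht⟩ := h
  obtain ⟨m, hm, hmax⟩ := Finset.exists_max_image (S.filter Q) f ⟨t, by simp [hQ t ht, ht]⟩
  simp only [Finset.mem_filter] at hm hmax
  exact ⟨m, hm.2, fun t ht => hmax t ⟨hQ t ht, ht⟩⟩

lemma exists_min {P : Type*} (S : Finset P) (Q : P → Prop) (f : P → ℝ) (hQ : ∀ t, Q t → t ∈ S)
    (h : ∃ t, Q t) : ∃ m, Q m ∧ ∀ t, Q t → f m ≤ f t := by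
  obtain ⟨m, hm, h'⟩ := exists_max S Q (fun t => -f t) hQ h
  exact ⟨m, hm, fun t ht => neg_le_neg_iff.1 (h' t ht)⟩

/-- Everything up to the highest point of the upper chain is reachable, if that point comes before
the lowest point of the lower chain. -/
lemma Lad.early (F : Fr S A N X Y) (H : Lad S X Y u v) {a b : P} (ha : BL S X Y u v a)
    (hamax : ∀ c, BL S X Y u v c → Y c ≤ Y a) (hb : BR S X Y u v b)
    (hbmin : ∀ c, BR S X Y u v c → Y b ≤ Y c) (hab : X a < X b) :
    ∀ n : ℕ, ∀ t, (S.filter fun r => X r < X t).card < n →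
      (BL S X Y u v t ∧ X t ≤ X a) ∨ (BR S X Y u v t ∧ X t < X a) → Rch A N X Y u t := by
  intro n
  induction n with
  | zero => intro t h; exact absurd h (Nat.not_lt_zero _)
  | succ n ih =>
    intro t hcard ht
    have ih' : ∀ s ∈ S, X s < X t →
        (BL S X Y u v s ∧ X s ≤ X a) ∨ (BR S X Y u v s ∧ X s < X a) → Rch A N X Y u s := by
      intro s hs hst
      refine ih s (lt_of_lt_of_le (Finset.card_lt_card ?_) (Nat.lt_succ_iff.1 hcard))
      refine ⟨fun r hr => ?_, fun hsub => ?_⟩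
      · simp only [Finset.mem_filter] at hr ⊢
        exact ⟨hr.1, hr.2.trans hst⟩
      · have := hsub (Finset.mem_filter.2 ⟨hs, hst⟩)
        simp at this
    have h0 : Rch A N X Y u u := Conn.nil _ _ (by simp)
    rcases ht with ⟨ht, hta⟩ | ⟨ht, hta⟩
    · obtain ⟨s, ⟨hs, hst⟩, hsmax⟩ := exists_max S
        (fun s => (s = u ∨ BL S X Y u v s) ∧ X s < X t) X
        (by rintro s ⟨rfl | h, -⟩; exacts [H.hu, h.1]) ⟨u, Or.inl rfl, ht.2.1⟩
      have hnext : ∀ b, BL S X Y u v b → X s < X b → X t ≤ X b := by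
        intro b hb hsb
        by_contra hc
        exact absurd (hsmax b ⟨Or.inr hb, not_le.1 hc⟩) (not_le.2 hsb)
      have hy : Y s < Y t := by
        rcases hs with rfl | hs
        · exact ht.2.2.2.2.2.1
        · exact H.up F ha hamax hs ht hst hta
      have hrs : Rch A N X Y u s := by
        rcases hs with rfl | hs
        · exact h0
        · exact ih' s hs.1 hst (Or.inl ⟨hs, by linarith⟩)
      rcases H.rise F hs ht hst hnext hy with h | ⟨c, hc, c1, c2, c3⟩
      · exact hrs.step h
      · have hrc := ih' c hc.1 c1 (Or.inr ⟨hc, by linarith⟩)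
        exact hrc.adj F c3 c1 (by linarith [hc.2.2.2.2.2.1, ht.2.2.2.2.2.1])
    · obtain ⟨s, ⟨hs, hst⟩, hsmax⟩ := exists_max S
        (fun s => (s = u ∨ BR S X Y u v s) ∧ X s < X t) X
        (by rintro s ⟨rfl | h, -⟩; exacts [H.hu, h.1]) ⟨u, Or.inl rfl, ht.2.1⟩
      have hst' : X s + Y s < X t + Y t := by
        rcases hs with rfl | hs
        · exact ht.2.2.2.1
        · exact (H.mono_iffR F hs ht).2 hst
      have hnext : ∀ b, BR S X Y u v b → X s + Y s < X b + Y b → X t + Y t ≤ X b + Y b := by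
        intro b hb hsb
        by_contra hc
        have h1 := (H.mono_iffR F hb ht).1 (not_le.1 hc)
        have h2 := hsmax b ⟨Or.inr hb, h1⟩
        rcases hs with rfl | hs
        · linarith [hb.2.1]
        · have := (H.mono_iffR F hs hb).1 hsb
          linarith
      have hy : Y t < Y s := by
        rcases hs with rfl | hs
        · exact ht.2.2.2.2.2.1
        · exact H.downR F hb hbmin hs ht hst (by linarith)
      have hrs : Rch A N X Y u s := by
        rcases hs with rfl | hs
        · exact h0
        · exact ih' s hs.1 hst (Or.inr ⟨hs, by linarith⟩)
      rcases H.fallR F hs ht hst' hnext hy with h | ⟨c, hc, c1, c2, c3⟩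
      · exact hrs.step h
      · have hct : X c < X t := by linarith [hc.2.2.2.2.2.1, ht.2.2.2.2.2.1]
        have hrc := ih' c hc.1 hct (Or.inl ⟨hc, by linarith⟩)
        exact hrc.adj F c3 hct c1

/-- Assume that `v` is not reached. Let `l` be the last reachable point of the upper chain, `m` its
successor, `c` the reachable point of the lower chain that discards the step from `l` to `m`, and `t`
the first unreachable point of the lower chain after `c`. Then `Lad.cross` gives an edge from a
reachable point `e` of the lower chain to `m`, a contradiction. -/
lemma Lad.conn_aux (F : Fr S A N X Y) (H : Lad S X Y u v) {a b : P} (ha : BL S X Y u v a)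
    (hamax : ∀ c, BL S X Y u v c → Y c ≤ Y a) (hb : BR S X Y u v b)
    (hbmin : ∀ c, BR S X Y u v c → Y b ≤ Y c) (hab : X a < X b) : Rch A N X Y u v := by
  classical
  by_contra hv
  have hra : Rch A N X Y u a :=
    H.early F ha hamax hb hbmin hab _ a (Nat.lt_succ_self _) (Or.inl ⟨ha, le_rfl⟩)
  -- By the half-turn symmetry, every point from `b` on is joined to `v`, so it is unreachable.
  have hlate : ∀ t, (BR S X Y u v t ∧ X b ≤ X t) ∨ (BL S X Y u v t ∧ X b < X t) →
      ¬ Rch A N X Y u t := by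
    intro t ht hr
    apply hv
    have := H.rot180.early F.rot180 ((BL_rot180 b).2 hb)
      (fun c hc => by have := hbmin c ((BL_rot180 c).1 hc); linarith) ((BR_rot180 a).2 ha)
      (fun c hc => by have := hamax c ((BR_rot180 c).1 hc); linarith) (by linarith) _ t
      (Nat.lt_succ_self _)
      (ht.imp (fun h => ⟨(BL_rot180 t).2 h.1, by linarith [h.2]⟩)
        (fun h => ⟨(BR_rot180 t).2 h.1, by linarith [h.2]⟩))
    exact hr.step ((F.conn_symm this).mono (by linarith))
  obtain ⟨l, ⟨hl, hrl⟩, hlmax⟩ := exists_max S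
    (fun s => BL S X Y u v s ∧ Rch A N X Y u s) X (fun t h => h.1.1) ⟨a, ha, hra⟩
  have hal : X a ≤ X l := hlmax a ⟨ha, hra⟩
  -- The successor `m` of `l` in the upper chain, completed by `v`.
  obtain ⟨m, ⟨hm, hlm⟩, hmmin⟩ := exists_min S
    (fun s => (s = v ∨ BL S X Y u v s) ∧ X l < X s) X
    (by rintro s ⟨rfl | h, -⟩; exacts [H.hv, h.1]) ⟨v, Or.inl rfl, hl.2.2.1⟩
  have hmr : ¬ Rch A N X Y u m := by
    rcases hm with rfl | hm
    · exact hv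
    · intro h
      exact absurd (hlmax m ⟨hm, h⟩) (not_le.2 hlm)
  have hlm' : X l + Y l < X m + Y m := by
    rcases hm with rfl | hm
    · exact hl.2.2.2.2.1
    · exact H.mono F hl hm hlm
  have hyml : Y m < Y l := by
    rcases hm with rfl | hm
    · exact hl.2.2.2.2.2.2
    · exact H.down F ha hamax hl hm hlm hal
  have hle : ∀ c, BL S X Y u v c → X c < X m → X c + Y c ≤ X l + Y l := by
    intro c hc h
    rcases lt_trichotomy (X c) (X l) with h' | h' | h'
    · exact (H.mono F hc hl h').le
    · rw [F.eq_of_X hc.1 hl.1 h']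
    · exact absurd (hmmin c ⟨Or.inr hc, h'⟩) (not_le.2 h)
  have hmnext : ∀ c, BL S X Y u v c → X c + Y c < X m + Y m → X c + Y c ≤ X l + Y l := by
    intro c hc h
    rcases hm with rfl | hm
    · exact hle c hc hc.2.2.1
    · exact hle c hc ((H.mono_iff F hc hm).1 h)
  rcases H.fall F hl hm hlm' hmnext hyml with h | ⟨c, hc, c1, c2, c3⟩
  · exact hmr (hrl.step h)
  have hlc : X l < X c := by linarith [hc.2.2.2.2.2.1, hl.2.2.2.2.2.1]
  have hrc : Rch A N X Y u c := hrl.adj F c3 hlc c1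
  have hcb : X c < X b := by
    by_contra h
    exact hlate c (Or.inl ⟨hc, not_lt.1 h⟩) hrc
  -- The first unreachable point `t` of the lower chain after `c`, and its predecessor `k`.
  obtain ⟨t, ⟨ht, hct, htr⟩, htmin⟩ := exists_min S
    (fun s => BR S X Y u v s ∧ X c < X s ∧ ¬ Rch A N X Y u s) X (fun t h => h.1.1)
    ⟨b, hb, hcb, hlate b (Or.inl ⟨hb, le_rfl⟩)⟩
  have htb : X t ≤ X b := htmin b ⟨hb, hcb, hlate b (Or.inl ⟨hb, le_rfl⟩)⟩
  have hreach : ∀ s, BR S X Y u v s → X c ≤ X s → X s < X t → Rch A N X Y u s := by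
    intro s hs h1 h2
    rcases eq_or_lt_of_le h1 with h3 | h3
    · rw [← F.eq_of_X hc.1 hs.1 h3]; exact hrc
    · by_contra h
      exact absurd (htmin s ⟨hs, h3, h⟩) (not_le.2 h2)
  obtain ⟨k, ⟨hk, hkt⟩, hkmax⟩ := exists_max S
    (fun s => BR S X Y u v s ∧ X s < X t) X (fun t h => h.1.1) ⟨c, hc, hct⟩
  have hck : X c ≤ X k := hkmax c ⟨hc, hct⟩
  have hknext : ∀ r, BR S X Y u v r → X k + Y k < X r + Y r → X t + Y t ≤ X r + Y r := by
    intro r hr h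
    by_contra h'
    have h1 := (H.mono_iffR F hr ht).1 (not_le.1 h')
    have h2 := (H.mono_iffR F hk hr).1 h
    exact absurd (hkmax r ⟨hr, h1⟩) (not_le.2 h2)
  rcases H.fallR F (Or.inr hk) ht ((H.mono_iffR F hk ht).2 hkt) hknext
    (H.downR F hb hbmin hk ht hkt htb) with h | ⟨d, hd, d1, d2, d3⟩
  · exact htr ((hreach k hk hck hkt).step h)
  have hdt : X d < X t := by linarith [hd.2.2.2.2.2.1, ht.2.2.2.2.2.1]
  have hmd : X m ≤ X d := hmmin d ⟨Or.inr hd, by linarith⟩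
  have hm' : BL S X Y u v m := by
    rcases hm with rfl | hm
    · linarith [hd.2.2.1]
    · exact hm
  have hmd' : X m + Y m ≤ X d + Y d := by
    rcases eq_or_lt_of_le hmd with h | h
    · rw [F.eq_of_X hm'.1 hd.1 h]
    · exact (H.mono F hm' hd h).le
  obtain ⟨e, ⟨he, hce, hek, hem⟩, hemax⟩ := exists_max S
    (fun s => BR S X Y u v s ∧ X c ≤ X s ∧ X s ≤ X k ∧ X s < X m) X (fun t h => h.1.1)
    ⟨c, hc, le_rfl, hck, c2⟩
  have hce' : X c + Y c ≤ X e + Y e := by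
    rcases eq_or_lt_of_le hce with h | h
    · rw [F.eq_of_X hc.1 he.1 h]
    · exact ((H.mono_iffR F hc he).2 h).le
  have hA : A e m := by
    refine H.cross F he hm' ht hl hem (fun r hr her => ?_) (fun r hr hrm => ?_) (by linarith)
      (H.downR F hb hbmin he ht (by linarith) htb) (by linarith) hyml
    · by_contra h
      rcases le_or_gt (X r) (X k) with h1 | h1
      · exact absurd (hemax r ⟨hr, by linarith, h1, not_le.1 h⟩) (not_le.2 her)
      · exact absurd (hkmax r ⟨hr, by linarith⟩) (not_le.2 h1)
    · linarith [hle r hr hrm]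
  exact hmr ((hreach e he hce (by linarith)).adj F hA hem
    (by linarith [he.2.2.2.2.2.1, hm'.2.2.2.2.2.1]))

/-- In a ladder, `v` is reached from `u`; the two orders of the highest point of the upper chain and
the lowest point of the lower chain are exchanged by a reflection. -/
lemma Lad.conn (F : Fr S A N X Y) (H : Lad S X Y u v) : Rch A N X Y u v := by
  obtain ⟨a, ha, hamax⟩ := exists_max S (BL S X Y u v) Y (fun t h => h.1)
    (by obtain ⟨p, hp, -⟩ := H.guL; exact ⟨p, hp⟩)
  obtain ⟨b, hb, hbmin⟩ := exists_min S (BR S X Y u v) Y (fun t h => h.1)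
    (by obtain ⟨p, hp, -⟩ := H.guR; exact ⟨p, hp⟩)
  rcases lt_or_ge (X a) (X b) with h | h
  · exact H.conn_aux F ha hamax hb hbmin h
  · have := H.hor.conn_aux F.hor ((BL_hor b).2 hb)
      (fun c hc => by have := hbmin c ((BL_hor c).1 hc); linarith) ((BR_hor a).2 ha)
      (fun c hc => by have := hamax c ((BR_hor c).1 hc); linarith)
      (by linarith [ha.2.2.2.2.2.1, hb.2.2.2.2.2.1])
    exact Conn.mono this (by linarith)

end LadderPath

/-! ### Arbitrary pairs -/

section Pairs
variable {P : Type*} {S : Finset P} {A : P → P → Prop} {N : P → P → ℝ} {X Y : P → ℝ} {u v : P}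

/-- A pair with empty parallelogram, whose nearest point `p` in the cone of `u` is above `v`,
and with some point `q` in the sixth cone of `u`. Either `cross_easy` applies or the pair spans a
ladder. -/
lemma cross_conn (F : Fr S A N X Y) {p q : P} (hu : u ∈ S) (hv : v ∈ S) (hp : p ∈ S)
    (hq : q ∈ S) (hx : X u < X v) (hy : Y u < Y v)
    (hpar : ∀ t ∈ S, X u < X t → Y u < Y t → X t < X v → Y t < Y v → False)
    (h1 : X u < X p) (h2 : Y v < Y p) (h3 : X p + Y p < X v + Y v) (hn : Nst S X Y u p)
    (q1 : Y q < Y u) (q2 : X u + Y u < X q + Y q) :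
    Conn A N u v (6 * (X v + Y v - (X u + Y u))) := by
  by_cases hb : ∃ t ∈ S, Y t < Y u ∧ X t < X v ∧ X p + Y p < X t + Y t
  swap
  · exact cross_easy F hu hv hp hq hx hy hpar h1 h2 h3 hn q1 q2
      (fun t ht b1 b2 b3 => hb ⟨t, ht, b1, b2, b3⟩)
  obtain ⟨τ, hτ, τ1, τ2, τ3⟩ := hb
  have H : Lad S X Y u v := by
    refine ⟨hu, hv, hx, by linarith, fun t ht b1 b2 b3 b4 => ?_, ?_, ?_, ?_, ?_⟩
    · rcases lt_trichotomy (Y t) (Y u) with h | h | h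
      · exact Or.inr ⟨ht, b1, b2, b3, b4, h, by linarith⟩
      · have := F.eq_of_Y ht hu h
        subst this; linarith
      · rcases lt_trichotomy (Y t) (Y v) with h' | h' | h'
        · exact (hpar t ht b1 h b2 h').elim
        · have := F.eq_of_Y ht hv h'
          subst this; linarith
        · exact Or.inl ⟨ht, b1, b2, b3, b4, h, h'⟩
    · refine ⟨p, ⟨hp, ?_, ?_, ?_, ?_, ?_, ?_⟩, hn⟩ <;> linarith
    · obtain ⟨m, ⟨hm, m1, m2⟩, hmin⟩ := exists_min S
        (fun t => t ∈ S ∧ Y t < Y u ∧ X u + Y u < X t + Y t) X (fun t h => h.1)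
        ⟨τ, hτ, τ1, by linarith⟩
      have := hmin τ ⟨hτ, τ1, by linarith⟩
      refine ⟨m, ⟨hm, ?_, ?_, ?_, ?_, ?_, ?_⟩, fun t ht h h' => hmin t ⟨ht, h, h'⟩⟩ <;> linarith
    · obtain ⟨m, ⟨hm, m1, m2⟩, hmax⟩ := exists_max S
        (fun t => t ∈ S ∧ Y v < Y t ∧ X t + Y t < X v + Y v) X (fun t h => h.1)
        ⟨p, hp, h2, h3⟩
      have := hmax p ⟨hp, h2, h3⟩
      refine ⟨m, ⟨hm, ?_, ?_, ?_, ?_, ?_, ?_⟩, fun t ht h h' => hmax t ⟨ht, h, h'⟩⟩ <;> linarith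
    · obtain ⟨m, ⟨hm, m1, m2⟩, hmax⟩ := exists_max S
        (fun t => t ∈ S ∧ X t < X v ∧ Y t < Y v) (fun t => X t + Y t) (fun t h => h.1)
        ⟨τ, hτ, τ2, by linarith⟩
      have := hmax τ ⟨hτ, τ2, by linarith⟩
      have hmu : Y m < Y u := by
        rcases lt_trichotomy (Y m) (Y u) with h | h | h
        · exact h
        · have := F.eq_of_Y hm hu h
          subst this; linarith
        · exact (hpar m hm (by linarith) h m1 m2).elim
      refine ⟨m, ⟨hm, ?_, ?_, ?_, ?_, ?_, ?_⟩, fun t ht h h' => hmax t ⟨ht, h, h'⟩⟩ <;> linarith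
  exact Conn.mono (H.conn F) (by linarith)

/-- A pair with empty parallelogram, where neither point is nearest to the other and the nearest
point `p` in the cone of `u` is above `v`. -/
lemma above_pair (F : Fr S A N X Y) {p p' : P} (hu : u ∈ S) (hv : v ∈ S) (hp : p ∈ S)
    (hp' : p' ∈ S) (hx : X u < X v) (hy : Y u < Y v)
    (hpar : ∀ t ∈ S, X u < X t → Y u < Y t → X t < X v → Y t < Y v → False)
    (h1 : X u < X p) (h2 : Y v < Y p) (h3 : X p + Y p < X v + Y v) (hn : Nst S X Y u p)
    (k1 : X p' < X v) (k2 : Y p' < Y v) (k3 : X u + Y u < X p' + Y p')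
    (hn' : Nst S (fun p => -X p) (fun p => -Y p) v p') :
    Conn A N u v (6 * (X v + Y v - (X u + Y u))) := by
  by_cases hB : ∃ t ∈ S, Y t < Y u ∧ X t < X v ∧ X u + Y u < X t + Y t
  · obtain ⟨q, hq, q1, -, q2⟩ := hB
    exact cross_conn F hu hv hp hq hx hy hpar h1 h2 h3 hn q1 q2
  have hB' : ∀ t ∈ S, Y t < Y u → X t < X v → X u + Y u < X t + Y t → False :=
    fun t ht b1 b2 b3 => hB ⟨t, ht, b1, b2, b3⟩
  have hp'u : X p' < X u := by
    rcases lt_trichotomy (X p') (X u) with h | h | h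
    · exact h
    · have := F.eq_of_X hp' hu h
      subst this; linarith
    · exfalso
      rcases lt_trichotomy (Y p') (Y u) with h' | h' | h'
      · exact hB' p' hp' h' k1 k3
      · have := F.eq_of_Y hp' hu h'
        subst this; linarith
      · exact hpar p' hp' h h' k1 k2
  have hparm : ∀ t ∈ S, -Y v < -Y t → -X v < -X t → -Y t < -Y u → -X t < -X u → False :=
    fun t ht b1 b2 b3 b4 => hpar t ht (by linarith) (by linarith) (by linarith) (by linarith)
  by_cases hA : ∃ t ∈ S, X v < X t ∧ Y u < Y t ∧ X t + Y t < X v + Y v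
  · obtain ⟨q, hq, q1, -, q3⟩ := hA
    exact (F.conn_symm (cross_conn F.mir (u := v) (v := u) hv hu hp' hq (by linarith)
      (by linarith) hparm (by linarith) (by linarith) (by linarith) hn'.swap (by linarith)
      (by linarith))).mono (by linarith)
  rcases le_total (X v - X u) (Y v - Y u) with h | h
  · exact (one_side_conn F hu hv hp hx hy hpar h1 h2 h3 hn hB').mono (by linarith)
  · exact (F.conn_symm (one_side_conn F.mir hv hu hp' (by linarith) (by linarith) hparm
      (by linarith) (by linarith) (by linarith) hn'.swap (fun t ht b1 b2 b3 => hA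
        ⟨t, ht, by linarith, by linarith, by linarith⟩))).mono (by linarith)

/-- A pair whose parallelogram contains no point of `S`. -/
lemma empty_pair (F : Fr S A N X Y) (hu : u ∈ S) (hv : v ∈ S) (hx : X u < X v) (hy : Y u < Y v)
    (hpar : ∀ t ∈ S, X u < X t → Y u < Y t → X t < X v → Y t < Y v → False) :
    Conn A N u v (6 * (X v + Y v - (X u + Y u))) := by
  obtain ⟨p, hp, p1, p2, hn⟩ := exists_nst S X Y hv hx hy
  obtain ⟨p', hp', k1, k2, hn'⟩ := exists_nst S (fun p => -X p) (fun p => -Y p) (u := v) hu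
    (by linarith) (by linarith)
  rcases eq_or_ne p v with rfl | hpv
  · exact (theta_conn F hu hv hx hy hn).mono (by linarith)
  rcases eq_or_ne p' u with rfl | hpu
  · exact (F.conn_symm (theta_conn F.rot180 hv hu (by linarith) (by linarith) hn')).mono
      (by linarith)
  have hz : X p + Y p < X v + Y v :=
    lt_of_le_of_ne (hn v hv hx hy) (F.inj p hp v hv hpv).2.2
  have hz' : X u + Y u < X p' + Y p' := by
    refine lt_of_le_of_ne ?_ (F.inj u hu p' hp' hpu.symm).2.2
    have := hn' u hu (by linarith) (by linarith)
    linarith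
  rcases lt_trichotomy (Y p) (Y v) with h | h | h
  · have hpx : X v < X p := by
      rcases lt_trichotomy (X p) (X v) with h' | h' | h'
      · exact (hpar p hp p1 p2 h' h).elim
      · exact absurd (F.eq_of_X hp hv h') hpv
      · exact h'
    exact (above_pair F.swap hu hv hp hp' hy hx (fun t ht a b c d => hpar t ht b a d c) p2 hpx
      (by linarith) hn.swap (by linarith) (by linarith) (by linarith) hn'.swap).mono (by linarith)
  · exact absurd (F.eq_of_Y hp hv h) hpv
  · exact above_pair F hu hv hp hp' hx hy hpar p1 h hz hn (by linarith) (by linarith) hz' hn'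

/-- A point in the parallelogram of `u, v` splits the pair into two whose lengths add up exactly, so
induction on the number of such points reduces to an empty parallelogram. -/
lemma cone_pair (F : Fr S A N X Y) (n : ℕ) : ∀ u ∈ S, ∀ v ∈ S, X u < X v → Y u < Y v →
    (S.filter fun t => X u < X t ∧ Y u < Y t ∧ X t < X v ∧ Y t < Y v).card < n →
    Conn A N u v (6 * (X v + Y v - (X u + Y u))) := by
  induction n with
  | zero => intro u hu v hv hx hy h; exact absurd h (Nat.not_lt_zero _)
  | succ n ih =>
    intro u hu v hv hx hy hc
    by_cases hpar : ∃ r ∈ S, X u < X r ∧ Y u < Y r ∧ X r < X v ∧ Y r < Y v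
    · obtain ⟨r, hr, r1, r2, r3, r4⟩ := hpar
      have hmem : r ∈ S.filter fun t => X u < X t ∧ Y u < Y t ∧ X t < X v ∧ Y t < Y v := by
        simp [hr, r1, r2, r3, r4]
      have c1 := ih u hu r hr r1 r2 (lt_of_lt_of_le (Finset.card_lt_card
        ⟨fun t ht => by
          simp only [Finset.mem_filter] at ht ⊢
          exact ⟨ht.1, ht.2.1, ht.2.2.1, by linarith [ht.2.2.2.1], by linarith [ht.2.2.2.2]⟩,
        fun h => by simpa using h hmem⟩) (Nat.lt_succ_iff.1 hc))
      have c2 := ih r hr v hv r3 r4 (lt_of_lt_of_le (Finset.card_lt_card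
        ⟨fun t ht => by
          simp only [Finset.mem_filter] at ht ⊢
          exact ⟨ht.1, by linarith [ht.2.1], by linarith [ht.2.2.1], ht.2.2.2⟩,
        fun h => by simpa using h hmem⟩) (Nat.lt_succ_iff.1 hc))
      exact (c1.trans c2).mono (by linarith)
    · exact empty_pair F hu hv hx hy (fun t ht a b c d => hpar ⟨t, ht, a, b, c, d⟩)

lemma Fr.cone_conn (F : Fr S A N X Y) (hu : u ∈ S) (hv : v ∈ S) (hx : X u < X v)
    (hy : Y u < Y v) : Conn A N u v (6 * N u v) := by
  rw [F.N_eq hx hy]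
  exact cone_pair F _ u hu v hv hx hy (Nat.lt_succ_self _)

/-- Any two points are joined by a path of length at most six times their hexagonal distance. -/
theorem Fr.conn (F : Fr S A N X Y) (hu : u ∈ S) (hv : v ∈ S) (huv : u ≠ v) :
    Conn A N u v (6 * N u v) := by
  obtain ⟨n1, n2, n3⟩ := F.inj u hu v hv huv
  rcases lt_or_gt_of_ne n1 with h1 | h1 <;> rcases lt_or_gt_of_ne n2 with h2 | h2 <;>
    rcases lt_or_gt_of_ne n3 with h3 | h3
  · exact F.cone_conn hu hv h1 h2
  · linarith
  · exact F.rot300.cone_conn hu hv (by linarith) (by linarith)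
  · exact F.rot.rot180.cone_conn hu hv (by linarith) (by linarith)
  · exact F.rot.cone_conn hu hv (by linarith) (by linarith)
  · exact F.rot300.rot180.cone_conn hu hv (by linarith) (by linarith)
  · linarith
  · exact F.rot180.cone_conn hu hv (by linarith) (by linarith)

end Pairs

/-! ### Cone coordinates in the complex plane -/

section Bridge

/-- Affine coordinates along the two bounding rays of the cone with angles `[kπ/3, (k+1)π/3)`:
the open cone at the origin is where both are positive. -/
def hc : ℕ → ℂ → ℝ × ℝ
  | 0, z => (z.re - z.im / √3, 2 * z.im / √3)
  | k + 1, z => ((hc k z).1 + (hc k z).2, -(hc k z).1)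

/-- The hexagonal norm of `v - u`. -/
def hexN (u v : ℂ) : ℝ :=
  max |(hc 0 v).1 - (hc 0 u).1| (max |(hc 0 v).2 - (hc 0 u).2|
    |(hc 0 v).1 + (hc 0 v).2 - ((hc 0 u).1 + (hc 0 u).2)|)

lemma hc_sub (k : ℕ) (u v : ℂ) :
    (hc k (v - u)).1 = (hc k v).1 - (hc k u).1 ∧ (hc k (v - u)).2 = (hc k v).2 - (hc k u).2 := by
  induction k with
  | zero => constructor <;> simp only [hc, Complex.sub_re, Complex.sub_im] <;> ring
  | succ k ih => simp only [hc, ih.1, ih.2]; constructor <;> ring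

lemma argIn_nonneg (z : ℂ) : 0 ≤ argIn z := by
  unfold argIn; split_ifs with h
  · exact h
  · linarith [Complex.neg_pi_lt_arg z, Real.pi_pos]

lemma argIn_lt (z : ℂ) : argIn z < 2 * π := by
  unfold argIn; split_ifs with h
  · linarith [Complex.arg_le_pi z, Real.pi_pos]
  · linarith

lemma norm_cos_argIn (z : ℂ) : ‖z‖ * cos (argIn z) = z.re := by
  unfold argIn; split_ifs with h
  · exact Complex.norm_mul_cos_arg z
  · rw [Real.cos_add_two_pi]; exact Complex.norm_mul_cos_arg z

lemma norm_sin_argIn (z : ℂ) : ‖z‖ * sin (argIn z) = z.im := by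
  unfold argIn; split_ifs with h
  · exact Complex.norm_mul_sin_arg z
  · rw [Real.sin_add_two_pi]; exact Complex.norm_mul_sin_arg z

lemma hc_polar (k : ℕ) (z : ℂ) :
    (hc k z).1 = 2 / √3 * ‖z‖ * sin ((k + 1) * (π / 3) - argIn z) ∧
    (hc k z).2 = 2 / √3 * ‖z‖ * sin (argIn z - k * (π / 3)) := by
  have h3 : √3 ≠ 0 := by positivity
  have hs : √3 * √3 = 3 := Real.mul_self_sqrt (by norm_num)
  induction k with
  | zero =>
    have e1 : ((0 : ℕ) + 1 : ℝ) * (π / 3) - argIn z = π / 3 - argIn z := by push_cast; ring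
    have e2 : argIn z - ((0 : ℕ) : ℝ) * (π / 3) = argIn z := by push_cast; ring
    rw [e1, e2, Real.sin_sub, Real.sin_pi_div_three, Real.cos_pi_div_three]
    simp only [hc]
    rw [← norm_cos_argIn z, ← norm_sin_argIn z]
    constructor
    · field_simp
    · ring
  | succ k ih =>
    have key : ∀ b : ℝ, sin (π / 3 - b) + sin b = sin (2 * (π / 3) - b) := by
      intro b
      rw [Real.sin_sub, Real.sin_sub, Real.sin_two_mul, Real.cos_two_mul, Real.sin_pi_div_three,
        Real.cos_pi_div_three]
      ring
    simp only [hc, ih.1, ih.2]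
    constructor
    · have h := key (argIn z - k * (π / 3))
      have e1 : π / 3 - (argIn z - k * (π / 3)) = (k + 1) * (π / 3) - argIn z := by ring
      have e2 : 2 * (π / 3) - (argIn z - k * (π / 3))
          = (((k + 1 : ℕ) : ℝ) + 1) * (π / 3) - argIn z := by push_cast; ring
      rw [e1, e2] at h
      rw [← h]; ring
    · have e : argIn z - ((k + 1 : ℕ) : ℝ) * (π / 3) = -((k + 1) * (π / 3) - argIn z) := by
        push_cast; ring
      rw [e, Real.sin_neg]; ring

/-- The index of the cone containing `z`, counted from `0`. -/
def ci (z : ℂ) : ℕ := (⌊argIn z / (π / 3)⌋).toNat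

lemma ci_iff (z : ℂ) (k : ℕ) :
    ci z = k ↔ k * (π / 3) ≤ argIn z ∧ argIn z < (k + 1) * (π / 3) := by
  have hp : 0 < π / 3 := by positivity
  have h0 : 0 ≤ argIn z / (π / 3) := div_nonneg (argIn_nonneg z) hp.le
  have : ci z = ⌊argIn z / (π / 3)⌋₊ := rfl
  rw [this, Nat.floor_eq_iff h0, le_div_iff₀ hp, div_lt_iff₀ hp]

lemma ci_lt (z : ℂ) : ci z < 6 := by
  have h := ((ci_iff z (ci z)).1 rfl).1
  have h2 := argIn_lt z
  have : (ci z : ℝ) < 6 := by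
    by_contra hc
    push Not at hc
    nlinarith [Real.pi_pos]
  exact_mod_cast this

/-- Genericity of a difference vector: it is nonzero and its direction is not a multiple of `π/3`. -/
def Gen (z : ℂ) : Prop := z ≠ 0 ∧ ∀ j : ℕ, argIn z ≠ j * (π / 3)

lemma Gen.pos {z : ℂ} (hz : Gen z) : 0 < (hc (ci z) z).1 ∧ 0 < (hc (ci z) z).2 := by
  obtain ⟨h1, h2⟩ := (ci_iff z (ci z)).1 rfl
  have hn : 0 < 2 / √3 * ‖z‖ := by
    have := norm_pos_iff.2 hz.1
    positivity
  have h1' := lt_of_le_of_ne h1 (Ne.symm (hz.2 _))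
  have hp := Real.pi_pos
  rw [(hc_polar _ z).1, (hc_polar _ z).2]
  constructor
  · exact mul_pos hn (Real.sin_pos_of_pos_of_lt_pi (by linarith) (by linarith))
  · exact mul_pos hn (Real.sin_pos_of_pos_of_lt_pi (by linarith) (by linarith))

lemma Gen.ci_eq {z : ℂ} (hz : Gen z) {k : ℕ} (hk : k < 6) (h1 : 0 < (hc k z).1)
    (h2 : 0 < (hc k z).2) : ci z = k := by
  obtain ⟨p1, p2⟩ := hz.pos
  have hm := ci_lt z
  generalize ci z = m at *
  generalize hx : z.re - z.im / √3 = x at *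
  generalize hy : 2 * z.im / √3 = y at *
  interval_cases k <;> interval_cases m <;> first | rfl | (simp only [hc, hx, hy] at *; linarith)

/-- Both coordinates negative means lying in the cone opposite to the `k`-th one. -/
lemma Gen.opp {z : ℂ} (hz : Gen z) {k : ℕ} (hk : k < 6) (h1 : (hc k z).1 < 0)
    (h2 : (hc k z).2 < 0) : ci z = (k + 3) % 6 := by
  generalize hx : z.re - z.im / √3 = x at *
  generalize hy : 2 * z.im / √3 = y at *
  apply hz.ci_eq (Nat.mod_lt _ (by norm_num)) <;>
  · interval_cases k <;> simp [hc, hx, hy] at * <;> linarith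

lemma Gen.neg_of_opp {z : ℂ} (hz : Gen z) {k : ℕ} (hk : k < 6) (h : ci z = (k + 3) % 6) :
    (hc k z).1 < 0 ∧ (hc k z).2 < 0 := by
  have hp := hz.pos
  rw [h] at hp
  generalize hx : z.re - z.im / √3 = x at *
  generalize hy : 2 * z.im / √3 = y at *
  interval_cases k <;> simp only [hc, hx, hy, Nat.reduceAdd, Nat.reduceMod] at * <;>
    constructor <;> linarith

lemma projDist_eq {u v : ℂ} {k : ℕ} (h : ci (v - u) = k) :
    projDist u v = √3 / 2 * ((hc k (v - u)).1 + (hc k (v - u)).2) := by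
  have hb : bisAngle u v = k * (π / 3) + π / 6 := by
    have : coneIdx u v = k + 1 := by rw [← h]; rfl
    unfold bisAngle; rw [this]; push_cast; ring
  have h3 : √3 ≠ 0 := by positivity
  have hs : √3 * √3 = 3 := Real.mul_self_sqrt (by norm_num)
  have e1 : ∀ b : ℝ, (Complex.exp (-(Complex.I * (b : ℂ)))) = ⟨cos b, -sin b⟩ := by
    intro b
    apply Complex.ext
    · rw [Complex.exp_re]; simp
    · rw [Complex.exp_im]; simp
  unfold projDist
  rw [hb, e1, Complex.mul_re, (hc_polar k _).1, (hc_polar k _).2, ← norm_cos_argIn (v - u),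
    ← norm_sin_argIn (v - u)]
  have key : ∀ b : ℝ, sin (π / 3 - b) + sin b = cos (b - π / 6) := by
    intro b
    rw [Real.sin_sub, Real.cos_sub, Real.sin_pi_div_three,
      Real.cos_pi_div_three, Real.sin_pi_div_six, Real.cos_pi_div_six]
    ring
  have h := key (argIn (v - u) - k * (π / 3))
  have e2 : π / 3 - (argIn (v - u) - k * (π / 3)) = (k + 1) * (π / 3) - argIn (v - u) := by ring
  have e3 : argIn (v - u) - k * (π / 3) - π / 6 = argIn (v - u) - (k * (π / 3) + π / 6) := by ring
  rw [e2, e3, Real.cos_sub] at h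
  have e4 : √3 / 2 * (2 / √3 * ‖v - u‖ * sin ((k + 1) * (π / 3) - argIn (v - u)) +
      2 / √3 * ‖v - u‖ * sin (argIn (v - u) - k * (π / 3))) = ‖v - u‖ *
      (sin ((k + 1) * (π / 3) - argIn (v - u)) + sin (argIn (v - u) - k * (π / 3))) := by
    field_simp
  rw [e4, h]
  simp only
  ring

variable {S : Finset ℂ}

lemma GenPos.gen (hg : GenPos S) {u v : ℂ} (hu : u ∈ S) (hv : v ∈ S) (h : u ≠ v) :
    Gen (v - u) :=
  ⟨sub_ne_zero.2 h.symm, hg u hu v hv h⟩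

lemma mem_cone_iff {u p : ℂ} {k : ℕ} : p ∈ cone (k + 1) u ↔ p ≠ u ∧ ci (p - u) = k := by
  unfold cone
  rw [ci_iff]
  simp

/-- In each cone, a `Θ₆`-edge survives in `ΘΘ₆` or is beaten by a shorter surviving edge coming
from the same cone of its head. -/
lemma stp_cone (hg : GenPos S) {k : ℕ} (hk : k < 6) :
    Stp S (TTAdj S) (fun p => (hc k p).1) (fun p => (hc k p).2) := by
  intro u hu v hv hx hy hmin
  simp only at hx hy hmin
  have h3 : 0 < √3 / 2 := by positivity
  have huv : u ≠ v := by rintro rfl; exact lt_irrefl _ hx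
  have pos_iff : ∀ {a b : ℂ}, a ∈ S → b ∈ S → a ≠ b →
      (ci (b - a) = k ↔ (hc k a).1 < (hc k b).1 ∧ (hc k a).2 < (hc k b).2) := by
    intro a b ha hb hab
    have G := hg.gen ha hb hab
    obtain ⟨s1, s2⟩ := hc_sub k a b
    constructor
    · intro h
      have := G.pos
      rw [h, s1, s2] at this
      exact ⟨by linarith [this.1], by linarith [this.2]⟩
    · rintro ⟨h1, h2⟩
      exact G.ci_eq hk (by rw [s1]; linarith) (by rw [s2]; linarith)
  have pd : ∀ {a b : ℂ}, ci (b - a) = k → projDist a b =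
      √3 / 2 * ((hc k b).1 + (hc k b).2 - ((hc k a).1 + (hc k a).2)) := by
    intro a b h
    rw [projDist_eq h, (hc_sub k a b).1, (hc_sub k a b).2]; ring
  have huvk : ci (v - u) = k := (pos_iff hu hv huv).2 ⟨hx, hy⟩
  have hT : ThetaEdge S u v := by
    refine ⟨hu, hv, huv.symm, fun w hw hwc => ?_⟩
    have : coneIdx u v = k + 1 := by rw [← huvk]; rfl
    rw [this, mem_cone_iff] at hwc
    obtain ⟨hwu, hwk⟩ := hwc
    have hw' := (pos_iff hu hw hwu.symm).1 hwk
    rw [pd huvk, pd hwk]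
    exact mul_le_mul_of_nonneg_left (by linarith [hmin w hw hw'.1 hw'.2]) h3.le
  have hopp : coneIdx v u = (k + 3) % 6 + 1 := by
    have : ci (u - v) = (k + 3) % 6 := by
      apply (hg.gen hv hu huv.symm).opp hk
      · rw [(hc_sub k v u).1]; linarith
      · rw [(hc_sub k v u).2]; linarith
    rw [← this]; rfl
  classical
  by_cases hTT : ThetaThetaEdge S u v
  · exact Or.inl (Or.inl hTT)
  right
  have : ∃ w0, ThetaEdge S w0 v ∧ coneIdx v w0 = coneIdx v u ∧ projDist w0 v < projDist u v := by
    by_contra hcon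
    push Not at hcon
    exact hTT ⟨hT, hcon⟩
  obtain ⟨w0, hw0, hc0, hl0⟩ := this
  obtain ⟨w, hw, hwmin⟩ := Finset.exists_min_image
    (S.filter fun w => ThetaEdge S w v ∧ coneIdx v w = coneIdx v u) (fun w => projDist w v)
    ⟨w0, by simp [hw0, hc0, hw0.1]⟩
  simp only [Finset.mem_filter] at hw hwmin
  obtain ⟨hwS, hwT, hwc⟩ := hw
  have hwv : w ≠ v := hwT.2.2.1.symm
  have hlt : projDist w v < projDist u v := lt_of_le_of_lt (hwmin w0 ⟨hw0.1, hw0, hc0⟩) hl0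
  have hwk : ci (w - v) = (k + 3) % 6 := by
    have : coneIdx v w = ci (w - v) + 1 := rfl
    omega
  obtain ⟨n1, n2⟩ := (hg.gen hv hwS hwv.symm).neg_of_opp hk hwk
  rw [(hc_sub k v w).1] at n1
  rw [(hc_sub k v w).2] at n2
  have q1 : (hc k w).1 < (hc k v).1 := by linarith
  have q2 : (hc k w).2 < (hc k v).2 := by linarith
  have hwvk : ci (v - w) = k := (pos_iff hwS hv hwv).2 ⟨q1, q2⟩
  rw [pd hwvk, pd huvk] at hlt
  have hlt' := lt_of_mul_lt_mul_left hlt h3.le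
  refine ⟨w, hwS, q1, q2, by linarith, Or.inl ⟨hwT, fun t ht htc => ?_⟩⟩
  exact hwmin t ⟨ht.1, ht, htc.trans hwc⟩

lemma Gen.ne {z : ℂ} (hz : Gen z) (k : ℕ) : (hc k z).1 ≠ 0 := by
  intro h
  have hn : 2 / √3 * ‖z‖ ≠ 0 := by
    have := norm_pos_iff.2 hz.1
    positivity
  rw [(hc_polar k z).1] at h
  obtain ⟨n, hn⟩ := Real.sin_eq_zero_iff.1 ((mul_eq_zero.1 h).resolve_left hn)
  have e : argIn z = ((k + 1 - 3 * n : ℤ) : ℝ) * (π / 3) := by push_cast; linarith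
  have hj : 0 ≤ (k + 1 - 3 * n : ℤ) := by
    have h0 := argIn_nonneg z
    rw [e] at h0
    have := nonneg_of_mul_nonneg_left h0 (by positivity)
    exact_mod_cast this
  obtain ⟨j, hj⟩ := Int.eq_ofNat_of_zero_le hj
  rw [hj] at e
  exact hz.2 j (by exact_mod_cast e)

lemma hc_ext {a b : ℂ} (h1 : (hc 0 a).1 = (hc 0 b).1) (h2 : (hc 0 a).2 = (hc 0 b).2) : a = b := by
  have h3 : √3 ≠ 0 := by positivity
  simp only [hc] at h1 h2
  have e : a.im = b.im := by field_simp at h2; linarith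
  rw [e] at h1
  exact Complex.ext (by linarith) e

/-- No point of `S` is a convex combination of three other points of `S`. -/
lemma ConvexPos.no_comb (hS : ConvexPos S) {a b c d : ℂ} (ha : a ∈ S) (hb : b ∈ S) (hc : c ∈ S)
    (hd : d ∈ S) (had : a ≠ d) (hbd : b ≠ d) (hcd : c ≠ d) {p q r : ℝ} (hp : 0 ≤ p) (hq : 0 ≤ q)
    (hr : 0 ≤ r) (hs : p + q + r = 1) (he : d = p • a + q • b + r • c) : False := by
  have h := hS d hd
  rw [(convex_convexHull ℝ (S : Set ℂ)).mem_extremePoints_iff_mem_sdiff_convexHull_sdiff] at h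
  apply h.2
  have sub : ∀ x ∈ S, x ≠ d → x ∈ convexHull ℝ (convexHull ℝ (S : Set ℂ) \ {d}) := fun x hx hxd =>
    subset_convexHull ℝ _ ⟨subset_convexHull ℝ _ (by simpa using hx), by simpa using hxd⟩
  have := (convex_convexHull ℝ (convexHull ℝ (S : Set ℂ) \ {d})).sum_mem
    (t := Finset.univ) (w := ![p, q, r]) (z := ![a, b, c])
    (by intro i _; fin_cases i <;> simp [hp, hq, hr])
    (by simp [Fin.sum_univ_three, hs])
    (by intro i _; fin_cases i <;> simp [sub a ha had, sub b hb hbd, sub c hc hcd])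
  simp only [Fin.sum_univ_three] at this
  simpa [he] using this

lemma hc_comb (a b c : ℂ) (p q r : ℝ) :
    (hc 0 (p • a + q • b + r • c)).1 = p * (hc 0 a).1 + q * (hc 0 b).1 + r * (hc 0 c).1 ∧
    (hc 0 (p • a + q • b + r • c)).2 = p * (hc 0 a).2 + q * (hc 0 b).2 + r * (hc 0 c).2 := by
  constructor <;> simp [hc] <;> ring

lemma ConvexPos.no_mid (hS : ConvexPos S) {a b c : ℂ} (ha : a ∈ S) (hb : b ∈ S) (hc' : c ∈ S)
    (h1 : (hc 0 a).1 < (hc 0 b).1) (h2 : (hc 0 b).1 < (hc 0 c).1)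
    (h : cr (fun p => (hc 0 p).1) (fun p => (hc 0 p).2) a b c = 0) : False := by
  have hT : 0 < (hc 0 c).1 - (hc 0 a).1 := by linarith
  refine hS.no_comb ha hc' hc' hb (p := ((hc 0 c).1 - (hc 0 b).1) / ((hc 0 c).1 - (hc 0 a).1))
    (q := ((hc 0 b).1 - (hc 0 a).1) / ((hc 0 c).1 - (hc 0 a).1)) (r := 0)
    ?_ ?_ ?_ (div_nonneg (by linarith) hT.le) (div_nonneg (by linarith) hT.le) le_rfl ?_ ?_
  · rintro rfl; exact lt_irrefl _ h1
  · rintro rfl; exact lt_irrefl _ h2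
  · rintro rfl; exact lt_irrefl _ h2
  · field_simp; ring
  · apply hc_ext
    · rw [(hc_comb _ _ _ _ _ _).1]; field_simp; ring
    · rw [(hc_comb _ _ _ _ _ _).2]; field_simp; unfold cr at h; linarith

lemma frame (hS : ConvexPos S) (hg : GenPos S) :
    Fr S (TTAdj S) hexN (fun p => (hc 0 p).1) (fun p => (hc 0 p).2) where
  symm a b h := h.symm
  inj a ha b hb hab := by
    have G := hg.gen ha hb hab
    have g0 := G.ne 0
    have g1 := G.ne 1
    have g2 := G.ne 2
    simp only [hc, Complex.sub_re, Complex.sub_im] at *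
    refine ⟨fun h => g0 ?_, fun h => g2 ?_, fun h => g1 ?_⟩
    · linear_combination -h
    · linear_combination -h
    · linear_combination -h
  col a ha b hb c hc' h1 h2 h3 h := by
    have ne : ∀ x ∈ S, ∀ y ∈ S, x ≠ y → (hc 0 x).1 ≠ (hc 0 y).1 := by
      intro x hx y hy hxy e
      apply (hg.gen hx hy hxy).ne 0
      rw [(hc_sub 0 x y).1, e, sub_self]
    have perm : ∀ {x y z : ℂ} {s : ℝ}, cr (fun p => (hc 0 p).1) (fun p => (hc 0 p).2) x y z =
        s * cr (fun p => (hc 0 p).1) (fun p => (hc 0 p).2) a b c →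
        cr (fun p => (hc 0 p).1) (fun p => (hc 0 p).2) x y z = 0 := by
      intro x y z s e; rw [e, h, mul_zero]
    rcases lt_or_gt_of_ne (ne a ha b hb h1) with l1 | l1 <;>
    rcases lt_or_gt_of_ne (ne b hb c hc' h2) with l2 | l2 <;>
    rcases lt_or_gt_of_ne (ne a ha c hc' h3) with l3 | l3
    · exact hS.no_mid ha hb hc' l1 l2 h
    · linarith
    · exact hS.no_mid ha hc' hb l3 l2 (perm (s := -1) (by unfold cr; ring))
    · exact hS.no_mid hc' ha hb l3 l1 (perm (s := 1) (by unfold cr; ring))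
    · exact hS.no_mid hb ha hc' l1 l3 (perm (s := -1) (by unfold cr; ring))
    · exact hS.no_mid hb hc' ha l2 l3 (perm (s := 1) (by unfold cr; ring))
    · linarith
    · exact hS.no_mid hc' hb ha l2 l1 (perm (s := -1) (by unfold cr; ring))
  conv a ha b hb c hc' d hd h1 h2 h3 := by
    -- barycentric coordinates of `d` in the triangle `abc`
    set X : ℂ → ℝ := fun p => (hc 0 p).1 with hX
    set Y : ℂ → ℝ := fun p => (hc 0 p).2 with hY
    have hT : 0 < cr X Y b c d + cr X Y c a d + cr X Y a b d := by linarith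
    refine hS.no_comb ha hb hc' hd (p := cr X Y b c d / (cr X Y b c d + cr X Y c a d + cr X Y a b d))
      (q := cr X Y c a d / (cr X Y b c d + cr X Y c a d + cr X Y a b d))
      (r := cr X Y a b d / (cr X Y b c d + cr X Y c a d + cr X Y a b d)) ?_ ?_ ?_
      (div_nonneg h2.le hT.le) (div_nonneg h3.le hT.le) (div_nonneg h1.le hT.le) ?_ ?_
    · rintro rfl; unfold cr at h1; linarith
    · rintro rfl; unfold cr at h1; linarith
    · rintro rfl; unfold cr at h3; linarith
    · field_simp
    · apply hc_ext
      · rw [(hc_comb _ _ _ _ _ _).1]; field_simp; simp only [cr, hX, hY]; ring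
      · rw [(hc_comb _ _ _ _ _ _).2]; field_simp; simp only [cr, hX, hY]; ring
  norm a b := rfl
  st1 := stp_cone hg (k := 0) (by norm_num)
  st2 := (stp_cone hg (k := 1) (by norm_num)).congr (fun p => by simp only [hc])
    (fun p => by simp only [hc])
  st3 := (stp_cone hg (k := 2) (by norm_num)).congr (fun p => by simp only [hc]; ring)
    (fun p => by simp only [hc])
  st4 := (stp_cone hg (k := 3) (by norm_num)).congr (fun p => by simp only [hc]; ring)
    (fun p => by simp only [hc]; ring)
  st5 := (stp_cone hg (k := 4) (by norm_num)).congr (fun p => by simp only [hc]; ring)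
    (fun p => by simp only [hc]; ring)
  st6 := (stp_cone hg (k := 5) (by norm_num)).congr (fun p => by simp only [hc]; ring)
    (fun p => by simp only [hc]; ring)

/-! ### From the hexagonal norm to Euclidean path lengths -/

lemma dist_sq_hc (u v : ℂ) : dist u v ^ 2 = ((hc 0 v).1 - (hc 0 u).1) ^ 2 +
    ((hc 0 v).1 - (hc 0 u).1) * ((hc 0 v).2 - (hc 0 u).2) + ((hc 0 v).2 - (hc 0 u).2) ^ 2 := by
  have h3 : √3 ≠ 0 := by positivity
  have hs : √3 ^ 2 = 3 := Real.sq_sqrt (by norm_num)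
  rw [dist_comm, Complex.dist_eq, Complex.sq_norm, Complex.normSq_apply]
  simp only [hc, Complex.sub_re, Complex.sub_im]
  field_simp
  ring_nf
  rw [hs]
  ring

lemma dist_le_hexN (u v : ℂ) : dist u v ≤ hexN u v := by
  have h := dist_sq_hc u v
  unfold hexN
  generalize (hc 0 v).1 = a at *
  generalize (hc 0 u).1 = b at *
  generalize (hc 0 v).2 = c at *
  generalize (hc 0 u).2 = d at *
  have e : a + c - (b + d) = (a - b) + (c - d) := by ring
  rw [e]
  generalize a - b = x at *
  generalize c - d = y at *
  set M := max |x| (max |y| |x + y|) with hM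
  have m1 : |x| ≤ M := le_max_left _ _
  have m2 : |y| ≤ M := (le_max_left _ _).trans (le_max_right _ _)
  have m3 : |x + y| ≤ M := (le_max_right _ _).trans (le_max_right _ _)
  have hM0 : 0 ≤ M := (abs_nonneg _).trans m1
  have q1 : x ^ 2 ≤ M ^ 2 := sq_le_sq' (abs_le.1 m1).1 (abs_le.1 m1).2
  have q2 : y ^ 2 ≤ M ^ 2 := sq_le_sq' (abs_le.1 m2).1 (abs_le.1 m2).2
  have q3 : (x + y) ^ 2 ≤ M ^ 2 := sq_le_sq' (abs_le.1 m3).1 (abs_le.1 m3).2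
  refine abs_le_of_sq_le_sq' ?_ hM0 |>.2
  rw [h]
  -- `x² + xy + y²` is at most the square of whichever of `x`, `y`, `x + y` is largest
  rcases le_total 0 x with hx | hx <;> rcases le_total 0 y with hy | hy <;>
    rcases le_total 0 (x + y) with hz | hz <;>
    first
    | nlinarith [mul_nonneg hx hy]
    | nlinarith [mul_nonneg_of_nonpos_of_nonpos hx hy]
    | nlinarith [mul_nonneg hx hz, mul_nonpos_of_nonneg_of_nonpos hz hy]
    | nlinarith

lemma hexN_le_dist (u v : ℂ) : 6 * hexN u v ≤ 8 * dist u v := by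
  have h := dist_sq_hc u v
  have hd : 0 ≤ dist u v := dist_nonneg
  have : hexN u v ≤ 8 / 6 * dist u v := by
    unfold hexN
    refine max_le ?_ (max_le ?_ ?_) <;>
    · apply abs_le_of_sq_le_sq _ (by positivity)
      nlinarith [sq_nonneg ((hc 0 v).1 - (hc 0 u).1 + 2 * ((hc 0 v).2 - (hc 0 u).2)),
        sq_nonneg (2 * ((hc 0 v).1 - (hc 0 u).1) + ((hc 0 v).2 - (hc 0 u).2)),
        sq_nonneg ((hc 0 v).1 - (hc 0 u).1 - ((hc 0 v).2 - (hc 0 u).2)), sq_nonneg (dist u v)]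
  linarith

lemma Conn.exists_path {A : ℂ → ℂ → Prop} {u v : ℂ} {r : ℝ} (h : Conn A hexN u v r) :
    ∃ p : List ℂ, IsPath A u v (u :: p) ∧ pathLength (u :: p) ≤ r := by
  induction h with
  | nil u r hr => exact ⟨[], ⟨List.isChain_singleton u, rfl, rfl⟩, by simpa [pathLength] using hr⟩
  | cons u w v r s hA _ hs ih =>
    obtain ⟨p, ⟨h1, h2, h3⟩, h4⟩ := ih
    refine ⟨w :: p, ⟨?_, rfl, ?_⟩, ?_⟩
    · exact List.isChain_cons_cons.2 ⟨hA, h1⟩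
    · rw [List.getLast?_cons_cons]; exact h3
    · have := dist_le_hexN u w
      simp only [pathLength, List.tail_cons, List.zipWith_cons_cons, List.sum_cons] at *
      linarith

end Bridge

/-- For a finite set `S` of points in the plane in convex position and in
general position, `ΘΘ₆(S)` is an 8-spanner. -/
theorem thetaTheta6_convex_eight_spanner (S : Finset ℂ) (hconv : ConvexPos S)
    (hgen : GenPos S) :
    ∀ u ∈ S, ∀ v ∈ S,
      ∃ p : List ℂ, IsPath (TTAdj S) u v p ∧ pathLength p ≤ 8 * dist u v := by
  intro u hu v hv
  rcases eq_or_ne u v with rfl | huv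
  · exact ⟨[u], ⟨List.isChain_singleton u, rfl, rfl⟩, by simp [pathLength]⟩
  · obtain ⟨p, h1, h2⟩ := ((frame hconv hgen).conn hu hv huv).exists_path
    exact ⟨u :: p, h1, h2.trans (hexN_le_dist u v)⟩

end
end

section
/- Let S be a finite set of points in the plane that is in convex position and in general position. Then for every directed edge a→b of Θ₆(S) there is a path between a and b in ΘΘ₆(S) of length at most 4·|ab|. -/
/-!
In oblique coordinates `X, Y` along two unit vectors at angle `2π/3` (`Frame`), the six cones are
the sextants given by the signs of `X`, `Y`, `X - Y`, and the projective distance is `√3 / 2` times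
the hexagonal norm `max |X| |Y| |X - Y|`. Turning and reflecting a frame keeps this description, so
one may assume that `b` lies in the sextant `0 < X < Y` of `a`; let `L = Y(b - a)` and
`s = X(b - a)`, so that `|ab|² = L² - L s + s²`.

Let `c → b` be the edge of `ΘΘ₆` that survives in the cone of `b` containing `a`. If `c ≠ a`, then,
as the triangle of `a → b` is empty, `c` lies on one side of it, say clockwise, in the sextant
`0 < Y < X` of `a`. The points of `S` in the canonical triangle with apex `a` through `c` form a
convex chain from `a` to `c` along which `X` and `Y` increase. By convexity each step of the chain
is an edge of `ΘΘ₆`, with the possible exception of the first one, `a → d`, which is an edge of `Θ₆`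
(`Conf.step_right`, `Conf.step_up`, `Conf.chain`). A step costs at most the increase of `X + Y`, and
`|cb| ≤ Y(b - c)`, so going from `d` through `c` to `b` costs at most `X(b - d) + Y(b - d)`.

If `a → d` is not in `ΘΘ₆`, the same argument applies to it in the frame turned clockwise by `π/3`,
and the obstruction is again on the clockwise side (`Conf.turn`). By induction, `k` turns give a
path from `a` to `b` of length at most `L + k s` (`level`). A fourth turn would place points of `S`
in three alternate cones of `a`, making `a` a non-extreme point (`not_spread`). Hence the path has
length at most `L + 3 s`, which is at most `4 |ab|` because `0 ≤ s ≤ L` (`main_up`).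
-/

open Real

noncomputable section

/-! ### Paths -/

/-- There is a `ΘΘ₆(S)`-path from `u` to `v` of length at most `B`. -/
def HasPath (S : Finset ℂ) (u v : ℂ) (B : ℝ) : Prop :=
  ∃ p : List ℂ, IsPath (TTAdj S) u v p ∧ pathLength p ≤ B

lemma HasPath.mono {S : Finset ℂ} {u v : ℂ} {B C : ℝ} (h : HasPath S u v B) (hBC : B ≤ C) :
    HasPath S u v C := by
  obtain ⟨p, hp, hl⟩ := h
  exact ⟨p, hp, hl.trans hBC⟩

lemma HasPath.refl (S : Finset ℂ) (u : ℂ) : HasPath S u u 0 :=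
  ⟨[u], ⟨List.isChain_singleton _, rfl, rfl⟩, by simp [pathLength]⟩

lemma HasPath.cons {S : Finset ℂ} {u v w : ℂ} {B C : ℝ} (huv : TTAdj S u v) (hd : dist u v ≤ B)
    (h : HasPath S v w C) : HasPath S u w (B + C) := by
  obtain ⟨p, ⟨hc, hh, hl⟩, hlen⟩ := h
  cases p with
  | nil => simp at hh
  | cons x p =>
    obtain rfl : x = v := by simpa using hh
    refine ⟨u :: x :: p, ⟨List.isChain_cons_cons.2 ⟨huv, hc⟩, rfl, ?_⟩, ?_⟩
    · simpa using hl
    · simp only [pathLength, List.tail_cons, List.zipWith_cons_cons, List.sum_cons] at hlen ⊢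
      linarith

lemma HasPath.trans {S : Finset ℂ} {u v w : ℂ} {B C : ℝ} (h₁ : HasPath S u v B)
    (h₂ : HasPath S v w C) : HasPath S u w (B + C) := by
  obtain ⟨p, ⟨hc, hh, hl⟩, hlen⟩ := h₁
  induction p generalizing u B with
  | nil => simp at hh
  | cons x p ih =>
    obtain rfl : x = u := by simpa using hh
    cases p with
    | nil =>
      obtain rfl : x = v := by simpa using hl
      have : (0 : ℝ) ≤ B := by simpa [pathLength] using hlen
      exact h₂.mono (by linarith)
    | cons y p =>
      obtain ⟨hxy, hc'⟩ := List.isChain_cons_cons.1 hc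
      have := ih (u := y) (B := pathLength (y :: p)) le_rfl hc' rfl (by simpa using hl)
      refine (HasPath.cons hxy le_rfl this).mono ?_
      simp only [pathLength, List.tail_cons, List.zipWith_cons_cons, List.sum_cons] at hlen ⊢
      linarith

lemma HasPath.single {S : Finset ℂ} {u v : ℂ} {B : ℝ} (huv : TTAdj S u v) (hd : dist u v ≤ B) :
    HasPath S u v B :=
  ((HasPath.refl S v).cons huv hd).mono (by simp)

/-! ### Hexagonal frames -/

/-- The hexagonal norm of the coordinates `(x, y)`. -/
def hexNorm (x y : ℝ) : ℝ := max (max |x| |y|) |x - y|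

/-- Two vectors with hexagonal coordinates `(x, y)` and `(x', y')` lie in the same open sextant. -/
def SameSextant (x y x' y' : ℝ) : Prop := 0 < x * x' ∧ 0 < y * y' ∧ 0 < (x - y) * (x' - y')

/-- Oblique coordinates `X, Y` on the plane with respect to two unit vectors at angle `2π/3`, both
of whose directions are multiples of `π/3`. In such coordinates the six cones are the sextants cut
out by the signs of `X`, `Y`, `X - Y`, and the projective distance is `√3 / 2` times the hexagonal
norm; `edge` and `tt` express the two graphs in this way. -/
structure Frame (S : Finset ℂ) where
  X : ℂ →ₗ[ℝ] ℝ
  Y : ℂ →ₗ[ℝ] ℝ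
  norm_sq : ∀ z, ‖z‖ ^ 2 = X z ^ 2 - X z * Y z + Y z ^ 2
  gen : ∀ u ∈ S, ∀ v ∈ S, u ≠ v → X u ≠ X v ∧ Y u ≠ Y v ∧ X u - Y u ≠ X v - Y v
  edge : ∀ u v, ThetaEdge S u v ↔ u ∈ S ∧ v ∈ S ∧ v ≠ u ∧ ∀ w ∈ S,
    SameSextant (X (v - u)) (Y (v - u)) (X (w - u)) (Y (w - u)) →
      hexNorm (X (v - u)) (Y (v - u)) ≤ hexNorm (X (w - u)) (Y (w - u))
  tt : ∀ u v, ThetaThetaEdge S u v ↔ ThetaEdge S u v ∧ ∀ w, ThetaEdge S w v →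
    SameSextant (X (u - v)) (Y (u - v)) (X (w - v)) (Y (w - v)) →
      hexNorm (X (u - v)) (Y (u - v)) ≤ hexNorm (X (w - v)) (Y (w - v))

lemma hexNorm_next (x y : ℝ) : hexNorm (x - y) x = hexNorm x y := by
  have : x - y - x = -y := by ring
  rw [hexNorm, hexNorm, this, abs_neg, max_comm |x - y|, max_right_comm]

lemma hexNorm_flip (x y : ℝ) : hexNorm (y - x) y = hexNorm x y := by
  have : y - x - y = -x := by ring
  rw [hexNorm, hexNorm, this, abs_neg, abs_sub_comm y x, max_comm |x - y|, max_right_comm,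
    max_comm |y|]

lemma sameSextant_next (x y x' y' : ℝ) :
    SameSextant (x - y) x (x' - y') x' ↔ SameSextant x y x' y' := by
  have : (x - y - x) * (x' - y' - x') = y * y' := by ring
  rw [SameSextant, SameSextant, this]
  tauto

lemma sameSextant_flip (x y x' y' : ℝ) :
    SameSextant (y - x) y (y' - x') y' ↔ SameSextant x y x' y' := by
  have h₁ : (y - x - y) * (y' - x' - y') = x * x' := by ring
  have h₂ : (y - x) * (y' - x') = (x - y) * (x' - y') := by ring
  rw [SameSextant, SameSextant, h₁, h₂]
  tauto

namespace Frame

variable {S : Finset ℂ}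

/-- The frame turned clockwise by `π/3`. -/
def next (F : Frame S) : Frame S where
  X := F.X - F.Y
  Y := F.X
  norm_sq z := by rw [F.norm_sq, LinearMap.sub_apply]; ring
  gen u hu v hv h := by
    obtain ⟨h₁, h₂, h₃⟩ := F.gen u hu v hv h
    refine ⟨h₃, h₁, fun h => h₂ ?_⟩
    simp only [LinearMap.sub_apply] at h
    linarith
  edge u v := by simpa only [LinearMap.sub_apply, hexNorm_next, sameSextant_next] using F.edge u v
  tt u v := by simpa only [LinearMap.sub_apply, hexNorm_next, sameSextant_next] using F.tt u v

/-- The frame reflected in the bisector of the sextant `0 < X < Y`. -/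
def flip (F : Frame S) : Frame S where
  X := F.Y - F.X
  Y := F.Y
  norm_sq z := by rw [F.norm_sq, LinearMap.sub_apply]; ring
  gen u hu v hv h := by
    obtain ⟨h₁, h₂, h₃⟩ := F.gen u hu v hv h
    simp only [LinearMap.sub_apply]
    exact ⟨fun h => h₃ (by linarith), h₂, fun h => h₁ (by linarith)⟩
  edge u v := by simpa only [LinearMap.sub_apply, hexNorm_flip, sameSextant_flip] using F.edge u v
  tt u v := by simpa only [LinearMap.sub_apply, hexNorm_flip, sameSextant_flip] using F.tt u v

@[simp] lemma next_X (F : Frame S) (z : ℂ) : F.next.X z = F.X z - F.Y z := rfl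
@[simp] lemma next_Y (F : Frame S) (z : ℂ) : F.next.Y z = F.X z := rfl
@[simp] lemma flip_X (F : Frame S) (z : ℂ) : F.flip.X z = F.Y z - F.X z := rfl
@[simp] lemma flip_Y (F : Frame S) (z : ℂ) : F.flip.Y z = F.Y z := rfl

lemma hexNorm_up {x y : ℝ} (h₁ : 0 < x) (h₂ : x < y) : hexNorm x y = y := by
  rw [hexNorm, abs_of_pos h₁, abs_of_pos (h₁.trans h₂), abs_of_neg (by linarith),
    max_eq_right h₂.le, max_eq_left (by linarith)]

lemma hexNorm_down {x y : ℝ} (h₁ : x < 0) (h₂ : y < x) : hexNorm x y = -y := by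
  rw [hexNorm, abs_of_neg h₁, abs_of_neg (h₂.trans h₁), abs_of_pos (by linarith),
    max_eq_right (a := -x) (by linarith), max_eq_left (by linarith)]

lemma sameSextant_up {x y x' y' : ℝ} (h₁ : 0 < x) (h₂ : x < y) :
    SameSextant x y x' y' ↔ 0 < x' ∧ x' < y' := by
  rw [SameSextant, mul_pos_iff_of_pos_left h₁, mul_pos_iff_of_pos_left (h₁.trans h₂),
    ← neg_mul_neg, mul_pos_iff_of_pos_left (by linarith)]
  constructor
  · rintro ⟨h, -, h'⟩; exact ⟨h, by linarith⟩
  · rintro ⟨h, h'⟩; exact ⟨h, by linarith, by linarith⟩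

lemma sameSextant_down {x y x' y' : ℝ} (h₁ : x < 0) (h₂ : y < x) :
    SameSextant x y x' y' ↔ x' < 0 ∧ y' < x' := by
  have := sameSextant_up (x := -x) (y := -y) (x' := -x') (y' := -y') (by linarith) (by linarith)
  rw [neg_pos, neg_lt_neg_iff] at this
  rw [← this, SameSextant, SameSextant, neg_mul_neg, neg_mul_neg, ← neg_mul_neg (x - y)]
  ring_nf

/-- The edges of `Θ₆(S)` into the sextant `0 < X < Y` of their source. -/
lemma edge_up (F : Frame S) {a b : ℂ} (h₁ : F.X a < F.X b) (h₂ : F.X b - F.X a < F.Y b - F.Y a) :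
    ThetaEdge S a b ↔ a ∈ S ∧ b ∈ S ∧ ∀ w ∈ S, F.X a < F.X w →
      F.X w - F.X a < F.Y w - F.Y a → F.Y b ≤ F.Y w := by
  have hne : b ≠ a := by rintro rfl; exact lt_irrefl _ h₁
  rw [F.edge]
  simp only [map_sub, sameSextant_up (sub_pos.2 h₁) h₂, hexNorm_up (sub_pos.2 h₁) h₂]
  refine and_congr_right fun _ => and_congr_right fun _ => ?_
  constructor
  · rintro ⟨-, h⟩ w hw hx hy
    have := h w hw ⟨sub_pos.2 hx, hy⟩
    rw [hexNorm_up (sub_pos.2 hx) hy] at this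
    linarith
  · refine fun h => ⟨hne, fun w hw ⟨hx, hy⟩ => ?_⟩
    rw [hexNorm_up hx hy]
    linarith [h w hw (by linarith) hy]

/-- The edges of `ΘΘ₆(S)` into the sextant `0 < X < Y` of their source. -/
lemma tt_up (F : Frame S) {a b : ℂ} (h₁ : F.X a < F.X b) (h₂ : F.X b - F.X a < F.Y b - F.Y a) :
    ThetaThetaEdge S a b ↔ ThetaEdge S a b ∧ ∀ w, ThetaEdge S w b → F.X w < F.X b →
      F.X b - F.X w < F.Y b - F.Y w → F.Y w ≤ F.Y a := by
  have h₁' : F.X a - F.X b < 0 := by linarith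
  have h₂' : F.Y a - F.Y b < F.X a - F.X b := by linarith
  rw [F.tt]
  simp only [map_sub, sameSextant_down h₁' h₂', hexNorm_down h₁' h₂']
  refine and_congr_right fun _ => forall_congr' fun w => forall_congr' fun hw => ?_
  constructor
  · intro h hx hy
    have := h ⟨by linarith, by linarith⟩
    rw [hexNorm_down (by linarith) (by linarith)] at this
    linarith
  · rintro h ⟨hx, hy⟩
    rw [hexNorm_down hx hy]
    linarith [h (by linarith) (by linarith)]

/-- The edges of `ΘΘ₆(S)` into the sextant `0 < Y < X` of their source. -/
lemma tt_right (F : Frame S) {a b : ℂ} (h₁ : F.Y a < F.Y b) (h₂ : F.Y b - F.Y a < F.X b - F.X a) :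
    ThetaThetaEdge S a b ↔ ThetaEdge S a b ∧ ∀ w, ThetaEdge S w b → F.Y w < F.Y b →
      F.Y b - F.Y w < F.X b - F.X w → F.X w ≤ F.X a := by
  rw [F.next.tt_up (by simp only [next_X]; linarith) (by simp only [next_X, next_Y]; linarith)]
  simp only [next_X, next_Y]
  refine and_congr_right fun _ => forall_congr' fun w => forall_congr' fun hw => ?_
  constructor <;> intro h hx hy <;> exact h (by linarith) (by linarith)

lemma exists_edge_up (F : Frame S) {a e : ℂ} (ha : a ∈ S) (he : e ∈ S) (h₁ : F.X a < F.X e)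
    (h₂ : F.X e - F.X a < F.Y e - F.Y a) :
    ∃ b ∈ S, F.X a < F.X b ∧ F.X b - F.X a < F.Y b - F.Y a ∧ F.Y b ≤ F.Y e ∧ ThetaEdge S a b ∧
      ∀ w ∈ S, F.X a < F.X w → F.X w - F.X a < F.Y w - F.Y a → F.Y b ≤ F.Y w := by
  classical
  obtain ⟨b, hb, hmin⟩ := (S.filter fun w => F.X a < F.X w ∧
    F.X w - F.X a < F.Y w - F.Y a).exists_min_image F.Y ⟨e, by simp [he, h₁, h₂]⟩
  simp only [Finset.mem_filter, and_imp] at hb hmin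
  obtain ⟨hbS, hb₁, hb₂⟩ := hb
  exact ⟨b, hbS, hb₁, hb₂, hmin e he h₁ h₂, (F.edge_up hb₁ hb₂).2 ⟨ha, hbS, hmin⟩, hmin⟩

lemma exists_edge_right (F : Frame S) {a e : ℂ} (ha : a ∈ S) (he : e ∈ S) (h₁ : F.Y a < F.Y e)
    (h₂ : F.Y e - F.Y a < F.X e - F.X a) :
    ∃ b ∈ S, F.Y a < F.Y b ∧ F.Y b - F.Y a < F.X b - F.X a ∧ F.X b ≤ F.X e ∧ ThetaEdge S a b ∧
      ∀ w ∈ S, F.Y a < F.Y w → F.Y w - F.Y a < F.X w - F.X a → F.X b ≤ F.X w := by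
  obtain ⟨b, hb, h₃, h₄, h₅, h₆, h₇⟩ := F.next.exists_edge_up ha he
    (by simp only [next_X]; linarith) (by simp only [next_X, next_Y]; linarith)
  simp only [next_X, next_Y] at h₃ h₄ h₅ h₇
  exact ⟨b, hb, by linarith, by linarith, h₅, h₆,
    fun w hw hx hy => h₇ w hw (by linarith) (by linarith)⟩

/-- The incoming edge of `b` that survives in `ΘΘ₆(S)` in the cone of `b` containing `a`. -/
lemma exists_tt_up (F : Frame S) {a b : ℂ} (hab : ThetaEdge S a b) (h₁ : F.X a < F.X b)
    (h₂ : F.X b - F.X a < F.Y b - F.Y a) :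
    ∃ c, ThetaThetaEdge S c b ∧ F.X c < F.X b ∧ F.X b - F.X c < F.Y b - F.Y c ∧
      F.Y a ≤ F.Y c := by
  classical
  obtain ⟨c, hc, hmax⟩ := (S.filter fun w => ThetaEdge S w b ∧ F.X w < F.X b ∧
    F.X b - F.X w < F.Y b - F.Y w).exists_max_image F.Y ⟨a, by simp [hab, h₁, h₂, hab.1]⟩
  simp only [Finset.mem_filter, and_imp] at hc hmax
  obtain ⟨hcS, hcb, hc₁, hc₂⟩ := hc
  exact ⟨c, (F.tt_up hc₁ hc₂).2 ⟨hcb, fun w hw => hmax w hw.1 hw⟩, hc₁, hc₂,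
    hmax a hab.1 hab h₁ h₂⟩

lemma dist_le_of_up (F : Frame S) {a b : ℂ} (h₁ : F.X a ≤ F.X b)
    (h₂ : F.X b - F.X a ≤ F.Y b - F.Y a) : dist a b ≤ F.Y b - F.Y a := by
  have h := F.norm_sq (b - a)
  rw [map_sub, map_sub] at h
  rw [dist_comm, dist_eq_norm]
  refine le_of_sq_le_sq ?_ (by linarith)
  rw [h]
  nlinarith

lemma dist_le_add (F : Frame S) {a b : ℂ} (h₁ : F.X a ≤ F.X b) (h₂ : F.Y a ≤ F.Y b) :
    dist a b ≤ (F.X b - F.X a) + (F.Y b - F.Y a) := by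
  have h := F.norm_sq (b - a)
  rw [map_sub, map_sub] at h
  rw [dist_comm, dist_eq_norm]
  refine le_of_sq_le_sq ?_ (by linarith)
  rw [h]
  nlinarith [mul_nonneg (sub_nonneg.2 h₁) (sub_nonneg.2 h₂)]

/-- The orientation determinant of `p, u, v` in the coordinates of the frame. -/
def cr (F : Frame S) (p u v : ℂ) : ℝ :=
  (F.X u - F.X p) * (F.Y v - F.Y p) - (F.Y u - F.Y p) * (F.X v - F.X p)

lemma ext_coord (F : Frame S) {z w : ℂ} (hx : F.X z = F.X w) (hy : F.Y z = F.Y w) : z = w := by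
  have h := F.norm_sq (z - w)
  rw [map_sub, map_sub, hx, hy] at h
  rw [← sub_eq_zero, ← norm_eq_zero]
  simpa using h

/-- No point of a set in convex position lies in a triangle spanned by three others. -/
lemma no_tri (F : Frame S) (hconv : ConvexPos S) {p a b c : ℂ} (hp : p ∈ S) (ha : a ∈ S)
    (hb : b ∈ S) (hc : c ∈ S) (h₁ : 0 ≤ F.cr p b c) (h₂ : 0 < F.cr p c a) (h₃ : 0 < F.cr p a b) :
    False := by
  have hpa : a ≠ p := by rintro rfl; simp [cr] at h₃
  have hpb : b ≠ p := by rintro rfl; simp [cr] at h₃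
  have hpc : c ≠ p := by rintro rfl; simp [cr] at h₂
  have hext := (convex_convexHull ℝ (S : Set ℂ)
    |>.mem_extremePoints_iff_mem_sdiff_convexHull_sdiff).1 (hconv p hp)
  have hmem : ∀ z ∈ S, z ≠ p → z ∈ convexHull ℝ (convexHull ℝ (S : Set ℂ) \ {p}) :=
    fun z hz hzp => subset_convexHull ℝ _ ⟨subset_convexHull ℝ _ hz, hzp⟩
  have hC : Convex ℝ (convexHull ℝ (convexHull ℝ (S : Set ℂ) \ {p})) := convex_convexHull ℝ _
  set T := F.cr p b c + F.cr p c a + F.cr p a b with hT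
  have hTpos : 0 < T := by linarith
  have key := hC.sum_mem (t := Finset.univ) (w := ![F.cr p b c / T, F.cr p c a / T, F.cr p a b / T])
    (z := ![a, b, c]) (by
      intro i _
      fin_cases i
      · exact div_nonneg h₁ hTpos.le
      · exact div_nonneg h₂.le hTpos.le
      · exact div_nonneg h₃.le hTpos.le) (by
      simp only [Fin.sum_univ_three, Matrix.cons_val]
      rw [← add_div, ← add_div, ← hT, div_self hTpos.ne']) (by
      intro i _
      fin_cases i
      · exact hmem a ha hpa
      · exact hmem b hb hpb
      · exact hmem c hc hpc)
  refine hext.2 ?_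
  convert key using 1
  simp only [Fin.sum_univ_three, Matrix.cons_val]
  apply F.ext_coord
  · simp only [map_add, map_smul, smul_eq_mul]
    field_simp
    rw [hT]; simp only [cr]; ring
  · simp only [map_add, map_smul, smul_eq_mul]
    field_simp
    rw [hT]; simp only [cr]; ring

/-! ### The convex chain -/

/-- A `Θ₆`-edge `a → b` with `b` in the sextant `0 < X < Y` of `a`, and a point `c` in the cone of
`b` containing `a`, closer to `b` than `a` and on the clockwise side of the triangle of `a → b`.
The field `empty` says that this triangle contains no point of `S`. -/
structure Conf (F : Frame S) (a b c : ℂ) : Prop where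
  conv : ConvexPos S
  ha : a ∈ S
  hb : b ∈ S
  hc : c ∈ S
  ab₁ : F.X a < F.X b
  ab₂ : F.X b - F.X a < F.Y b - F.Y a
  empty : ∀ w ∈ S, F.X a < F.X w → F.X w - F.X a < F.Y w - F.Y a → F.Y b ≤ F.Y w
  cb₁ : F.X c < F.X b
  cb₂ : F.X b - F.X c < F.Y b - F.Y c
  ac₁ : F.Y a < F.Y c
  ac₂ : F.Y c - F.Y a < F.X c - F.X a

/-- The points of `S` other than `a` in the canonical triangle with apex `a` and with `c` on the
opposite side. They form a convex chain from `a` to `c`. -/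
def InD (F : Frame S) (a c d : ℂ) : Prop :=
  d ∈ S ∧ F.Y a < F.Y d ∧ F.Y d - F.Y a < F.X d - F.X a ∧ F.X d ≤ F.X c

variable {F : Frame S} {a b c : ℂ}

lemma Conf.inD_c (C : Conf F a b c) : InD F a c c := ⟨C.hc, C.ac₁, C.ac₂, le_rfl⟩

/-- `X` and `Y` are ordered in the same way on the chain. -/
lemma Conf.mono (C : Conf F a b c) {w d : ℂ} (hw : InD F a c w) (hd : InD F a c d)
    (h₁ : F.X w < F.X d) : F.Y w ≤ F.Y d := by
  by_contra! h₂
  obtain ⟨hwS, hw₁, hw₂, hw₃⟩ := hw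
  obtain ⟨hdS, hd₁, hd₂, hd₃⟩ := hd
  have := C.ab₁; have := C.ab₂; have := C.cb₁
  refine F.no_tri C.conv hwS C.hb C.ha hdS (le_of_lt ?_) ?_ ?_ <;> simp only [cr]
  · nlinarith [mul_pos (sub_pos.2 hw₁) (sub_pos.2 h₁),
      mul_pos (sub_pos.2 h₂) (show 0 < F.X w - F.X a by linarith)]
  · nlinarith [mul_pos (sub_pos.2 h₂) (show 0 < F.X b - F.X d by linarith),
      mul_pos (sub_pos.2 h₁) (show 0 < F.Y b - F.Y d by linarith)]
  · nlinarith [mul_pos (sub_pos.2 C.ab₁) (sub_pos.2 hw₂),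
      mul_pos (sub_pos.2 C.ab₂) (show 0 < F.X w - F.X a by linarith)]

/-- A point of the chain lies below the chord from `a` to a later point in its sextant
`0 < Y < X`. -/
lemma Conf.below (C : Conf F a b c) {d e : ℂ} (hd : InD F a c d) (he : InD F a c e)
    (h₁ : F.Y d < F.Y e) (h₂ : F.Y e - F.Y d < F.X e - F.X d) : 0 < F.cr d e a := by
  by_contra! h
  obtain ⟨hdS, hd₁, hd₂, hd₃⟩ := hd
  obtain ⟨heS, he₁, he₂, he₃⟩ := he
  have := C.ab₁; have := C.ab₂; have := C.cb₁
  refine F.no_tri C.conv hdS C.hb C.ha heS ?_ ?_ ?_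
  · simp only [cr] at h ⊢; linarith
  · simp only [cr]
    nlinarith [mul_pos (sub_pos.2 h₂) (show 0 < F.Y b - F.Y e by linarith),
      mul_pos (sub_pos.2 h₁) (show 0 < (F.Y b - F.Y e) - (F.X b - F.X e) by linarith)]
  · simp only [cr]
    nlinarith [mul_pos (sub_pos.2 C.ab₁) (sub_pos.2 hd₂),
      mul_pos (sub_pos.2 C.ab₂) (show 0 < F.X d - F.X a by linarith)]

/-- Every point of `S` below `c` is also on the left of `c`, since otherwise `c` would lie in the
triangle spanned by it, `a` and `b`. -/
lemma Conf.left_of_below (C : Conf F a b c) {e : ℂ} (he : e ∈ S) (h : F.Y e < F.Y c) :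
    F.X e ≤ F.X c := by
  by_contra! h'
  have := C.ac₁; have := C.ac₂; have := C.cb₁; have := C.cb₂
  refine F.no_tri C.conv C.hc C.hb C.ha he (le_of_lt ?_) ?_ ?_ <;> simp only [cr]
  · nlinarith [mul_pos (sub_pos.2 h') (sub_pos.2 C.ac₁),
      mul_pos (sub_pos.2 h) (show 0 < F.X c - F.X a by linarith)]
  · nlinarith [mul_pos (sub_pos.2 h') (show 0 < F.Y b - F.Y c by linarith),
      mul_pos (sub_pos.2 h) (sub_pos.2 C.cb₁)]
  · nlinarith [mul_pos (sub_pos.2 C.ac₂) (show 0 < F.Y b - F.Y c by linarith),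
      mul_pos (sub_pos.2 C.ac₁) (show 0 < (F.Y b - F.Y c) - (F.X b - F.X c) by linarith)]

/-- Chain steps of slope less than `π/3` are edges of `ΘΘ₆(S)`, except possibly the one at `a`. -/
lemma Conf.step_right (C : Conf F a b c) {d e : ℂ} (hd : InD F a c d) (he : InD F a c e)
    (h₁ : F.Y d < F.Y e) (h₂ : F.Y e - F.Y d < F.X e - F.X d) :
    ∃ d', InD F a c d' ∧ ThetaThetaEdge S d d' ∧ F.X d < F.X d' ∧ F.Y d ≤ F.Y d' := by
  obtain ⟨d', hd'S, k₁, k₂, k₃, k₄, k₅⟩ := F.exists_edge_right hd.1 he.1 h₁ h₂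
  have hd' : InD F a c d' :=
    ⟨hd'S, hd.2.1.trans k₁, by linarith [hd.2.2.1], k₃.trans he.2.2.2⟩
  refine ⟨d', hd', (F.tt_right k₁ k₂).2 ⟨k₄, fun w hw w₁ w₂ => ?_⟩, by linarith, k₁.le⟩
  by_contra! hwd
  have hbel := C.below hd hd' k₁ k₂
  have hne : w ≠ d := by rintro rfl; exact lt_irrefl _ hwd
  obtain ⟨g₁, g₂, g₃⟩ := F.gen w hw.1 d hd.1 hne
  have had := hd.2.1
  have had₂ := hd.2.2.1
  rcases lt_or_gt_of_ne g₂ with hY | hY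
  · -- `d` lies in the triangle spanned by `a`, `w`, `d'`
    refine F.no_tri C.conv hd.1 hw.1 hd'S C.ha hbel.le ?_ ?_ <;> simp only [cr]
    · nlinarith [mul_pos (sub_pos.2 had) (sub_pos.2 hwd),
        mul_pos (sub_pos.2 hY) (show 0 < F.X d - F.X a by linarith)]
    · nlinarith [mul_pos (sub_pos.2 k₁) (sub_pos.2 hwd),
        mul_pos (sub_pos.2 hY) (show 0 < F.X d' - F.X d by linarith)]
  rcases lt_or_gt_of_ne g₃ with hZ | hZ
  swap
  · linarith [k₅ w hw.1 hY (by linarith)]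
  have hwD : InD F a c w := by
    refine ⟨hw.1, by linarith, ?_, by linarith [hd'.2.2.2]⟩
    by_contra! hZ'
    have hwa : w ≠ a := by rintro rfl; linarith
    obtain ⟨-, -, g₄⟩ := F.gen w hw.1 a C.ha hwa
    have hZ'' : F.X w - F.Y w < F.X a - F.Y a := lt_of_le_of_ne (by linarith) g₄
    have := C.empty w hw.1 (by linarith) (by linarith)
    have h₃ : F.Y d' ≤ F.Y c := by
      by_contra! h₃
      rcases hd'.2.2.2.lt_or_eq with h₄ | h₄
      · linarith [C.mono hd' C.inD_c h₄]
      · have : d' ≠ c := by rintro rfl; exact lt_irrefl _ h₃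
        exact (F.gen d' hd'S c C.hc this).1 h₄
    linarith [C.cb₁, C.cb₂]
  -- `w` lies in the triangle spanned by `a`, `d`, `d'`
  have hbelw := C.below hwD hd' w₁ w₂
  refine F.no_tri C.conv hw.1 C.ha hd.1 hd'S (le_of_lt ?_) hbelw ?_ <;> simp only [cr]
  · nlinarith [mul_pos (sub_pos.2 hY) (sub_pos.2 k₂), mul_pos (sub_pos.2 k₁)
      (show 0 < (F.Y w - F.Y d) - (F.X w - F.X d) by linarith)]
  · nlinarith [mul_pos (sub_pos.2 had) (show 0 < (F.Y w - F.Y d) - (F.X w - F.X d) by linarith),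
      mul_pos (sub_pos.2 had₂) (sub_pos.2 hY)]

/-- Chain steps of slope greater than `π/3` are edges of `ΘΘ₆(S)`. -/
lemma Conf.step_up (C : Conf F a b c) {d : ℂ} (hd : InD F a c d) (hdc : d ≠ c)
    (hno : ∀ e, InD F a c e → F.Y d < F.Y e → F.X e - F.X d ≤ F.Y e - F.Y d) :
    ∃ d', InD F a c d' ∧ ThetaThetaEdge S d d' ∧ F.X d < F.X d' ∧ F.Y d ≤ F.Y d' := by
  obtain ⟨g₁, g₂, g₃⟩ := F.gen d hd.1 c C.hc hdc
  have c₁ : F.X d < F.X c := lt_of_le_of_ne hd.2.2.2 g₁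
  have c₂ : F.Y d < F.Y c := lt_of_le_of_ne (C.mono hd C.inD_c c₁) g₂
  have c₃ : F.X c - F.X d < F.Y c - F.Y d :=
    lt_of_le_of_ne (hno c C.inD_c c₂) fun h => g₃ (by linarith)
  obtain ⟨d', hd'S, k₁, k₂, k₃, k₄, k₅⟩ := F.exists_edge_up hd.1 C.hc c₁ c₃
  have had := hd.2.1
  have had₂ := hd.2.2.1
  have hcb₁ := C.cb₁
  have hcb₂ := C.cb₂
  have hd' : InD F a c d' := by
    refine ⟨hd'S, by linarith, ?_, ?_⟩
    · by_contra! hZ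
      have hne : d' ≠ a := by rintro rfl; linarith
      obtain ⟨-, -, g₄⟩ := F.gen d' hd'S a C.ha hne
      have hZ' : F.X d' - F.Y d' < F.X a - F.Y a := lt_of_le_of_ne (by linarith) g₄
      linarith [C.empty d' hd'S (by linarith) (by linarith)]
    · rcases k₃.lt_or_eq with h | h
      · exact C.left_of_below hd'S h
      · by_cases h' : d' = c
        · rw [h']
        · exact absurd h (F.gen d' hd'S c C.hc h').2.1
  refine ⟨d', hd', (F.tt_up k₁ k₂).2 ⟨k₄, fun w hw w₁ w₂ => ?_⟩, k₁, by linarith⟩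
  by_contra! hwd
  have hd'₂ := hd'.2.2.1
  have hwD : InD F a c w := ⟨hw.1, by linarith, by linarith, by linarith [hd'.2.2.2]⟩
  have hne : w ≠ d := by rintro rfl; exact lt_irrefl _ hwd
  obtain ⟨g₁, g₂, g₃⟩ := F.gen w hw.1 d hd.1 hne
  rcases lt_or_gt_of_ne g₁ with hX | hX
  · linarith [C.mono hwD hd hX]
  · have h₁ : F.X w - F.X d < F.Y w - F.Y d :=
      lt_of_le_of_ne (hno w hwD hwd) fun h => g₃ (by linarith)
    linarith [k₅ w hw.1 hX h₁]

/-- The chain from any of its points other than `a` to `c` is a path in `ΘΘ₆(S)`. -/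
lemma Conf.chain (C : Conf F a b c) {d : ℂ} (hd : InD F a c d) :
    HasPath S d c ((F.X c - F.X d) + (F.Y c - F.Y d)) := by
  classical
  induction hn : (S.filter fun e => F.X d < F.X e).card using Nat.strong_induction_on
    generalizing d with
  | _ n ih =>
    by_cases hdc : d = c
    · subst hdc
      exact (HasPath.refl S d).mono (by simp)
    have hstep : ∃ d', InD F a c d' ∧ ThetaThetaEdge S d d' ∧ F.X d < F.X d' ∧
        F.Y d ≤ F.Y d' := by
      by_cases h : ∃ e, InD F a c e ∧ F.Y d < F.Y e ∧ F.Y e - F.Y d < F.X e - F.X d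
      · obtain ⟨e, he, h₁, h₂⟩ := h
        exact C.step_right hd he h₁ h₂
      · push Not at h
        exact C.step_up hd hdc h
    obtain ⟨d', hd', htt, hX, hY⟩ := hstep
    have hlt : (S.filter fun e => F.X d' < F.X e).card < n := by
      rw [← hn]
      refine Finset.card_lt_card (Finset.ssubset_iff_subset_ne.2 ⟨?_, fun h => ?_⟩)
      · intro e he
        simp only [Finset.mem_filter] at he ⊢
        exact ⟨he.1, hX.trans he.2⟩
      · have : d' ∈ S.filter fun e => F.X d' < F.X e := by rw [h]; simp [hd'.1, hX]
        simp at this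
    exact ((ih _ hlt hd' rfl).cons (Or.inl htt) (F.dist_le_add hX.le hY)).mono (by linarith)

/-! ### The spiral -/

/-- One turn of the spiral: the path from `a` to `b` is reduced to one from `a` to its neighbour
`d` in the next cone clockwise, and everything that prevents `a → d` from being an edge of
`ΘΘ₆(S)` again lies on the clockwise side. -/
lemma Conf.turn (C : Conf F a b c) (hcb : ThetaThetaEdge S c b) :
    ∃ d, ThetaEdge S a d ∧ F.Y a < F.Y d ∧ F.Y d - F.Y a < F.X d - F.X a ∧ F.X d ≤ F.X b ∧
      HasPath S d b ((F.X b - F.X d) + (F.Y b - F.Y d)) ∧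
      ∀ w, ThetaEdge S w d → F.Y w < F.Y d → F.Y d - F.Y w < F.X d - F.X w → F.X a < F.X w →
        F.Y w < F.Y a := by
  obtain ⟨d, hdS, k₁, k₂, k₃, k₄, k₅⟩ := F.exists_edge_right C.ha C.hc C.ac₁ C.ac₂
  have hd : InD F a c d := ⟨hdS, k₁, k₂, k₃⟩
  have hcb₁ := C.cb₁
  have hcb₂ := C.cb₂
  refine ⟨d, k₄, k₁, k₂, k₃.trans C.cb₁.le, ?_, fun w hw w₁ w₂ hwa => ?_⟩
  · exact ((C.chain hd).trans (HasPath.single (Or.inl hcb)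
      (F.dist_le_of_up C.cb₁.le C.cb₂.le))).mono (by linarith)
  · by_contra! hY
    have hne : w ≠ a := by rintro rfl; exact lt_irrefl _ hwa
    obtain ⟨g₁, g₂, g₃⟩ := F.gen w hw.1 a C.ha hne
    have hY' : F.Y a < F.Y w := lt_of_le_of_ne hY g₂.symm
    rcases lt_or_gt_of_ne g₃ with hZ | hZ
    · have := C.empty w hw.1 hwa (by linarith)
      have h₃ : F.Y d ≤ F.Y c := by
        rcases k₃.lt_or_eq with h | h
        · exact C.mono hd C.inD_c h
        · by_cases h' : d = c
          · rw [h']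
          · exact absurd h (F.gen d hdS c C.hc h').1
      linarith
    · linarith [k₅ w hw.1 hY' (by linarith)]

/-- Whatever prevents `a → b` from being an edge of `ΘΘ₆(S)` lies on its clockwise side. -/
def Clockwise (F : Frame S) (a b : ℂ) : Prop :=
  ∀ w, ThetaEdge S w b → F.X w < F.X b → F.X b - F.X w < F.Y b - F.Y w → F.Y a < F.Y w →
    F.X a - F.Y a < F.X w - F.Y w

/-- If the neighbour of `a` in the next cone clockwise can be reached within `k` turns of the
spiral, then `b` can be reached within `k + 1` turns. -/
lemma level (hconv : ConvexPos S) (F : Frame S) {a b : ℂ} (k : ℝ) (hk : 0 ≤ k)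
    (hab : ThetaEdge S a b) (h₁ : F.X a < F.X b) (h₂ : F.X b - F.X a < F.Y b - F.Y a)
    (hcw : Clockwise F a b)
    (hrec : ∀ c ∈ S, F.Y a < F.Y c → F.Y c - F.Y a < F.X c - F.X a → ∀ d, ThetaEdge S a d →
      F.Y a < F.Y d → F.Y d - F.Y a < F.X d - F.X a → Clockwise F.next a d →
      HasPath S a d ((F.X d - F.X a) + k * ((F.X d - F.X a) - (F.Y d - F.Y a)))) :
    HasPath S a b ((F.Y b - F.Y a) + (k + 1) * (F.X b - F.X a)) := by
  obtain ⟨c, hcb, c₁, c₂, c₃⟩ := F.exists_tt_up hab h₁ h₂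
  by_cases hca : c = a
  · subst hca
    refine HasPath.single (Or.inl hcb) ((F.dist_le_of_up h₁.le h₂.le).trans ?_)
    have := mul_nonneg (show (0 : ℝ) ≤ k + 1 by linarith) (sub_nonneg.2 h₁.le)
    linarith
  have c₃' : F.Y a < F.Y c := lt_of_le_of_ne c₃ (F.gen c hcb.1.1 a hab.1 hca).2.1.symm
  have c₄ := hcw c hcb.1 c₁ c₂ c₃'
  have C : Conf F a b c := ⟨hconv, hab.1, hab.2.1, hcb.1.1, h₁, h₂,
    ((F.edge_up h₁ h₂).1 hab).2.2, c₁, c₂, c₃', by linarith⟩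
  obtain ⟨d, hd, d₁, d₂, d₃, hp, hd'⟩ := C.turn hcb
  have hcwd : Clockwise F.next a d := by
    intro w hw w₁ w₂ w₃
    simp only [next_X, next_Y] at w₁ w₂ w₃ ⊢
    linarith [hd' w hw (by linarith) (by linarith) w₃]
  refine ((hrec c hcb.1.1 c₃' (by linarith) d hd d₁ d₂ hcwd).trans hp).mono ?_
  have : k * ((F.X d - F.X a) - (F.Y d - F.Y a)) ≤ k * (F.X b - F.X a) :=
    mul_le_mul_of_nonneg_left (by linarith) hk
  linarith

/-- In convex position, `a` does not have points in three alternate cones. -/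
lemma not_spread (hconv : ConvexPos S) (F : Frame S) {a b w y : ℂ} (ha : a ∈ S) (hb : b ∈ S)
    (hw : w ∈ S) (hy : y ∈ S) (h₁ : F.X a < F.X b) (h₂ : F.X b - F.X a < F.Y b - F.Y a)
    (w₃ : F.X a < F.X w) (w₄ : F.Y w < F.Y a) (y₅ : F.Y y < F.Y a)
    (y₆ : F.X y - F.X a < F.Y y - F.Y a) : False := by
  refine F.no_tri hconv ha hw hb hy (le_of_lt ?_) ?_ ?_ <;> simp only [cr]
  · nlinarith [mul_pos (sub_pos.2 y₆) (show 0 < F.Y b - F.Y a by linarith),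
      mul_pos (sub_pos.2 y₅) (sub_pos.2 h₂)]
  · nlinarith [mul_pos (sub_pos.2 w₄) (show 0 < F.X a - F.X y by linarith),
      mul_pos (sub_pos.2 y₅) (sub_pos.2 w₃)]
  · nlinarith [mul_pos (sub_pos.2 w₃) (show 0 < F.Y b - F.Y a by linarith),
      mul_pos (sub_pos.2 w₄) (sub_pos.2 h₁)]

/-- The spiral makes at most three turns: a fourth one would put `a` into the triangle spanned by
points of `S` in three alternate cones of `a`. -/
lemma spiral (hconv : ConvexPos S) (F : Frame S) {a b c : ℂ} (hab : ThetaEdge S a b)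
    (h₁ : F.X a < F.X b) (h₂ : F.X b - F.X a < F.Y b - F.Y a) (hcb : ThetaThetaEdge S c b)
    (c₁ : F.X c < F.X b) (c₂ : F.X b - F.X c < F.Y b - F.Y c) (c₃ : F.Y a < F.Y c)
    (c₄ : F.X a - F.Y a < F.X c - F.Y c) :
    HasPath S a b ((F.Y b - F.Y a) + 3 * (F.X b - F.X a)) := by
  have hcS := hcb.1.1
  have C : Conf F a b c := ⟨hconv, hab.1, hab.2.1, hcS, h₁, h₂,
    ((F.edge_up h₁ h₂).1 hab).2.2, c₁, c₂, c₃, by linarith⟩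
  obtain ⟨d, hd, d₁, d₂, d₃, hp, hd'⟩ := C.turn hcb
  have hcwd : Clockwise F.next a d := by
    intro w hw w₁ w₂ w₃
    simp only [next_X, next_Y] at w₁ w₂ w₃ ⊢
    linarith [hd' w hw (by linarith) (by linarith) w₃]
  have h1 : HasPath S a d ((F.next.Y d - F.next.Y a) + (1 + 1) * (F.next.X d - F.next.X a)) := by
    refine level hconv F.next 1 zero_le_one hd (by simp only [next_X]; linarith)
      (by simp only [next_X, next_Y]; linarith) hcwd ?_
    intro w hwS w₁ w₂ d' hd' d'₁ d'₂ hcw'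
    have h2 := level hconv F.next.next 0 le_rfl hd'
      (by simp only [next_X, next_Y] at *; linarith) (by simp only [next_X, next_Y] at *; linarith)
      hcw' ?_
    · refine h2.mono (le_of_eq ?_)
      simp only [next_X, next_Y]; ring
    intro x hxS x₁ x₂ d'' hd'' d''₁ d''₂ hcw''
    have e₁ : F.next.next.next.X a < F.next.next.next.X d'' := by
      simp only [next_X, next_Y] at *; linarith
    have e₂ : F.next.next.next.X d'' - F.next.next.next.X a <
        F.next.next.next.Y d'' - F.next.next.next.Y a := by
      simp only [next_X, next_Y] at *; linarith
    obtain ⟨y, hy, y₁, y₂, y₃⟩ := F.next.next.next.exists_tt_up hd'' e₁ e₂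
    by_cases hya : y = a
    · subst hya
      refine HasPath.single (Or.inl hy) ((F.next.next.next.dist_le_of_up e₁.le e₂.le).trans ?_)
      simp only [next_X, next_Y]; linarith
    exfalso
    have y₃' := lt_of_le_of_ne y₃ (F.next.next.next.gen y hy.1.1 a hab.1 hya).2.1.symm
    have y₄ := hcw'' y hy.1 y₁ y₂ y₃'
    simp only [next_X, next_Y] at y₃' y₄ w₁ w₂
    -- `b`, `w`, `y` lie in the sextants `0 < X < Y`, `Y < 0 < X` and `X < Y < 0` of `a`
    have w₃ : F.X a < F.X w := by linarith
    have w₄ : F.Y w < F.Y a := by linarith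
    have y₅ : F.Y y < F.Y a := by linarith
    have y₆ : F.X y - F.X a < F.Y y - F.Y a := by linarith
    exact not_spread hconv F hab.1 hab.2.1 hwS hy.1.1 h₁ h₂ w₃ w₄ y₅ y₆
  refine (h1.trans hp).mono ?_
  simp only [next_X, next_Y]
  linarith

/-- The bound `4 |ab|` for an edge into the sextant `0 < X < Y` of a frame. -/
lemma main_up (hconv : ConvexPos S) (F : Frame S) {a b : ℂ} (hab : ThetaEdge S a b)
    (h₁ : F.X a < F.X b) (h₂ : F.X b - F.X a < F.Y b - F.Y a) :
    HasPath S a b (4 * dist a b) := by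
  -- `(L + 3 s)² ≤ 16 (L² - L s + s²)` holds for `0 ≤ s ≤ L`, with equality at `s = L`
  have hbound : ∀ G : Frame S, G.X a < G.X b → G.X b - G.X a < G.Y b - G.Y a →
      (G.Y b - G.Y a) + 3 * (G.X b - G.X a) ≤ 4 * dist a b := by
    intro G g₁ g₂
    have h := G.norm_sq (b - a)
    rw [map_sub, map_sub] at h
    rw [dist_comm, dist_eq_norm]
    refine le_of_sq_le_sq ?_ (by positivity)
    rw [mul_pow, h]
    nlinarith [mul_pos (sub_pos.2 g₂) (sub_pos.2 g₁), mul_pos (sub_pos.2 g₂) (sub_pos.2 g₂)]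
  obtain ⟨c, hcb, c₁, c₂, c₃⟩ := F.exists_tt_up hab h₁ h₂
  by_cases hca : c = a
  · subst hca
    exact HasPath.single (Or.inl hcb) (by linarith [dist_nonneg (x := c) (y := b)])
  obtain ⟨-, g₂, g₃⟩ := F.gen c hcb.1.1 a hab.1 hca
  have c₃' : F.Y a < F.Y c := lt_of_le_of_ne c₃ g₂.symm
  rcases lt_or_gt_of_ne g₃ with c₄ | c₄
  · have f₁ : F.flip.X a < F.flip.X b := by simp only [flip_X]; linarith
    have f₂ : F.flip.X b - F.flip.X a < F.flip.Y b - F.flip.Y a := by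
      simp only [flip_X, flip_Y]; linarith
    have hca₁ : F.X c < F.X a := by
      by_contra! h
      have hne := (F.gen c hcb.1.1 a hab.1 hca).1
      linarith [((F.edge_up h₁ h₂).1 hab).2.2 c hcb.1.1 (lt_of_le_of_ne h hne.symm) (by linarith)]
    exact (spiral hconv F.flip hab f₁ f₂ hcb (by simp only [flip_X]; linarith)
      (by simp only [flip_X, flip_Y]; linarith) c₃'
      (by simp only [flip_X, flip_Y]; linarith)).mono (hbound F.flip f₁ f₂)
  · exact (spiral hconv F hab h₁ h₂ hcb c₁ c₂ c₃' c₄).mono (hbound F h₁ h₂)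

end Frame

/-! ### The standard frame -/

/-- First oblique coordinate with respect to the unit vectors at angles `0` and `2π/3`. -/
def stdX : ℂ →ₗ[ℝ] ℝ := Complex.reLm + (√3)⁻¹ • Complex.imLm

/-- Second oblique coordinate with respect to the unit vectors at angles `0` and `2π/3`. -/
def stdY : ℂ →ₗ[ℝ] ℝ := (2 * (√3)⁻¹) • Complex.imLm

lemma stdX_apply (z : ℂ) : stdX z = z.re + (√3)⁻¹ * z.im := by simp [stdX]

lemma stdY_apply (z : ℂ) : stdY z = 2 * (√3)⁻¹ * z.im := by simp [stdY]

lemma polar_argIn (z : ℂ) :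
    z.re = ‖z‖ * cos (argIn z) ∧ z.im = ‖z‖ * sin (argIn z) := by
  unfold argIn
  split_ifs <;> simp [Complex.norm_mul_cos_arg, Complex.norm_mul_sin_arg]

lemma projDist_eq_s1 (u v : ℂ) :
    projDist u v = ‖v - u‖ * cos (argIn (v - u) - bisAngle u v) := by
  obtain ⟨h₁, h₂⟩ := polar_argIn (v - u)
  have : Complex.exp (-(Complex.I * (bisAngle u v : ℂ))) =
      (cos (bisAngle u v) : ℂ) - (sin (bisAngle u v) : ℂ) * Complex.I := by
    rw [show -(Complex.I * (bisAngle u v : ℂ)) = ((-bisAngle u v : ℝ) : ℂ) * Complex.I by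
      push_cast; ring, Complex.exp_mul_I, ← Complex.ofReal_cos, ← Complex.ofReal_sin, cos_neg,
      sin_neg]
    push_cast; ring
  rw [projDist, this, Complex.mul_re, cos_sub, h₁, h₂]
  simp only [Complex.sub_re, Complex.sub_im, Complex.ofReal_re, Complex.ofReal_im,
    Complex.re_ofReal_mul, Complex.im_ofReal_mul, Complex.I_re, Complex.I_im]
  ring

/-- The counterclockwise rotation by `π/3` in oblique coordinates. -/
def hexRot (p : ℝ × ℝ) : ℝ × ℝ := (p.1 - p.2, p.1)

/-- The oblique coordinates of the vector of length `r` and angle `φ`. -/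
def hexPolar (r φ : ℝ) : ℝ × ℝ :=
  (r * cos φ + (√3)⁻¹ * (r * sin φ), 2 * (√3)⁻¹ * (r * sin φ))

lemma hexPolar_add (r φ : ℝ) (k : ℕ) :
    hexPolar r (φ + k * (π / 3)) = hexRot^[k] (hexPolar r φ) := by
  induction k with
  | zero => simp
  | succ k ih =>
    rw [Function.iterate_succ_apply', ← ih]
    have h3 : √3 * √3 = 3 := Real.mul_self_sqrt (by norm_num)
    have h0 : √3 ≠ 0 := by positivity
    have : φ + ((k + 1 : ℕ) : ℝ) * (π / 3) = (φ + k * (π / 3)) + π / 3 := by push_cast; ring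
    rw [this]
    generalize φ + k * (π / 3) = ψ
    simp only [hexPolar, hexRot, cos_add, sin_add, cos_pi_div_three, sin_pi_div_three]
    ext
    · simp only
      field_simp
      linear_combination -(r * sin ψ) * h3
    · simp only
      field_simp
      ring

/-- A vector off the cone boundaries is obtained from one in the sextant `0 < Y < X` by a number of
rotations by `π/3`, and the projective distance is `√3 / 2` times the `X`-coordinate of the
latter. -/
lemma cone_data {u v : ℂ} (hne : v ≠ u) (hg : ∀ j : ℕ, argIn (v - u) ≠ (j : ℝ) * (π / 3)) :
    ∃ k : ℕ, k < 6 ∧ coneIdx u v = k + 1 ∧ ∃ x y : ℝ, 0 < y ∧ y < x ∧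
      (stdX (v - u), stdY (v - u)) = hexRot^[k] (x, y) ∧ projDist u v = √3 / 2 * x := by
  have hπ := Real.pi_pos
  set θ := argIn (v - u) with hθ
  set r := ‖v - u‖ with hr
  have hrpos : 0 < r := norm_pos_iff.2 (sub_ne_zero.2 hne)
  obtain ⟨k, hk⟩ : ∃ k : ℕ, k = ⌊θ / (π / 3)⌋₊ := ⟨_, rfl⟩
  have hθ0 : 0 ≤ θ / (π / 3) := div_nonneg (argIn_nonneg _) (by positivity)
  have hidx : coneIdx u v = k + 1 := by rw [coneIdx, ← hθ, hk]; rfl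
  have hk₁ : (k : ℝ) * (π / 3) ≤ θ := by
    rw [hk, ← le_div_iff₀ (by positivity)]; exact Nat.floor_le hθ0
  have hk₁' : (k : ℝ) * (π / 3) < θ := lt_of_le_of_ne hk₁ (hg k).symm
  have hk₂ : θ < (k + 1) * (π / 3) := by
    rw [hk, ← div_lt_iff₀ (by positivity)]; exact Nat.lt_floor_add_one _
  have hk6 : k < 6 := by
    have : (k : ℝ) * (π / 3) < 6 * (π / 3) := by linarith [argIn_lt (v - u)]
    exact_mod_cast lt_of_mul_lt_mul_right this (by positivity)
  set φ := θ - k * (π / 3) with hφ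
  have h0 : 0 < √3 := by positivity
  have h3 : √3 * √3 = 3 := Real.mul_self_sqrt (by norm_num)
  have hs : 0 < sin φ := sin_pos_of_pos_of_lt_pi (by linarith) (by linarith)
  have hs' : 0 < sin (π / 3 - φ) := sin_pos_of_pos_of_lt_pi (by linarith) (by linarith)
  rw [sin_sub, cos_pi_div_three, sin_pi_div_three] at hs'
  refine ⟨k, hk6, hidx, (hexPolar r φ).1, (hexPolar r φ).2, ?_, ?_, ?_, ?_⟩
  · simp only [hexPolar]; positivity
  · simp only [hexPolar]
    have : 0 < r * (2 / √3) * (√3 / 2 * cos φ - 1 / 2 * sin φ) := by positivity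
    have h' : r * (2 / √3) * (√3 / 2 * cos φ - 1 / 2 * sin φ) =
      r * cos φ + (√3)⁻¹ * (r * sin φ) - 2 * (√3)⁻¹ * (r * sin φ) := by field_simp; ring
    linarith
  · rw [← hexPolar_add, show φ + k * (π / 3) = θ by rw [hφ]; ring, hexPolar, stdX_apply,
      stdY_apply, (polar_argIn (v - u)).1, (polar_argIn (v - u)).2]
  · rw [projDist_eq_s1, bisAngle, hidx,
      show argIn (v - u) - ((((k + 1 : ℕ) : ℝ) - 1) * (π / 3) + π / 6) = φ - π / 6 by
        push_cast; ring, cos_sub, cos_pi_div_six, sin_pi_div_six, hexPolar]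
    field_simp
    nlinarith

lemma hexNorm_rot {x y : ℝ} (k : ℕ) (hy : 0 < y) (hxy : y < x) :
    hexNorm (hexRot^[k] (x, y)).1 (hexRot^[k] (x, y)).2 = x := by
  induction k with
  | zero =>
    simp only [Function.iterate_zero, id]
    rw [hexNorm, abs_of_pos hy, abs_of_pos (hy.trans hxy), abs_of_pos (sub_pos.2 hxy),
      max_eq_left hxy.le, max_eq_left (by linarith)]
  | succ k ih =>
    rw [Function.iterate_succ_apply', hexRot]
    simp only [hexNorm_next]
    exact ih

/-- The signs of `X`, `Y` and `X - Y` in the six sextants. -/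
lemma sign_rot {x y : ℝ} {k : ℕ} (hk : k < 6) (hy : 0 < y) (hxy : y < x) :
    ((0 < (hexRot^[k] (x, y)).1 ↔ k < 2 ∨ k = 5) ∧ (hexRot^[k] (x, y)).1 ≠ 0) ∧
    ((0 < (hexRot^[k] (x, y)).2 ↔ k < 3) ∧ (hexRot^[k] (x, y)).2 ≠ 0) ∧
    ((0 < (hexRot^[k] (x, y)).1 - (hexRot^[k] (x, y)).2 ↔ k < 1 ∨ 3 < k) ∧
      (hexRot^[k] (x, y)).1 - (hexRot^[k] (x, y)).2 ≠ 0) := by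
  have pos : ∀ {t : ℝ} {P : Prop}, 0 < t → P → (0 < t ↔ P) ∧ t ≠ 0 :=
    fun ht hP => ⟨iff_of_true ht hP, ht.ne'⟩
  have neg : ∀ {t : ℝ} {P : Prop}, t < 0 → ¬ P → (0 < t ↔ P) ∧ t ≠ 0 :=
    fun ht hP => ⟨iff_of_false ht.not_gt hP, ht.ne⟩
  interval_cases k <;>
    simp only [Function.iterate_succ_apply, Function.iterate_zero, id, hexRot] <;>
    refine ⟨?_, ?_, ?_⟩ <;>
    first
      | exact pos (by linarith) (by norm_num)
      | exact neg (by linarith) (by norm_num)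

lemma mul_pos_iff_iff {s t : ℝ} (hs : s ≠ 0) (ht : t ≠ 0) : 0 < s * t ↔ (0 < s ↔ 0 < t) := by
  rcases lt_or_gt_of_ne hs with h | h
  · rw [← neg_mul_neg, mul_pos_iff_of_pos_left (neg_pos.2 h), neg_pos, iff_false_left h.not_gt,
      not_lt, le_iff_lt_or_eq, or_iff_left ht]
  · rw [mul_pos_iff_of_pos_left h, iff_true_left h]

lemma sameSextant_rot {x y x' y' : ℝ} {k l : ℕ} (hk : k < 6) (hl : l < 6) (hy : 0 < y)
    (hxy : y < x) (hy' : 0 < y') (hxy' : y' < x') :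
    SameSextant (hexRot^[k] (x, y)).1 (hexRot^[k] (x, y)).2 (hexRot^[l] (x', y')).1
      (hexRot^[l] (x', y')).2 ↔ k = l := by
  obtain ⟨⟨h₁, n₁⟩, ⟨h₂, n₂⟩, ⟨h₃, n₃⟩⟩ := sign_rot hk hy hxy
  obtain ⟨⟨h₁', n₁'⟩, ⟨h₂', n₂'⟩, ⟨h₃', n₃'⟩⟩ := sign_rot hl hy' hxy'
  rw [SameSextant, mul_pos_iff_iff n₁ n₁', mul_pos_iff_iff n₂ n₂', mul_pos_iff_iff n₃ n₃', h₁, h₂,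
    h₃, h₁', h₂', h₃']
  omega

variable {S : Finset ℂ}

lemma coneIdx_eq_iff (hgen : GenPos S) {u v w : ℂ} (hu : u ∈ S) (hv : v ∈ S) (hw : w ∈ S)
    (hvu : v ≠ u) (hwu : w ≠ u) :
    (coneIdx u w = coneIdx u v ↔
      SameSextant (stdX (v - u)) (stdY (v - u)) (stdX (w - u)) (stdY (w - u))) := by
  obtain ⟨k, hk, hi, x, y, hy, hxy, hc, -⟩ := cone_data hvu (hgen u hu v hv hvu.symm)
  obtain ⟨l, hl, hi', x', y', hy', hxy', hc', -⟩ := cone_data hwu (hgen u hu w hw hwu.symm)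
  have := sameSextant_rot hk hl hy hxy hy' hxy'
  rw [← hc, ← hc'] at this
  rw [this, hi, hi']
  omega

lemma std_projDist (hgen : GenPos S) {u v : ℂ} (hu : u ∈ S) (hv : v ∈ S) (hvu : v ≠ u) :
    projDist u v = √3 / 2 * hexNorm (stdX (v - u)) (stdY (v - u)) := by
  obtain ⟨k, hk, hi, x, y, hy, hxy, hc, hp⟩ := cone_data hvu (hgen u hu v hv hvu.symm)
  have := hexNorm_rot k hy hxy
  rw [← hc] at this
  rw [this, hp]

lemma std_projDist_le (hgen : GenPos S) {u v u' v' : ℂ} (hu : u ∈ S) (hv : v ∈ S) (hvu : v ≠ u)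
    (hu' : u' ∈ S) (hv' : v' ∈ S) (hvu' : v' ≠ u') :
    projDist u v ≤ projDist u' v' ↔
      hexNorm (stdX (v - u)) (stdY (v - u)) ≤ hexNorm (stdX (v' - u')) (stdY (v' - u')) := by
  rw [std_projDist hgen hu hv hvu, std_projDist hgen hu' hv' hvu']
  exact mul_le_mul_iff_right₀ (by positivity)

lemma mem_cone_iff_s1 {u v w : ℂ} : w ∈ cone (coneIdx u v) u ↔ w ≠ u ∧ coneIdx u w = coneIdx u v := by
  have hπ : 0 < π / 3 := by positivity
  refine and_congr_right fun hw => ?_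
  have h0 : 0 ≤ argIn (w - u) / (π / 3) := div_nonneg (argIn_nonneg _) hπ.le
  have key : ∀ k : ℕ, (argIn (w - u) ∈ Set.Ico ((((k + 1 : ℕ) : ℝ) - 1) * (π / 3))
      (((k + 1 : ℕ) : ℝ) * (π / 3)) ↔ coneIdx u w = k + 1) := by
    intro k
    have : coneIdx u w = ⌊argIn (w - u) / (π / 3)⌋₊ + 1 := rfl
    rw [this, add_left_inj, Nat.floor_eq_iff h0, Set.mem_Ico, le_div_iff₀ hπ, div_lt_iff₀ hπ]
    push_cast
    rw [add_sub_cancel_right]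
  exact key _

lemma hexNorm_neg (x y : ℝ) : hexNorm (-x) (-y) = hexNorm x y := by
  rw [hexNorm, hexNorm, abs_neg, abs_neg, ← abs_neg (x - y)]
  ring_nf

lemma std_norm_sq (z : ℂ) : ‖z‖ ^ 2 = stdX z ^ 2 - stdX z * stdY z + stdY z ^ 2 := by
  have h3 : (√3)⁻¹ ^ 2 = 1 / 3 := by rw [inv_pow, Real.sq_sqrt (by norm_num)]; norm_num
  rw [Complex.sq_norm, Complex.normSq_apply, stdX_apply, stdY_apply]
  linear_combination (-3 * z.im ^ 2) * h3

lemma std_gen (hgen : GenPos S) {u v : ℂ} (hu : u ∈ S) (hv : v ∈ S) (hvu : v ≠ u) :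
    stdX (v - u) ≠ 0 ∧ stdY (v - u) ≠ 0 ∧ stdX (v - u) - stdY (v - u) ≠ 0 := by
  have h := (coneIdx_eq_iff hgen hu hv hv hvu hvu).1 rfl
  exact ⟨fun h' => by simpa [h'] using h.1, fun h' => by simpa [h'] using h.2.1,
    fun h' => by have := h.2.2; rw [h'] at this; simp at this⟩

/-- The frame spanned by the unit vectors at angles `0` and `2π/3`. -/
def stdFrame (hgen : GenPos S) : Frame S where
  X := stdX
  Y := stdY
  norm_sq := std_norm_sq
  gen u hu v hv h := by
    obtain ⟨h₁, h₂, h₃⟩ := std_gen hgen hu hv h.symm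
    rw [map_sub] at h₁ h₂ h₃
    rw [map_sub] at h₃
    exact ⟨fun h => h₁ (by linarith), fun h => h₂ (by linarith), fun h => h₃ (by linarith)⟩
  edge u v := by
    refine and_congr_right fun hu => and_congr_right fun hv => and_congr_right fun hvu => ?_
    refine forall_congr' fun w => forall_congr' fun hw => ?_
    by_cases hwu : w = u
    · subst hwu
      simp [mem_cone_iff_s1, SameSextant]
    · rw [mem_cone_iff_s1, coneIdx_eq_iff hgen hu hv hw hvu hwu,
        std_projDist_le hgen hu hv hvu hu hw hwu]
      simp [hwu]
  tt u v := by
    refine and_congr_right fun huv => forall_congr' fun w => forall_congr' fun hw => ?_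
    have hn : ∀ p q : ℂ, hexNorm (stdX (p - q)) (stdY (p - q)) =
        hexNorm (stdX (q - p)) (stdY (q - p)) := by
      intro p q
      rw [← hexNorm_neg, ← map_neg, ← map_neg, neg_sub]
    rw [coneIdx_eq_iff hgen huv.2.1 huv.1 hw.1 huv.2.2.1.symm hw.2.2.1.symm,
      std_projDist_le hgen huv.1 huv.2.1 huv.2.2.1 hw.1 hw.2.1 hw.2.2.1, hn u v, hn w v]

/-- Some frame has `b` in the sextant `0 < X < Y` of `a`. -/
lemma exists_frame (hgen : GenPos S) {a b : ℂ} (ha : a ∈ S) (hb : b ∈ S) (hba : b ≠ a) :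
    ∃ F : Frame S, F.X a < F.X b ∧ F.X b - F.X a < F.Y b - F.Y a := by
  obtain ⟨k, hk, -, x, y, hy, hxy, hc, -⟩ := cone_data hba (hgen a ha b hb hba.symm)
  have hX : (stdFrame hgen).X = stdX := rfl
  have hY : (stdFrame hgen).Y = stdY := rfl
  set G := stdFrame hgen
  rw [map_sub, map_sub, ← hX, ← hY] at hc
  interval_cases k <;>
    simp only [Function.iterate_succ_apply, Function.iterate_zero, id, hexRot,
      Prod.mk.injEq] at hc <;>
    obtain ⟨hc₁, hc₂⟩ := hc
  · refine ⟨G.next, ?_⟩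
    simp only [Frame.next_X, Frame.next_Y]; constructor <;> linarith
  · refine ⟨G, ?_⟩
    constructor <;> linarith
  · refine ⟨G.next.next.next.next.next, ?_⟩
    simp only [Frame.next_X, Frame.next_Y]; constructor <;> linarith
  · refine ⟨G.next.next.next.next, ?_⟩
    simp only [Frame.next_X, Frame.next_Y]; constructor <;> linarith
  · refine ⟨G.next.next.next, ?_⟩
    simp only [Frame.next_X, Frame.next_Y]; constructor <;> linarith
  · refine ⟨G.next.next, ?_⟩
    simp only [Frame.next_X, Frame.next_Y]; constructor <;> linarith

/-- For points in convex and general position, every directed edge `a → b`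
of `Θ₆(S)` is spanned in `ΘΘ₆(S)` by a path of length at most `4·|ab|`. -/
theorem thetaTheta6_spans_theta_edges (S : Finset ℂ) (hconv : ConvexPos S)
    (hgen : GenPos S) (a b : ℂ) (hab : ThetaEdge S a b) :
    ∃ p : List ℂ, IsPath (TTAdj S) a b p ∧ pathLength p ≤ 4 * dist a b := by
  obtain ⟨F, h₁, h₂⟩ := exists_frame hgen hab.1 hab.2.1 hab.2.2.1
  exact Frame.main_up hconv F hab h₁ h₂

end
end
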